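/- Let d > 1 and let α be a faithful, strongly irreducible ℤ^d-action by automorphisms of 𝕋^n. Let μ be an α-invariant and α-ergodic Borel probability measure on 𝕋^n, and suppose that for some 𝐧 ∈ ℤ^d the entropy h_μ(α_𝐧) is positive. Then μ is Lebesgue measure on 𝕋^n. -/

import Mathlib

open MeasureTheory ENNReal

section Entropy

variable {α : Type*} [MeasurableSpace α]

/-- `P : Fin m → Set α` is a finite measurable partition of `α` modulo `μ`-null sets. -/
def IsFinMeasPartition (μ : Measure α) {m : ℕ} (P : Fin m → Set α) : Prop :=
  (∀ i, MeasurableSet (P i)) ∧ Pairwise (Function.onFun Disjoint P) ∧ μ (⋃ i, P i)ᶜ = 0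

/-- Shannon entropy (information) of a finite family of sets with respect to `μ`. -/
noncomputable def finPartitionEntropy (μ : Measure α) {ι : Type*} [Fintype ι]
    (P : ι → Set α) : ℝ≥0∞ :=
  ENNReal.ofReal (∑ i, Real.negMulLog ((μ (P i)).toReal))

/-- The common refinement `P ∨ T⁻¹ P ∨ ⋯ ∨ T^{-(n-1)} P`, indexed by `Fin n → Fin m`. -/
def refinedPartition (T : α → α) {m : ℕ} (P : Fin m → Set α) (n : ℕ) :
    (Fin n → Fin m) → Set α :=
  fun f => ⋂ i : Fin n, T^[(i : ℕ)] ⁻¹' P (f i)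

/-- The measure-theoretic (Kolmogorov–Sinai) entropy `h_μ(T)` of a transformation `T`
preserving `μ`, defined as the supremum over all finite measurable partitions `P` of
`inf_n H_μ(P ∨ T⁻¹P ∨ ⋯ ∨ T^{-n}P)/(n+1)` (by subadditivity this infimum equals the
usual limit). -/
noncomputable def ksEntropy (T : α → α) (μ : Measure α) : ℝ≥0∞ :=
  ⨆ (m : ℕ) (P : Fin m → Set α) (_ : IsFinMeasPartition μ P),
    ⨅ n : ℕ, finPartitionEntropy μ (refinedPartition T P (n + 1)) / (n + 1 : ℝ≥0∞)

end Entropy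

open MeasureTheory

/-- The endomorphism of the torus `𝕋^n = (ℝ/ℤ)^n` induced by an integer matrix `A`. -/
noncomputable def toralMap {N : ℕ} (A : Matrix (Fin N) (Fin N) ℤ)
    (x : Fin N → UnitAddCircle) : Fin N → UnitAddCircle :=
  fun i => ∑ j, A i j • x j

/-- A `ℤ^d`-action `α` by toral automorphisms is irreducible when restricted to a
subgroup `Λ ≤ ℤ^d` if every closed `Λ`-invariant proper subgroup of the torus is
finite. -/
def IsIrreducibleOn {d N : ℕ} (α : (Fin d → ℤ) → Matrix (Fin N) (Fin N) ℤ)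
    (Λ : AddSubgroup (Fin d → ℤ)) : Prop :=
  ∀ S : AddSubgroup (Fin N → UnitAddCircle), IsClosed (S : Set (Fin N → UnitAddCircle)) →
    (∀ v ∈ Λ, ∀ x ∈ S, toralMap (α v) x ∈ S) → S ≠ ⊤ →
    (S : Set (Fin N → UnitAddCircle)).Finite


section Mod1
open MeasureTheory

section EntLib
variable {Ω β γ δ κ : Type*} [MeasurableSpace Ω]

structure Good (X : Ω → β) : Prop where
  fin : (Set.range X).Finite
  meas : ∀ s : Set β, MeasurableSet (X ⁻¹' s)

noncomputable def pr (μ : Measure Ω) (X : Ω → β) (b : β) : ℝ := μ.real (X ⁻¹' {b})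

noncomputable def ent (μ : Measure Ω) (X : Ω → β) : ℝ := ∫ x, -Real.log (pr μ X (X x)) ∂μ

theorem Good.of_singleton {X : Ω → β} (h : (Set.range X).Finite)
    (h2 : ∀ b, MeasurableSet (X ⁻¹' {b})) : Good X := by
  refine ⟨h, fun s => ?_⟩
  have : X ⁻¹' s = ⋃ b ∈ (Set.range X ∩ s), X ⁻¹' {b} := by
    ext x; simp
  rw [this]
  exact Set.Finite.measurableSet_biUnion (h.subset Set.inter_subset_left) fun b _ => h2 b

theorem Good.map {X : Ω → β} (h : Good X) (f : β → γ) : Good (fun x => f (X x)) := by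
  refine ⟨?_, fun s => h.meas (f ⁻¹' s)⟩
  have := h.fin.image f
  rwa [← Set.range_comp] at this

theorem Good.pair {X : Ω → β} {Y : Ω → γ} (hX : Good X) (hY : Good Y) :
    Good (fun x => (X x, Y x)) := by
  refine Good.of_singleton ((hX.fin.prod hY.fin).subset ?_) ?_
  · rintro _ ⟨x, rfl⟩; exact ⟨⟨x, rfl⟩, ⟨x, rfl⟩⟩
  · rintro ⟨b, c⟩
    have : (fun x => (X x, Y x)) ⁻¹' {(b, c)} = X ⁻¹' {b} ∩ Y ⁻¹' {c} := by
      ext x; simp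
    rw [this]; exact (hX.meas _).inter (hY.meas _)

theorem Good.pi {ι : Type*} [Finite ι] {β : ι → Type*} {X : ∀ i, Ω → β i} (hX : ∀ i, Good (X i)) :
    Good (fun x i => X i x) := by
  refine Good.of_singleton ((Set.Finite.pi' fun i => (hX i).fin).subset ?_) ?_
  · rintro _ ⟨x, rfl⟩ i; exact ⟨x, rfl⟩
  · intro b
    have : (fun x i => X i x) ⁻¹' {b} = ⋂ i, X i ⁻¹' {b i} := by
      ext x; simp [funext_iff]
    rw [this]; exact MeasurableSet.iInter fun i => (hX i).meas _

theorem Good.comp {X : Ω → β} (h : Good X) {T : Ω → Ω} (hT : Measurable T) :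
    Good (fun x => X (T x)) :=
  ⟨h.fin.subset (by rintro _ ⟨x, rfl⟩; exact ⟨T x, rfl⟩), fun s => hT (h.meas s)⟩

variable (μ : Measure Ω) [IsProbabilityMeasure μ]
set_option linter.unusedSectionVars false

theorem Good.integrable {X : Ω → β} (h : Good X) (φ : β → ℝ) :
    Integrable (fun x => φ (X x)) μ := by
  have hm : Measurable (fun x => φ (X x)) := fun s _ => h.meas (φ ⁻¹' s)
  obtain ⟨C, hC⟩ := ((h.fin.image (fun b => ‖φ b‖)).bddAbove)
  exact Integrable.of_bound hm.aestronglyMeasurable C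
    (Filter.Eventually.of_forall fun x => hC ⟨X x, ⟨x, rfl⟩, rfl⟩)

theorem Good.integral_eq {X : Ω → β} (h : Good X) (φ : β → ℝ) :
    ∫ x, φ (X x) ∂μ = ∑ b ∈ h.fin.toFinset, pr μ X b * φ b := by
  classical
  have : (fun x => φ (X x)) =
      fun x => ∑ b ∈ h.fin.toFinset, (X ⁻¹' {b}).indicator (fun _ => φ b) x := by
    ext x
    rw [Finset.sum_eq_single (X x)]
    · simp
    · intro b _ hb; simp [Set.indicator, hb.symm]
    · intro hx; simp at hx
  rw [this, integral_finsetSum]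
  · refine Finset.sum_congr rfl fun b _ => ?_
    rw [integral_indicator_const _ (h.meas _)]; rfl
  · intro b _
    exact (integrable_const _).indicator (h.meas _)

theorem Good.ae_pos {X : Ω → β} (h : Good X) : ∀ᵐ x ∂μ, 0 < pr μ X (X x) := by
  have hsub : {x | ¬ 0 < pr μ X (X x)} ⊆ ⋃ b ∈ (Set.range X ∩ {b | ¬ 0 < pr μ X b}), X ⁻¹' {b} := by
    intro x hx; simpa using hx
  refine measure_mono_null hsub ?_
  rw [measure_biUnion_null_iff (h.fin.subset Set.inter_subset_left).countable]
  rintro b ⟨_, hb⟩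
  have : pr μ X b = 0 := le_antisymm (not_lt.1 hb) measureReal_nonneg
  exact (measureReal_eq_zero_iff (by finiteness)).1 this

theorem pr_le_one (X : Ω → β) (b : β) : pr μ X b ≤ 1 := by
  unfold pr; exact measureReal_le_one

theorem pr_nonneg (X : Ω → β) (b : β) : 0 ≤ pr μ X b := measureReal_nonneg

theorem ent_nonneg (X : Ω → β) : 0 ≤ ent μ X :=
  integral_nonneg fun x => by
    have := Real.log_nonpos (pr_nonneg μ X (X x)) (pr_le_one μ X _)
    simp only [Pi.zero_apply]; linarith

theorem Good.gibbs {X : Ω → β} (h : Good X) (q : β → ℝ) (hq0 : ∀ b, 0 ≤ q b)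
    (hq : ∀ᵐ x ∂μ, 0 < q (X x)) (hs : ∑ b ∈ h.fin.toFinset, q b ≤ 1) :
    ent μ X ≤ ∫ x, -Real.log (q (X x)) ∂μ := by
  unfold ent
  have hi1 := h.integrable μ (fun b => -Real.log (pr μ X b))
  have hi2 := h.integrable μ (fun b => -Real.log (q b))
  rw [← sub_nonpos, ← integral_sub hi1 hi2]
  have hi3 := h.integrable μ (fun b => q b / pr μ X b - 1)
  have h1 : ∫ x, (-Real.log (pr μ X (X x)) - -Real.log (q (X x))) ∂μ ≤
      ∫ x, (q (X x) / pr μ X (X x) - 1) ∂μ := by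
    refine integral_mono_ae (hi1.sub hi2) hi3 ?_
    filter_upwards [hq, h.ae_pos μ] with x h1 h2
    have := Real.log_le_sub_one_of_pos (div_pos h1 h2)
    rw [Real.log_div h1.ne' h2.ne'] at this
    linarith
  refine h1.trans ?_
  have hi4 := h.integrable μ (fun b => q b / pr μ X b)
  rw [integral_sub hi4 (integrable_const _), h.integral_eq μ (fun b => q b / pr μ X b)]
  have : ∑ b ∈ h.fin.toFinset, pr μ X b * (q b / pr μ X b) ≤ ∑ b ∈ h.fin.toFinset, q b := by
    refine Finset.sum_le_sum fun b _ => ?_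
    by_cases hb : pr μ X b = 0
    · simp [hb, hq0 b]
    · rw [mul_div_cancel₀ _ hb]
  simp; linarith

theorem Good.ent_mono {Y : Ω → γ} (hY : Good Y) (f : γ → β) :
    ent μ (fun x => f (Y x)) ≤ ent μ Y := by
  refine integral_mono_ae ((hY.map f).integrable μ (fun b => -Real.log (pr μ (fun x => f (Y x)) b)))
    (hY.integrable μ (fun b => -Real.log (pr μ Y b))) ?_
  filter_upwards [hY.ae_pos μ] with x hx
  have : pr μ Y (Y x) ≤ pr μ (fun x => f (Y x)) (f (Y x)) := by
    refine measureReal_mono ?_ 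
    intro y hy; simp at hy ⊢; rw [hy]
  have := Real.log_le_log hx this
  linarith

theorem Good.pr_sum {X : Ω → β} (h : Good X) (f : β → γ) [DecidableEq γ] (c : γ) :
    ∑ b ∈ h.fin.toFinset with f b = c, pr μ X b = pr μ (fun x => f (X x)) c := by
  classical
  unfold pr
  rw [← measureReal_biUnion_finset]
  · congr 1
    ext x; simp
  · intro a _ b _ hab
    exact Disjoint.preimage _ (by simpa using hab)
  · intro b _; exact h.meas _

theorem Good.ent_submod {X : Ω → β} {Y : Ω → γ} (hX : Good X) (hY : Good Y)
    (f : β → δ) (g : γ → δ) (k : β × γ → κ) (hfg : ∀ x, f (X x) = g (Y x)) :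
    ent μ (fun x => k (X x, Y x)) + ent μ (fun x => f (X x)) ≤ ent μ X + ent μ Y := by
  classical
  have hW := hX.pair hY
  have h0 := hW.ent_mono μ k
  set Z := fun x => f (X x) with hZ
  have hZg : Good Z := hX.map f
  have hZ2 : Z = fun x => g (Y x) := by ext x; exact hfg x
  let q : β × γ → ℝ := fun w => if f w.1 = g w.2 then pr μ X w.1 * pr μ Y w.2 / pr μ Z (f w.1) else 0
  have hq0 : ∀ w, 0 ≤ q w := by
    intro w; simp only [q]; split_ifs
    · exact div_nonneg (mul_nonneg (pr_nonneg _ _ _) (pr_nonneg _ _ _)) (pr_nonneg _ _ _)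
    · exact le_rfl
  have hqv : ∀ x, q (X x, Y x) = pr μ X (X x) * pr μ Y (Y x) / pr μ Z (Z x) := by
    intro x; simp [q, hfg x, hZ]
  have h1 := hW.gibbs μ q hq0 (by
    filter_upwards [hX.ae_pos μ, hY.ae_pos μ, hZg.ae_pos μ] with x a b c
    rw [hqv]; positivity) (by
    calc ∑ w ∈ hW.fin.toFinset, q w ≤ ∑ w ∈ hX.fin.toFinset ×ˢ hY.fin.toFinset, q w := by
          refine Finset.sum_le_sum_of_subset_of_nonneg ?_ (fun w _ _ => hq0 w)
          rintro ⟨a, b⟩ hab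
          simp only [Set.Finite.mem_toFinset, Set.mem_range, Prod.mk.injEq] at hab
          obtain ⟨x, rfl, rfl⟩ := hab
          simp
      _ = ∑ a ∈ hX.fin.toFinset, pr μ X a / pr μ Z (f a) *
            ∑ b ∈ hY.fin.toFinset with g b = f a, pr μ Y b := by
          rw [Finset.sum_product]
          refine Finset.sum_congr rfl fun a _ => ?_
          rw [Finset.mul_sum, Finset.sum_filter]
          refine Finset.sum_congr rfl fun b _ => ?_
          simp only [q, eq_comm (a := g b)]
          split_ifs <;> ring
      _ ≤ ∑ a ∈ hX.fin.toFinset, pr μ X a := by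
          refine Finset.sum_le_sum fun a _ => ?_
          rw [hY.pr_sum μ g, ← hZ2]
          by_cases hb : pr μ Z (f a) = 0
          · rw [hb]; simpa using pr_nonneg _ _ _
          · rw [div_mul_cancel₀ _ hb]
      _ ≤ 1 := by
          have := hX.integral_eq μ (fun _ => (1:ℝ))
          simp at this; rw [← this])
  have e : ∫ x, -Real.log (q (X x, Y x)) ∂μ = ent μ X + ent μ Y - ent μ Z := by
    have i1 := hX.integrable μ (fun b => -Real.log (pr μ X b))
    have i2 := hY.integrable μ (fun b => -Real.log (pr μ Y b))
    have i3 : Integrable (fun x => -Real.log (pr μ X (X x)) + -Real.log (pr μ Y (Y x))) μ := i1.add i2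
    unfold ent
    rw [← integral_add i1 i2, ← integral_sub i3 (hZg.integrable μ (fun b => -Real.log (pr μ Z b)))]
    refine integral_congr_ae ?_
    filter_upwards [hX.ae_pos μ, hY.ae_pos μ, hZg.ae_pos μ] with x a b c
    rw [hqv, Real.log_div (by positivity) (by positivity), Real.log_mul (by positivity) (by positivity)]
    ring
  linarith

theorem Good.ent_cond {X : Ω → β} {Y : Ω → γ} (hX : Good X) (hY : Good Y) {E : Set Ω}
    (hE : MeasurableSet E) {C L : ℕ} {ε : ℝ} (hε : μ.real Eᶜ ≤ ε)
    (hC1 : 1 ≤ C) (hL1 : 1 ≤ L)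
    (hC : ∀ y, (X '' (E ∩ Y ⁻¹' {y})).ncard ≤ C) (hL : ∀ y, (X '' (Y ⁻¹' {y})).ncard ≤ L) :
    ent μ X ≤ ent μ Y + Real.log 2 + Real.log C + ε * Real.log L := by
  classical
  have hW := hX.pair hY
  have h0 : ent μ X ≤ _ := hW.ent_mono μ Prod.fst
  have hCp : (0:ℝ) < C := by exact_mod_cast hC1
  have hLp : (0:ℝ) < L := by exact_mod_cast hL1
  let S1 : γ → Set β := fun y => X '' (E ∩ Y ⁻¹' {y})
  let S2 : γ → Set β := fun y => X '' (Y ⁻¹' {y})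
  let q : β × γ → ℝ := fun w => pr μ Y w.2 * ((if w.1 ∈ S1 w.2 then 1 / (2 * C : ℝ) else 0) +
    (if w.1 ∈ S2 w.2 then 1 / (2 * L : ℝ) else 0))
  have hq0 : ∀ w, 0 ≤ q w := by
    intro w
    refine mul_nonneg (pr_nonneg _ _ _) (add_nonneg ?_ ?_) <;> split_ifs <;> positivity
  have hm2 : ∀ x, X x ∈ S2 (Y x) := fun x => ⟨x, rfl, rfl⟩
  have key : ∀ (S : γ → Set β) (D : ℕ), (1 ≤ D) → (∀ y, (S y).ncard ≤ D) → (∀ y, S y ⊆ Set.range X) →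
      ∀ y, ∑ a ∈ hX.fin.toFinset, (if a ∈ S y then 1 / (2 * D : ℝ) else 0) ≤ 1 / 2 := by
    intro S D hD h1 h2 y
    have hDp : (0:ℝ) < D := by exact_mod_cast hD
    rw [← Finset.sum_filter, Finset.sum_const, nsmul_eq_mul]
    have : (hX.fin.toFinset.filter (· ∈ S y)).card ≤ D := by
      refine le_trans ?_ (h1 y)
      rw [← Set.ncard_coe_finset]
      exact Set.ncard_le_ncard (by intro a; simp) (hX.fin.subset (h2 y))
    have : ((hX.fin.toFinset.filter (· ∈ S y)).card : ℝ) ≤ D := by exact_mod_cast this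
    rw [mul_one_div, div_le_div_iff₀ (by positivity) (by positivity)]; linarith
  have h1 := hW.gibbs μ q hq0 (by
    filter_upwards [hY.ae_pos μ] with x hx
    refine mul_pos hx (add_pos_of_nonneg_of_pos ?_ ?_)
    · split_ifs <;> positivity
    · simp only [hm2 x, if_true]; positivity) (by
    calc ∑ w ∈ hW.fin.toFinset, q w ≤ ∑ w ∈ hX.fin.toFinset ×ˢ hY.fin.toFinset, q w := by
          refine Finset.sum_le_sum_of_subset_of_nonneg ?_ (fun w _ _ => hq0 w)
          rintro ⟨a, b⟩ hab
          simp only [Set.Finite.mem_toFinset, Set.mem_range, Prod.mk.injEq] at hab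
          obtain ⟨x, rfl, rfl⟩ := hab
          simp
      _ ≤ ∑ b ∈ hY.fin.toFinset, pr μ Y b := by
          rw [Finset.sum_product_right]
          refine Finset.sum_le_sum fun b _ => ?_
          simp only [q]
          rw [← Finset.mul_sum, Finset.sum_add_distrib]
          have e1 := key S1 C hC1 hC (fun y => Set.image_subset_range _ _) b
          have e2 := key S2 L hL1 hL (fun y => Set.image_subset_range _ _) b
          have := pr_nonneg μ Y b
          nlinarith
      _ ≤ 1 := by
          have := hY.integral_eq μ (fun _ => (1:ℝ))
          simp at this; rw [← this])
  have hlogL : 0 ≤ Real.log L := Real.log_nonneg (by exact_mod_cast hL1)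
  have hlogC : 0 ≤ Real.log C := Real.log_nonneg (by exact_mod_cast hC1)
  have hiY := hY.integrable μ (fun b => -Real.log (pr μ Y b))
  have hiE : Integrable (Eᶜ.indicator (fun _ => Real.log L)) μ :=
    (integrable_const _).indicator hE.compl
  have h2 : ∫ x, -Real.log (q (X x, Y x)) ∂μ ≤
      ∫ x, (-Real.log (pr μ Y (Y x)) + (Real.log 2 + Real.log C) + Eᶜ.indicator (fun _ => Real.log L) x) ∂μ := by
    refine integral_mono_ae (hW.integrable μ (fun w => -Real.log (q w)))
      ((hiY.add (integrable_const _)).add hiE) ?_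
    filter_upwards [hY.ae_pos μ] with x hx
    by_cases hxE : x ∈ E
    · have hm1 : X x ∈ S1 (Y x) := ⟨x, ⟨hxE, rfl⟩, rfl⟩
      have : pr μ Y (Y x) * (1 / (2 * C : ℝ)) ≤ q (X x, Y x) := by
        simp only [q, hm1, if_true]
        refine mul_le_mul_of_nonneg_left ?_ hx.le
        have : 0 ≤ (if X x ∈ S2 (Y x) then 1 / (2 * L : ℝ) else 0) := by split_ifs <;> positivity
        linarith
      have := Real.log_le_log (by positivity) this
      rw [Real.log_mul hx.ne' (by positivity), Real.log_div one_ne_zero (by positivity),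
        Real.log_mul two_ne_zero hCp.ne', Real.log_one] at this
      simp [hxE]; linarith
    · have : pr μ Y (Y x) * (1 / (2 * L : ℝ)) ≤ q (X x, Y x) := by
        simp only [q, hm2 x, if_true]
        refine mul_le_mul_of_nonneg_left ?_ hx.le
        have : 0 ≤ (if X x ∈ S1 (Y x) then 1 / (2 * C : ℝ) else 0) := by split_ifs <;> positivity
        linarith
      have := Real.log_le_log (by positivity) this
      rw [Real.log_mul hx.ne' (by positivity), Real.log_div one_ne_zero (by positivity),
        Real.log_mul two_ne_zero hLp.ne', Real.log_one] at this
      simp [hxE]; linarith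
  have i3 : Integrable (fun x => -Real.log (pr μ Y (Y x)) + (Real.log 2 + Real.log C)) μ :=
    hiY.add (integrable_const _)
  rw [integral_add i3 hiE, integral_add hiY (integrable_const _),
    integral_indicator_const _ hE.compl] at h2
  simp only [integral_const, probReal_univ, smul_eq_mul, one_mul] at h2
  have h3 : μ.real Eᶜ * Real.log L ≤ ε * Real.log L := mul_le_mul_of_nonneg_right hε hlogL
  have : ent μ Y = ∫ x, -Real.log (pr μ Y (Y x)) ∂μ := rfl
  linarith

theorem Good.ent_comp {X : Ω → β} (hX : Good X) {T : Ω → Ω} (hT : Measurable T)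
    (hμ : μ.map T = μ) : ent μ (fun x => X (T x)) = ent μ X := by
  have e : ∀ b, pr μ (fun x => X (T x)) b = pr μ X b := by
    intro b
    unfold pr
    conv_rhs => rw [← hμ]
    rw [map_measureReal_apply hT (hX.meas _)]; rfl
  unfold ent
  simp_rw [e]
  have i := hX.integrable μ (fun b => -Real.log (pr μ X b))
  generalize pr μ X = P at i ⊢
  have : ∫ x, -Real.log (P (X x)) ∂μ = ∫ x, -Real.log (P (X x)) ∂(μ.map T) := by rw [hμ]
  rw [this, integral_map hT.aemeasurable]
  rw [hμ]
  exact i.aestronglyMeasurable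

end EntLib
end Mod1

section Mod2
open MeasureTheory

section CoarseLib
set_option linter.unusedSectionVars false
open Filter Topology

structure Coarse {ι V : Type*} [AddCommGroup V] [Module ℝ V]
    (lam : V →ₗ[ℝ] (ι → ℝ)) (G : (ι → ℝ) → ℝ) (C : ℝ) : Prop where
  nonneg : ∀ r, 0 ≤ G r
  mono : ∀ a b, a ≤ b → G a ≤ G b
  pos : ∀ r, G (r ⊔ 0) = G r
  submod : ∀ a b, G (a ⊔ b) + G (a ⊓ b) ≤ G a + G b
  inv : ∀ t a b, 0 ≤ a → 0 ≤ b → a + lam t ≤ b → G a ≤ G b + C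
  lip : ∀ (a : ι → ℝ) (c : ℝ), 0 ≤ c → G (fun i => a i + c) ≤ G a + C * (c + 1)
  kp : ∀ w u : V, w ≠ 0 → ∀ ε : ℝ, 0 < ε → ∀ κ0 : ℝ, ∃ κ, κ0 ≤ κ ∧ ∃ k0 : ι → ℝ, 0 ≤ k0 ∧
    G (fun i => k0 i + if lam w i = 0 ∧ 0 < lam u i then κ else 0) - G k0 ≤ ε * κ

variable {ι V : Type*} [Fintype ι] [AddCommGroup V] [Module ℝ V]
    {lam : V →ₗ[ℝ] (ι → ℝ)} {G : (ι → ℝ) → ℝ} {C : ℝ}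

open Classical in
theorem Coarse.zlem (h : Coarse lam G C) (w u : V) (hw : w ≠ 0) (ε : ℝ) (hε : 0 < ε) :
    ∃ D : ℝ, ∀ T : ℝ, 0 ≤ T → ∀ ρ : ι → ℝ, 0 ≤ ρ → ∀ τ : ℝ, 0 ≤ ρ + τ • lam w →
      (∀ i, lam w i ≠ 0 → D + T * |lam u i| ≤ ρ i + τ * lam w i) →
      (∀ i, lam w i = 0 → 0 < lam u i → ρ i = 0) →
      G (fun i => ρ i + if lam w i = 0 ∧ 0 < lam u i then T * lam u i else 0) ≤ G ρ + ε * T + D := by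
  classical
  have hC0 : 0 ≤ C := by
    have := h.inv 0 0 0 le_rfl le_rfl (by simp)
    linarith
  set Λ : ℝ := 1 + ∑ i, |lam u i| with hΛ
  have hΛ1 : 1 ≤ Λ := by
    have : 0 ≤ ∑ i, |lam u i| := Finset.sum_nonneg fun i _ => abs_nonneg _
    linarith
  have hΛi : ∀ i, |lam u i| ≤ Λ := by
    intro i
    have := Finset.single_le_sum (f := fun i => |lam u i|) (fun i _ => abs_nonneg _) (Finset.mem_univ i)
    linarith
  obtain ⟨κ, hκ, k0, hk0, hk⟩ := h.kp w u hw (ε / (2 * Λ)) (by positivity) (1 + 4 * C * Λ / ε)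
  have hκ1 : 1 ≤ κ := le_trans (le_add_of_nonneg_right (by positivity)) hκ
  have h2C : 2 * C ≤ ε / (2 * Λ) * κ := by
    have : 4 * C * Λ / ε ≤ κ := by linarith
    rw [div_le_iff₀ hε] at this
    rw [div_mul_eq_mul_div, le_div_iff₀ (by positivity)]; linarith
  set st : ℝ := κ / Λ with hst
  have hst0 : 0 < st := by positivity
  set m : ι → ℝ := fun i => if lam w i = 0 ∧ 0 < lam u i then lam u i else 0 with hm
  have hm0 : 0 ≤ m := by intro i; simp only [hm]; split_ifs with hi; exacts [hi.2.le, le_rfl]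
  -- induction on steps
  have ind : ∀ n : ℕ, ∀ ρ : ι → ℝ, k0 ≤ ρ → (∀ i, lam w i = 0 → 0 < lam u i → ρ i = k0 i) →
      (∀ i, lam w i ≠ 0 → k0 i + n * st * |lam u i| ≤ ρ i) →
      G (ρ + (n * st) • m) ≤ G ρ + n * (ε / Λ * κ) := by
    intro n
    induction n with
    | zero => intro ρ _ _ _; simp
    | succ n ih =>
      intro ρ h1 h2 h3
      have hns : 0 ≤ (n:ℝ) * st := by positivity
      have ih' := ih ρ h1 h2 (fun i hi => by
        have := h3 i hi; push_cast at this
        have : 0 ≤ st * |lam u i| := by positivity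
        nlinarith)
      set r : ι → ℝ := ρ + (n * st) • m - (n * st) • lam u with hr
      have hrk : k0 ≤ r := by
        intro i
        simp only [hr, Pi.add_apply, Pi.sub_apply, Pi.smul_apply, smul_eq_mul, hm]
        split_ifs with hi
        · have := h1 i; linarith
        · by_cases hwi : lam w i = 0
          · have : lam u i ≤ 0 := by by_contra hc; exact hi ⟨hwi, not_le.1 hc⟩
            have h1i := h1 i
            nlinarith
          · have := h3 i hwi; push_cast at this
            have h5 : 0 ≤ st * |lam u i| := by positivity
            have h6 := le_abs_self (lam u i)
            nlinarith
      have hr0 : 0 ≤ r := hk0.trans hrk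
      have hρ0 : 0 ≤ ρ := hk0.trans h1
      have e1 : G (ρ + ((n+1 : ℕ) * st : ℝ) • m) ≤ G (r + st • m) + C := by
        refine h.inv (-((n * st) • u)) _ _ (add_nonneg hρ0 (smul_nonneg (by positivity) hm0))
          (add_nonneg hr0 (smul_nonneg hst0.le hm0)) (le_of_eq ?_)
        rw [map_neg, map_smul, hr]; push_cast; module
      have e2 : G r ≤ G (ρ + (n * st) • m) + C := by
        refine h.inv ((n * st) • u) _ _ hr0 (add_nonneg hρ0 (smul_nonneg hns hm0)) (le_of_eq ?_)
        rw [map_smul, hr]; module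
      set a0 : ι → ℝ := fun i => k0 i + if lam w i = 0 ∧ 0 < lam u i then κ else 0 with ha0
      have hka : k0 ≤ a0 := by
        intro i; simp only [ha0]; split_ifs <;> linarith
      have e3 : G (r + st • m) ≤ G (r ⊔ a0) := by
        refine h.mono _ _ fun i => ?_
        simp only [Pi.add_apply, Pi.smul_apply, smul_eq_mul, Pi.sup_apply, hm, ha0]
        split_ifs with hi
        · refine le_sup_of_le_right ?_
          have : r i = k0 i := by
            simp only [hr, Pi.add_apply, Pi.sub_apply, Pi.smul_apply, smul_eq_mul, hm, hi, and_self, if_true]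
            rw [h2 i hi.1 hi.2]; ring
          rw [this]
          have : st * lam u i ≤ st * Λ := mul_le_mul_of_nonneg_left ((le_abs_self _).trans (hΛi i)) hst0.le
          rw [hst, div_mul_cancel₀ _ (by positivity)] at this
          rw [hst]; linarith
        · simp
      have e4 := h.submod r a0
      have e5 : G k0 ≤ G (r ⊓ a0) := h.mono _ _ (le_inf hrk hka)
      push_cast at e1 ⊢
      have e6 : ε / Λ * κ = ε / (2 * Λ) * κ + ε / (2 * Λ) * κ := by field_simp; ring
      linarith
  set B : ℝ := ∑ i, k0 i with hB
  have hB0 : 0 ≤ B := Finset.sum_nonneg fun i _ => hk0 i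
  have hBi : ∀ i, k0 i ≤ B := fun i => Finset.single_le_sum (fun i _ => hk0 i) (Finset.mem_univ i)
  refine ⟨B + st * Λ + (ε / Λ * κ) + C * (B + 1) + 2 * C, fun T hT ρ hρ τ hρτ hfine hzero => ?_⟩
  set D := B + st * Λ + (ε / Λ * κ) + C * (B + 1) + 2 * C with hD
  set ρ1 : ι → ℝ := ρ + τ • lam w with hρ1
  set ρ2 : ι → ℝ := ρ1 ⊔ k0 with hρ2
  set n : ℕ := ⌈T / st⌉₊ with hn
  have hn1 : T ≤ n * st := by
    have := Nat.le_ceil (T / st); rwa [div_le_iff₀ hst0] at this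
  have hn2 : (n : ℝ) * st ≤ T + st := by
    have := (Nat.ceil_lt_add_one (a := T / st) (by positivity)).le
    rw [← hn] at this
    calc (n:ℝ) * st ≤ (T / st + 1) * st := mul_le_mul_of_nonneg_right this hst0.le
      _ = _ := by field_simp
  have hpos : 0 ≤ st * Λ ∧ 0 ≤ ε / Λ * κ ∧ 0 ≤ C * (B + 1) := ⟨by positivity, by positivity, by positivity⟩
  have hmain := ind n ρ2 le_sup_right (fun i h1 h2 => by
      simp only [hρ2, hρ1, Pi.sup_apply, Pi.add_apply, Pi.smul_apply, smul_eq_mul, h1, hzero i h1 h2]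
      simpa using hk0 i) (fun i hi => by
      refine le_sup_of_le_left ?_
      have := hfine i hi
      simp only [hρ1, Pi.add_apply, Pi.smul_apply, smul_eq_mul]
      have h1 := hBi i
      have h2 : (n:ℝ) * st * |lam u i| ≤ (T + st) * |lam u i| :=
        mul_le_mul_of_nonneg_right hn2 (abs_nonneg _)
      have h3 : st * |lam u i| ≤ st * Λ := mul_le_mul_of_nonneg_left (hΛi i) hst0.le
      nlinarith [hpos.1, hpos.2.1, hpos.2.2])
  have e1 : G (fun i => ρ i + if lam w i = 0 ∧ 0 < lam u i then T * lam u i else 0) ≤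
      G (ρ2 + (n * st) • m) + C := by
    refine h.inv (τ • w) _ _ ?_ ?_ ?_
    · intro i; have := hρ i; simp only [Pi.zero_apply] at this ⊢
      split_ifs with hi
      · have := mul_nonneg hT hi.2.le; linarith
      · linarith
    · exact add_nonneg (hk0.trans le_sup_right) (smul_nonneg (by positivity) hm0)
    · intro i
      have h1 : ρ1 i ≤ ρ2 i := le_sup_left (a := ρ1) (b := k0) i
      simp only [Pi.add_apply, map_smul, Pi.smul_apply, smul_eq_mul, hm, hρ1] at h1 ⊢
      split_ifs with hi
      · have := mul_le_mul_of_nonneg_right hn1 hi.2.le; linarith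
      · simp; linarith
  have e2 : G ρ2 ≤ G ρ1 + C * (B + 1) := by
    refine le_trans (h.mono _ _ ?_) (h.lip ρ1 B hB0)
    intro i
    have h1 : 0 ≤ ρ1 i := hρτ i
    have := hBi i
    exact sup_le (by linarith) (by linarith)
  have e3 : G ρ1 ≤ G ρ + C := by
    refine h.inv (-(τ • w)) _ _ hρτ hρ (le_of_eq ?_)
    rw [map_neg, map_smul, hρ1]; module
  have e4 : (n:ℝ) * (ε / Λ * κ) ≤ ε * T + ε / Λ * κ := by
    have : (n:ℝ) * (ε / Λ * κ) = (n * st) * ε := by rw [hst]; field_simp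
    rw [this]
    have : (n * st) * ε ≤ (T + st) * ε := mul_le_mul_of_nonneg_right hn2 hε.le
    have e : ε / Λ * κ = st * ε := by rw [hst]; ring
    rw [e]; linarith
  linarith [hpos.1]

theorem Coarse.subadd (h : Coarse lam G C) (s t : V) :
    G (lam (s + t)) ≤ G (lam s) + G (lam t) + 2 * C := by
  have e1 : G (lam (s + t) ⊔ 0) ≤ G ((lam t ⊔ 0) ⊔ (lam (-s) ⊔ 0)) + C := by
    refine h.inv (-s) _ _ le_sup_right (le_sup_of_le_left le_sup_right) ?_
    intro i
    simp only [map_add, map_neg, Pi.add_apply, Pi.sup_apply, Pi.neg_apply, Pi.zero_apply]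
    grind
  have e2 := h.submod (lam t ⊔ 0) (lam (-s) ⊔ 0)
  have e3 : G (lam (-s) ⊔ 0) ≤ G (lam s ⊔ 0) + C := by
    refine h.inv s _ _ le_sup_right le_sup_right ?_
    intro i
    simp only [map_neg, Pi.add_apply, Pi.sup_apply, Pi.neg_apply, Pi.zero_apply]
    grind
  have := h.nonneg ((lam t ⊔ 0) ⊓ (lam (-s) ⊔ 0))
  rw [h.pos] at *
  rw [h.pos] at e3 e2
  linarith [h.pos (lam t), h.pos (lam (-s))]

theorem Coarse.exists_lim (h : Coarse lam G C) (x : V) :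
    ∃ p : ℝ, Tendsto (fun n : ℕ => G (lam ((n:ℝ) • x)) / n) atTop (𝓝 p) := by
  have hC0 : 0 ≤ C := by
    have := h.inv 0 0 0 le_rfl le_rfl (by simp)
    linarith
  have hs : Subadditive (fun n : ℕ => G (lam ((n:ℝ) • x)) + 2 * C) := by
    intro m n
    have := h.subadd ((m:ℝ) • x) ((n:ℝ) • x)
    rw [← add_smul] at this
    push_cast; linarith
  have hb : BddBelow (Set.range fun n : ℕ => (G (lam ((n:ℝ) • x)) + 2 * C) / n) := by
    refine ⟨0, ?_⟩
    rintro _ ⟨n, rfl⟩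
    have := h.nonneg (lam ((n:ℝ) • x))
    positivity
  refine ⟨hs.lim, ?_⟩
  have h1 := hs.tendsto_lim hb
  have h2 : Tendsto (fun n : ℕ => 2 * C / (n:ℝ)) atTop (𝓝 0) := tendsto_const_div_atTop_nhds_zero_nat _
  have := h1.sub h2
  simp only [sub_zero] at this
  refine this.congr fun n => ?_
  ring

noncomputable def Coarse.p (h : Coarse lam G C) (x : V) : ℝ := (h.exists_lim x).choose

theorem Coarse.tendsto_p (h : Coarse lam G C) (x : V) :
    Tendsto (fun n : ℕ => G (lam ((n:ℝ) • x)) / n) atTop (𝓝 (h.p x)) := (h.exists_lim x).choose_spec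

theorem Coarse.tendsto_p_mul (h : Coarse lam G C) (x : V) (k : ℕ) (hk : 0 < k) :
    Tendsto (fun n : ℕ => G (lam (((k * n : ℕ):ℝ) • x)) / n) atTop (𝓝 (k * h.p x)) := by
  have h1 : Tendsto (fun n : ℕ => k * n) atTop atTop := tendsto_id.const_mul_atTop' hk
  have := ((h.tendsto_p x).comp h1).const_mul (k:ℝ)
  refine this.congr fun n => ?_
  have : (k:ℝ) ≠ 0 := by positivity
  simp only [Function.comp]
  by_cases hn : (n:ℝ) = 0
  · simp [hn]
  · push_cast; field_simp

theorem Coarse.p_nonneg (h : Coarse lam G C) (x : V) : 0 ≤ h.p x :=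
  ge_of_tendsto' (h.tendsto_p x) fun n => div_nonneg (h.nonneg _) (by positivity)

theorem Coarse.p_nat (h : Coarse lam G C) (x : V) (k : ℕ) (hk : 0 < k) : h.p ((k:ℝ) • x) = k * h.p x := by
  refine tendsto_nhds_unique (h.tendsto_p _) ((h.tendsto_p_mul x k hk).congr fun n => ?_)
  rw [smul_smul, mul_comm (n:ℝ), Nat.cast_mul]

theorem Coarse.p_add (h : Coarse lam G C) (x y : V) : h.p (x + y) ≤ h.p x + h.p y := by
  have h2 : Tendsto (fun n : ℕ => 2 * C / (n:ℝ)) atTop (𝓝 0) := tendsto_const_div_atTop_nhds_zero_nat _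
  have := ((h.tendsto_p x).add (h.tendsto_p y)).add h2
  rw [add_zero] at this
  refine le_of_tendsto_of_tendsto' (h.tendsto_p _) this fun n => ?_
  rw [← add_div, ← add_div, smul_add]
  exact div_le_div_of_nonneg_right (h.subadd _ _) (by positivity)

theorem Coarse.p_le (h : Coarse lam G C) (u : V) : ∃ M : ℝ, 0 ≤ M ∧ ∀ s : ℝ, h.p (s • u) ≤ M * |s| := by
  have hC0 : 0 ≤ C := by
    have := h.inv 0 0 0 le_rfl le_rfl (by simp)
    linarith
  set Λ : ℝ := ∑ i, |lam u i| with hΛ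
  have hΛ0 : 0 ≤ Λ := Finset.sum_nonneg fun i _ => abs_nonneg _
  have hΛi : ∀ i, |lam u i| ≤ Λ := fun i =>
    Finset.single_le_sum (f := fun i => |lam u i|) (fun i _ => abs_nonneg _) (Finset.mem_univ i)
  refine ⟨C * Λ, by positivity, fun s => ?_⟩
  have h2 : Tendsto (fun n : ℕ => C * Λ * |s| + (G 0 + C) / (n:ℝ)) atTop (𝓝 (C * Λ * |s|)) := by
    simpa using tendsto_const_nhds.add (tendsto_const_div_atTop_nhds_zero_nat (G 0 + C))
  refine le_of_tendsto_of_tendsto (h.tendsto_p _) h2 ?_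
  filter_upwards [eventually_gt_atTop 0] with n hn
  have hn' : (0:ℝ) < n := by exact_mod_cast hn
  have h3 : G (lam ((n:ℝ) • s • u)) ≤ G (fun i => (0 : ι → ℝ) i + n * |s| * Λ) := by
    refine h.mono _ _ fun i => ?_
    simp only [map_smul, Pi.smul_apply, smul_eq_mul, Pi.zero_apply, zero_add]
    rw [mul_assoc]
    refine mul_le_mul_of_nonneg_left ?_ hn'.le
    calc s * lam u i ≤ |s * lam u i| := le_abs_self _
      _ = |s| * |lam u i| := abs_mul _ _
      _ ≤ _ := mul_le_mul_of_nonneg_left (hΛi i) (abs_nonneg _)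
  have h4 := h.lip 0 (n * |s| * Λ) (by positivity)
  rw [div_le_iff₀ hn', add_mul, div_mul_cancel₀ _ hn'.ne']
  linarith

theorem Coarse.local_concave (h : Coarse lam G C) (w u : V) (hw : w ≠ 0) :
    ∃ δ0 > (0:ℝ), ∀ δ : ℝ, 0 < δ → δ < δ0 → h.p (w + δ • u) + h.p (w - δ • u) ≤ 2 * h.p w := by
  classical
  obtain ⟨δ0, hδ0, hδ⟩ : ∃ δ0 > (0:ℝ), ∀ i, lam w i ≠ 0 → δ0 * |lam u i| ≤ |lam w i| / 8 := by
    have : ∀ i, ∃ δ > (0:ℝ), lam w i ≠ 0 → δ * |lam u i| ≤ |lam w i| / 8 := by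
      intro i
      by_cases hi : lam w i = 0
      · exact ⟨1, one_pos, fun hh => absurd hi hh⟩
      · have h1 : 0 < |lam w i| := abs_pos.2 hi
        have h2 := abs_nonneg (lam u i)
        refine ⟨|lam w i| / (8 * (|lam u i| + 1)), by positivity, fun _ => ?_⟩
        rw [div_mul_eq_mul_div, div_le_div_iff₀ (by positivity) (by positivity)]
        nlinarith
    choose f hf hf2 using this
    rcases isEmpty_or_nonempty ι with he | he
    · exact ⟨1, one_pos, fun i => he.elim i⟩
    · obtain ⟨j, hj⟩ := Finite.exists_min f
      refine ⟨f j, hf j, fun i hi => le_trans ?_ (hf2 i hi)⟩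
      exact mul_le_mul_of_nonneg_right (hj i) (abs_nonneg _)
  refine ⟨δ0, hδ0, fun δ hδp hδlt => ?_⟩
  have hδi : ∀ i, lam w i ≠ 0 → δ * |lam u i| ≤ |lam w i| / 8 := fun i hi =>
    le_trans (mul_le_mul_of_nonneg_right hδlt.le (abs_nonneg _)) (hδ i hi)
  set x := w + δ • u with hx
  set y := w - δ • u with hy
  refine le_of_forall_pos_le_add fun ε hε => ?_
  obtain ⟨D1, hD1⟩ := h.zlem w u hw (ε / (2 * δ)) (by positivity)
  obtain ⟨D2, hD2⟩ := h.zlem w (-u) hw (ε / (2 * δ)) (by positivity)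
  have t1 := h.tendsto_p_mul x 1 one_pos
  have t2 := h.tendsto_p_mul y 3 (by norm_num)
  have t3 := h.tendsto_p_mul y 2 (by norm_num)
  have t4 := h.tendsto_p_mul w 2 (by norm_num)
  have t5 : Tendsto (fun n : ℕ => (D1 + D2 + 4 * C) / (n:ℝ)) atTop (𝓝 0) :=
    tendsto_const_div_atTop_nhds_zero_nat _
  have tl := (t1.add t2).sub t3
  have tr := (t4.add_const ε).add t5
  have hbig : ∀ᶠ n : ℕ in atTop, ∀ i, lam w i ≠ 0 → max D1 D2 ≤ n * (|lam w i| / 2) := by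
    rw [eventually_all]
    intro i
    by_cases hi : lam w i = 0
    · simp [hi]
    · have : Tendsto (fun n : ℕ => (n:ℝ) * (|lam w i| / 2)) atTop atTop :=
        tendsto_natCast_atTop_atTop.atTop_mul_const (by have := abs_pos.2 hi; positivity)
      filter_upwards [this.eventually_ge_atTop (max D1 D2)] with n hn _ using hn
  have key := le_of_tendsto_of_tendsto tl tr (by
    filter_upwards [hbig, eventually_gt_atTop 0] with n hbn hn0
    have hn : (0:ℝ) < n := by exact_mod_cast hn0
    rw [← add_div, ← sub_div, div_add' _ _ _ hn.ne', ← add_div]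
    refine div_le_div_of_nonneg_right ?_ hn.le
    have hlx : ∀ i, lam x i = lam w i + δ * lam u i := by intro i; simp [hx]
    have hly : ∀ i, lam y i = lam w i - δ * lam u i := by intro i; simp [hy]
    have hδl : ∀ i, lam w i ≠ 0 → δ * lam u i ≤ |lam w i| / 8 ∧ -(δ * lam u i) ≤ |lam w i| / 8 := by
      intro i hi
      have h1 := hδi i hi
      have h2 := le_abs_self (δ * lam u i)
      have h3 := neg_abs_le (δ * lam u i)
      rw [abs_mul, abs_of_pos hδp] at h2 h3
      constructor <;> linarith
    set N : ℝ := (n:ℝ) with hN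
    set R1 : ι → ℝ := fun i => max (2 * N * lam w i) 0 with hR1
    set R1' : ι → ℝ := fun i => R1 i + if lam w i = 0 ∧ 0 < lam u i then N * δ * lam u i else 0 with hR1'
    have a1 : G R1' ≤ G R1 + ε / (2 * δ) * (N * δ) + D1 := by
      refine hD1 (N * δ) (by positivity) R1 (fun i => le_max_right _ _) (-N) ?_ ?_ ?_
      · intro i
        simp only [hR1, Pi.zero_apply, Pi.add_apply, Pi.smul_apply, smul_eq_mul]
        rcases le_total 0 (lam w i) with hi | hi
        · have := le_max_left (2 * N * lam w i) 0; nlinarith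
        · have := le_max_right (2 * N * lam w i) 0; nlinarith
      · intro i hi
        have b1 := hbn i hi
        have b2 := le_max_left D1 D2
        have b3 := mul_le_mul_of_nonneg_left (hδi i hi) hn.le
        have b4 : N * |lam w i| ≤ R1 i + -N * lam w i := by
          rcases abs_cases (lam w i) with ⟨e, _⟩ | ⟨e, _⟩ <;> rw [e]
          · have := le_max_left (2 * N * lam w i) 0; simp only [hR1]; linarith
          · have := le_max_right (2 * N * lam w i) 0; simp only [hR1]; linarith
        have b5 : 0 ≤ N * |lam w i| := by positivity
        linarith
      · intro i h1 _; simp [hR1, h1]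
    have a1' : G R1 = G (lam (((2 * n : ℕ):ℝ) • w)) := by
      rw [← h.pos (lam _)]; congr 1; ext i; simp [hR1, hN]
    set Q1 : ι → ℝ := fun i => max (max (N * lam y i) (-(N * lam x i))) 0 with hQ1
    set Q2 : ι → ℝ := fun i => max (-(N * lam x i)) 0 with hQ2
    set B1 : ι → ℝ := fun i => max (max (N * lam y i) (-(2 * N * lam y i))) 0 with hB1
    set B2 : ι → ℝ := fun i => max (-(2 * N * lam y i)) 0 with hB2
    set B3 : ι → ℝ := fun i => B2 i + if lam w i = 0 ∧ 0 < lam (-u) i then N * δ * lam (-u) i else 0 with hB3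
    have a2 : G Q1 ≤ G R1' + C := by
      refine h.inv (N • x) _ _ (fun i => le_max_right _ _) ?_ ?_
      · intro i; simp only [hR1', hR1, Pi.zero_apply]
        have := le_max_right (2 * N * lam w i) 0
        split_ifs with hi
        · have : 0 ≤ N * δ * lam u i := mul_nonneg (by positivity) hi.2.le
          linarith
        · linarith
      · intro i
        have c1 : 2 * N * lam w i ≤ R1 i := le_max_left _ _
        have c2 : 0 ≤ R1 i := le_max_right _ _
        simp only [hQ1, hR1', map_smul, Pi.add_apply, Pi.smul_apply, smul_eq_mul, ← max_add_add_right]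
        have c3 : 0 ≤ (if lam w i = 0 ∧ 0 < lam u i then N * δ * lam u i else 0) := by
          split_ifs with hi
          · exact mul_nonneg (by positivity) hi.2.le
          · exact le_rfl
        refine max_le (max_le ?_ ?_) ?_
        · rw [hlx, hly]; linarith
        · linarith
        · rw [hlx]
          by_cases hi : lam w i = 0
          · by_cases hu : 0 < lam u i
            · simp only [hi, hu, and_self, if_true]; linarith
            · have : N * δ * lam u i ≤ 0 := mul_nonpos_of_nonneg_of_nonpos (by positivity) (not_lt.1 hu)
              have z : N * lam w i = 0 := by rw [hi, mul_zero]
              linarith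
          · have := (hδl i hi).1
            have c4 := mul_le_mul_of_nonneg_left this hn.le
            rcases abs_cases (lam w i) with ⟨e, e'⟩ | ⟨e, e'⟩ <;> rw [e] at c4
            · have := mul_nonneg hn.le e'; linarith
            · have := mul_pos hn (neg_pos.2 e'); linarith
    have a3 : G (lam (((1 * n : ℕ):ℝ) • x)) ≤ G Q2 + C := by
      rw [← h.pos]
      refine h.inv (-(N • x)) _ _ le_sup_right (fun i => le_max_right _ _) ?_
      intro i
      simp only [hQ2, one_mul, ← hN, map_smul, map_neg, Pi.add_apply, Pi.sup_apply, Pi.neg_apply, Pi.smul_apply, smul_eq_mul,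
        Pi.zero_apply]
      grind
    have a4 : G (lam (((3 * n : ℕ):ℝ) • y)) ≤ G B1 + C := by
      rw [← h.pos]
      refine h.inv (-((2 * N) • y)) _ _ le_sup_right (fun i => le_max_right _ _) ?_
      intro i
      simp only [hB1, map_smul, map_neg, Pi.add_apply, Pi.sup_apply, Pi.neg_apply, Pi.smul_apply, smul_eq_mul,
        Pi.zero_apply, Nat.cast_mul, ← hN, Nat.cast_ofNat]
      grind
    have a5 : G B2 ≤ G (lam (((2 * n : ℕ):ℝ) • y)) + C := by
      rw [← h.pos (lam _)]
      refine h.inv ((2 * N) • y) _ _ (fun i => le_max_right _ _) le_sup_right ?_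
      intro i
      simp only [hB2, map_smul, Pi.add_apply, Pi.sup_apply, Pi.smul_apply, smul_eq_mul,
        Pi.zero_apply, Nat.cast_mul, ← hN, Nat.cast_ofNat]
      grind
    have c3 : ∀ i, 0 ≤ (if lam w i = 0 ∧ 0 < lam (-u) i then N * δ * lam (-u) i else 0) := by
      intro i
      split_ifs with hi
      · exact mul_nonneg (by positivity) hi.2.le
      · exact le_rfl
    have a6 : G B1 + G Q2 ≤ G Q1 + G B3 := by
      have s := h.submod Q1 B3
      have s1 : G B1 ≤ G (Q1 ⊔ B3) := by
        refine h.mono _ _ fun i => ?_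
        have := c3 i
        refine max_le (max_le ?_ ?_) ?_
        · exact le_sup_of_le_left (le_max_of_le_left (le_max_left _ _))
        · refine le_sup_of_le_right ?_
          have := le_max_left (-(2 * N * lam y i)) 0
          simp only [hB3, hB2]; linarith
        · exact le_sup_of_le_left (le_max_right _ _)
      have s2 : G Q2 ≤ G (Q1 ⊓ B3) := by
        refine h.mono _ _ (le_inf (fun i => ?_) (fun i => ?_))
        · exact max_le (le_max_of_le_left (le_max_right _ _)) (le_max_right _ _)
        · have c := c3 i
          have d1 := le_max_left (-(2 * N * lam y i)) 0
          have d2 := le_max_right (-(2 * N * lam y i)) 0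
          refine max_le ?_ (by simp only [hB3, hB2]; linarith)
          simp only [hB3, hB2]
          by_cases hi : lam w i = 0
          · by_cases hu : lam u i < 0
            · have hu' : 0 < lam (-u) i := by simp [hu]
              simp only [hi, hu', and_self, if_true, hlx]
              simp only [map_neg, Pi.neg_apply]; linarith
            · have : 0 ≤ N * δ * lam u i := mul_nonneg (by positivity) (not_lt.1 hu)
              have z : N * lam w i = 0 := by rw [hi, mul_zero]
              rw [hlx]; linarith
          · have e1 := (hδl i hi).1
            have e2 := (hδl i hi).2
            rw [hly] at d1 d2; rw [hly, hlx]
            rcases abs_cases (lam w i) with ⟨e, _⟩ | ⟨e, _⟩ <;> rw [e] at e1 e2 <;> nlinarith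
      linarith
    have a7 : G B3 ≤ G B2 + ε / (2 * δ) * (N * δ) + D2 := by
      have hB2w : ∀ i, lam w i ≠ 0 → 3 / 4 * (N * |lam w i|) ≤ B2 i + N * lam w i := by
        intro i hi
        have e1 := (hδl i hi).1
        have e2 := (hδl i hi).2
        have d1 : -(2 * N * lam y i) ≤ B2 i := le_max_left _ _
        have d2 : 0 ≤ B2 i := le_max_right _ _
        rw [hly] at d1
        rcases abs_cases (lam w i) with ⟨e, _⟩ | ⟨e, _⟩ <;> rw [e] at e1 e2 ⊢ <;> nlinarith
      refine hD2 (N * δ) (by positivity) B2 (fun i => le_max_right _ _) N ?_ ?_ ?_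
      · intro i
        simp only [Pi.zero_apply, Pi.add_apply, Pi.smul_apply, smul_eq_mul]
        by_cases hi : lam w i = 0
        · rw [hi, mul_zero, add_zero]; exact le_max_right _ _
        · have := hB2w i hi
          have : 0 ≤ N * |lam w i| := by positivity
          linarith
      · intro i hi
        have b1 := hbn i hi
        have b2 := le_max_right D1 D2
        have b3 := mul_le_mul_of_nonneg_left (hδi i hi) hn.le
        have b5 : 0 ≤ N * |lam w i| := by positivity
        have := hB2w i hi
        simp only [map_neg, Pi.neg_apply, abs_neg]
        linarith
      · intro i h1 h2
        simp only [hB2, hly, h1]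
        simp only [map_neg, Pi.neg_apply] at h2
        refine max_eq_right ?_
        have : 0 ≤ N * δ * -lam u i := mul_nonneg (by positivity) h2.le
        linarith
    have e : ε / (2 * δ) * (N * δ) = ε * N / 2 := by field_simp
    rw [e] at a1 a7
    linarith)
  push_cast at key
  linarith

theorem chord_bound (f : ℝ → ℝ) (hf : Continuous f)
    (hc : ∀ s, ∃ δ0 > (0:ℝ), ∀ δ : ℝ, 0 < δ → δ < δ0 → f (s + δ) + f (s - δ) ≤ 2 * f s)
    (a b : ℝ) (hab : a < b) (ha : 0 ≤ f a) (hb : 0 ≤ f b) : ∀ x ∈ Set.Icc a b, 0 ≤ f x := by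
  by_contra! hcon
  obtain ⟨x, hx, hfx⟩ := hcon
  obtain ⟨y, hy, hmin⟩ := isCompact_Icc.exists_isMinOn ⟨x, hx⟩ hf.continuousOn (s := Set.Icc a b)
  have hmy : f y < 0 := (hmin hx).trans_lt hfx
  set S := Set.Icc a b ∩ f ⁻¹' {f y} with hS
  have hSc : IsCompact S := isCompact_Icc.inter_right (isClosed_singleton.preimage hf)
  obtain ⟨z, hz, hzl⟩ := hSc.exists_isLeast ⟨y, hy, rfl⟩
  have hzy : f z = f y := hz.2
  have hza : a < z := lt_of_le_of_ne hz.1.1 (by rintro rfl; linarith)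
  have hzb : z < b := lt_of_le_of_ne hz.1.2 (by rintro rfl; linarith)
  obtain ⟨δ0, h0, hδ⟩ := hc z
  set δ := min (δ0 / 2) (min (z - a) (b - z)) with hδd
  have h1 : 0 < δ := by simp [hδd, h0, hza, hzb]
  have h2 : δ < δ0 := lt_of_le_of_lt (min_le_left _ _) (by linarith)
  have h3 : δ ≤ z - a := (min_le_right _ _).trans (min_le_left _ _)
  have h4 : δ ≤ b - z := (min_le_right _ _).trans (min_le_right _ _)
  have h5 := hδ δ h1 h2
  have h6 : f y ≤ f (z + δ) := hmin ⟨by linarith, by linarith⟩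
  have h7 : f y ≤ f (z - δ) := hmin ⟨by linarith, by linarith⟩
  have h8 : f (z - δ) = f y := by linarith
  have := hzl ⟨⟨by linarith, by linarith⟩, h8⟩
  linarith

theorem Coarse.p_eq_zero (h : Coarse lam G C) (u t : V) (ht : ∀ s : ℝ, t + s • u ≠ 0) : h.p u = 0 := by
  obtain ⟨M, hM0, hM⟩ := h.p_le u
  set f : ℝ → ℝ := fun s => h.p (t + s • u) with hf
  have hlip : ∀ a b, f a ≤ f b + M * |a - b| := by
    intro a b
    have := h.p_add (t + b • u) ((a - b) • u)
    rw [show t + b • u + (a - b) • u = t + a • u by module] at this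
    exact this.trans (by have := hM (a - b); simp only [hf]; linarith)
  have hcont : Continuous f := by
    refine (LipschitzWith.of_le_add_mul ⟨M, hM0⟩ ?_).continuous
    intro a b; exact hlip a b
  have hbound : ∀ s, 0 < s → f s ≤ f 0 := by
    intro s hs
    have h1 : ∀ c : ℝ, 0 < c → f s * (c / (c + s)) ≤ f 0 := by
      intro c hcp
      set L : ℝ → ℝ := fun x => f s * ((x + c) / (c + s)) with hL
      have := chord_bound (fun x => f x - L x) (by fun_prop) (by
        intro x
        obtain ⟨δ0, h0, hδ⟩ := h.local_concave (t + x • u) u (ht x)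
        refine ⟨δ0, h0, fun δ hp hl => ?_⟩
        have := hδ δ hp hl
        rw [show t + x • u + δ • u = t + (x + δ) • u by module,
          show t + x • u - δ • u = t + (x - δ) • u by module] at this
        have e : L (x + δ) + L (x - δ) = 2 * L x := by simp only [hL]; ring
        simp only [hf] at *; linarith) (-c) s (by linarith)
        (by have := h.p_nonneg (t + (-c) • u); simpa [hL, hf] using this)
        (by have : L s = f s := by simp only [hL]; rw [add_comm s c, div_self (by positivity), mul_one]
            simp [this]) 0 ⟨by linarith, hs.le⟩
      simp only [hL, zero_add] at this; linarith
    have h2 : Tendsto (fun c : ℝ => f s * (c / (c + s))) atTop (𝓝 (f s * 1)) := by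
      refine Tendsto.const_mul _ ?_
      have e : Tendsto (fun c : ℝ => 1 - s / (c + s)) atTop (𝓝 (1 - 0)) := by
        refine tendsto_const_nhds.sub ?_
        exact tendsto_const_nhds.div_atTop (tendsto_atTop_add_const_right _ _ tendsto_id)
      rw [sub_zero] at e
      refine e.congr' ?_
      filter_upwards [eventually_gt_atTop 0] with c hc
      field_simp; ring
    rw [mul_one] at h2
    refine le_of_tendsto h2 ?_
    filter_upwards [eventually_gt_atTop 0] with c hc using h1 c hc
  have hk : ∀ k : ℕ, 0 < k → k * h.p u ≤ f 0 + h.p (-t) := by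
    intro k hk
    rw [← h.p_nat u k hk]
    have := h.p_add (t + (k:ℝ) • u) (-t)
    rw [show t + (k:ℝ) • u + -t = (k:ℝ) • u by module] at this
    have := hbound k (by exact_mod_cast hk)
    simp only [hf] at *; linarith
  by_contra hne
  have hpos : 0 < h.p u := lt_of_le_of_ne (h.p_nonneg u) (Ne.symm hne)
  obtain ⟨k, hk1⟩ := exists_nat_gt ((f 0 + h.p (-t)) / h.p u)
  have h3 := hk (k + 1) (Nat.succ_pos _)
  rw [div_lt_iff₀ hpos] at hk1
  push_cast at h3; nlinarith

end CoarseLib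
end Mod2

section Mod3
section AlgLib

theorem irr_submodule {d N : ℕ} (α : (Fin d → ℤ) → Matrix (Fin N) (Fin N) ℤ)
    (Λ : AddSubgroup (Fin d → ℤ)) (hirr : IsIrreducibleOn α Λ)
    (P : Submodule ℚ (Fin N → ℚ))
    (hP : ∀ v ∈ Λ, ∀ x ∈ P, ((α v).map (Int.cast : ℤ → ℚ)).transpose.mulVec x ∈ P) :
    P = ⊥ ∨ P = ⊤ := by
  by_contra! hcon
  obtain ⟨hb, ht⟩ := hcon
  let S : AddSubgroup (Fin N → UnitAddCircle) :=
    { carrier := {x | ∀ ξ : Fin N → ℤ, (fun j => (ξ j : ℚ)) ∈ P → ∑ j, ξ j • x j = 0}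
      zero_mem' := by intro ξ _; simp
      add_mem' := by
        intro a b ha hb ξ hξ
        simp only [Pi.add_apply, smul_add, Finset.sum_add_distrib, ha ξ hξ, hb ξ hξ, add_zero]
      neg_mem' := by
        intro a ha ξ hξ
        simp only [Pi.neg_apply, smul_neg, Finset.sum_neg_distrib, ha ξ hξ, neg_zero] }
  have hfin := hirr S ?_ ?_ ?_
  · -- infinite
    obtain ⟨φ, hφ0, hφ⟩ := Submodule.exists_le_ker_of_lt_top P (lt_top_iff_ne_top.2 ht)
    obtain ⟨j, hj⟩ : ∃ j, φ (Pi.single j 1) ≠ 0 := by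
      by_contra! hc
      exact hφ0 (LinearMap.pi_ext' fun i => LinearMap.ext_ring (by simpa using hc i))
    have himg : (Set.univ : Set UnitAddCircle) ⊆ (fun x : Fin N → UnitAddCircle => x j) '' (S : Set _) := by
      intro c _
      obtain ⟨r, rfl⟩ := QuotientAddGroup.mk_surjective c
      have hj' : ((φ (Pi.single j 1) : ℚ) : ℝ) ≠ 0 := by exact_mod_cast hj
      set t : ℝ := r / (φ (Pi.single j 1) : ℚ)
      refine ⟨fun i => ((t * (φ (Pi.single i 1) : ℚ) : ℝ) : UnitAddCircle), ?_, ?_⟩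
      · intro ξ hξ
        have h1 : φ (fun j => (ξ j : ℚ)) = 0 := hφ hξ
        have h2 : (fun j => (ξ j : ℚ)) = ∑ i, (ξ i : ℚ) • (Pi.single i 1 : Fin N → ℚ) := by
          ext k; simp [Finset.sum_apply, Pi.single_apply]
        rw [h2, map_sum] at h1
        simp only [map_smul, smul_eq_mul] at h1
        have h3 : ∑ i, (ξ i : ℝ) * ((φ (Pi.single i 1) : ℚ) : ℝ) = 0 := by exact_mod_cast h1
        calc ∑ i, ξ i • ((t * (φ (Pi.single i 1) : ℚ) : ℝ) : UnitAddCircle)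
            = ((∑ i, ξ i • (t * (φ (Pi.single i 1) : ℚ) : ℝ) : ℝ) : UnitAddCircle) := by
              exact (map_sum (QuotientAddGroup.mk' (AddSubgroup.zmultiples (1:ℝ))) _ _).symm
          _ = ((t * ∑ i, (ξ i : ℝ) * ((φ (Pi.single i 1) : ℚ) : ℝ) : ℝ) : UnitAddCircle) := by
              congr 1; rw [Finset.mul_sum]; refine Finset.sum_congr rfl fun i _ => ?_
              simp only [zsmul_eq_mul]; ring
          _ = 0 := by rw [h3]; simp
      · simp only [t]; rw [div_mul_cancel₀ _ hj']
    have hf2 : (Set.univ : Set UnitAddCircle).Finite := (hfin.image _).subset himg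
    have : Finite UnitAddCircle := Set.finite_univ_iff.1 hf2
    have : Finite (Set.Ico (0:ℝ) (0 + 1)) := Finite.of_equiv _ (AddCircle.equivIco (1:ℝ) 0)
    exact (Set.Ico_infinite (by norm_num : (0:ℝ) < 0 + 1)) (Set.toFinite _)
  · have : (S : Set (Fin N → UnitAddCircle)) = ⋂ (ξ : Fin N → ℤ) (_ : (fun j => (ξ j : ℚ)) ∈ P),
        {x | ∑ j, ξ j • x j = 0} := by ext x; simp [S]
    rw [this]
    refine isClosed_iInter fun ξ => isClosed_iInter fun _ => isClosed_eq (by fun_prop) continuous_const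
  · intro v hv x hx ξ hξ
    have h1 := hP v hv _ hξ
    have h2 := hx (fun j => ∑ i, (α v) i j * ξ i) (by
      convert h1 using 1; ext j; simp [Matrix.mulVec, dotProduct])
    rw [← h2]
    simp only [toralMap, Finset.smul_sum, Finset.sum_smul]
    rw [Finset.sum_comm]
    refine Finset.sum_congr rfl fun j _ => Finset.sum_congr rfl fun i _ => ?_
    rw [smul_smul, mul_comm]
  · intro hS
    obtain ⟨x, hx, hx0⟩ := Submodule.exists_mem_ne_zero_of_ne_bot hb
    obtain ⟨b, hbx⟩ := IsLocalization.exist_integer_multiples_of_finite (nonZeroDivisors ℤ) x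
    choose ξ hξ using hbx
    have hb0 : ((b : ℤ) : ℚ) ≠ 0 := by exact_mod_cast nonZeroDivisors.coe_ne_zero b
    have hmem : (fun j => (ξ j : ℚ)) ∈ P := by
      have := P.smul_mem ((b : ℤ) : ℚ) hx
      convert this using 1
      ext j; have := hξ j; simpa using this
    obtain ⟨j, hj⟩ : ∃ j, x j ≠ 0 := by by_contra! hc; exact hx0 (funext hc)
    have hξj : (ξ j : ℝ) ≠ 0 := by
      have := hξ j
      have h2 : (ξ j : ℚ) ≠ 0 := by
        have h3 : (ξ j : ℚ) = (b : ℤ) * x j := by simpa using this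
        rw [h3]; exact mul_ne_zero hb0 hj
      exact_mod_cast h2
    have hm : (Pi.single j ((1 / (2 * ξ j) : ℝ) : UnitAddCircle) : Fin N → UnitAddCircle) ∈ S := by
      rw [hS]; trivial
    have h4 := hm ξ hmem
    rw [Finset.sum_eq_single j (by intro i _ hi; simp [hi]) (by simp)] at h4
    rw [Pi.single_eq_same, ← AddCircle.coe_zsmul, AddCircle.coe_eq_zero_iff] at h4
    obtain ⟨n, hn⟩ := h4
    have : (n : ℝ) = 1 / 2 := by
      rw [zsmul_eq_mul, mul_one, zsmul_eq_mul] at hn; rw [hn]; field_simp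
    have h5 : (2 * n : ℝ) = 1 := by linarith
    have h6 : 2 * n = 1 := by exact_mod_cast h5
    omega


open Matrix in
theorem eigen_of_field {d N : ℕ} (α : (Fin d → ℤ) → Matrix (Fin N) (Fin N) ℤ)
    (hα0 : α 0 = 1)
    (hfaithful : ∀ v : Fin d → ℤ, v ≠ 0 → α v ≠ 1)
    (hstrirr : ∀ Λ : AddSubgroup (Fin d → ℤ), Λ.FiniteIndex → IsIrreducibleOn α Λ)
    (K : Type*) [Field K] [Algebra ℚ K] (κ : (Fin N → ℚ) ≃ₗ[ℚ] K) (r : (Fin d → ℤ) → K)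
    (hr : ∀ v x, κ (((α v).map (Int.cast : ℤ → ℚ))ᵀ *ᵥ x) = r v * κ x)
    (hradd : ∀ v w, r (v + w) = r v * r w) :
    ∃ (E : Matrix (Fin N) (Fin N) ℂ) (χ : Fin N → (Fin d → ℤ) → ℂ), E.det ≠ 0 ∧
      (∀ v, (α v).map (Int.cast : ℤ → ℂ) * E = E * Matrix.diagonal (fun i => χ i v)) ∧
      (∀ ξ : Fin N → ℤ, ξ ≠ 0 → ∀ i, ∑ j, (ξ j : ℂ) * E j i ≠ 0) ∧
      (∀ i v w, χ i (v + w) = χ i v * χ i w) ∧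
      (∀ i, χ i 0 = 1) ∧
      (∀ i v, v ≠ 0 → χ i v ≠ 1) ∧
      (∀ i j, i ≠ j → ∀ n : ℕ, 0 < n → ∃ v, χ i v ^ n ≠ χ j v ^ n) := by
  classical
  have : FiniteDimensional ℚ K := Module.Finite.equiv κ
  have hcard : Fintype.card (K →ₐ[ℚ] ℂ) = N := by
    rw [AlgHom.card, ← κ.finrank_eq]; simp
  let e : Fin N ≃ (K →ₐ[ℚ] ℂ) := (Fintype.equivFinOfCardEq hcard).symm
  let b : Module.Basis (Fin N) ℚ K := (Pi.basisFun ℚ (Fin N)).map κ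
  have hb : ∀ j, b j = κ (Pi.single j 1) := fun j => by simp [b]
  have hr0 : r 0 = 1 := by
    have := hr 0 (κ.symm 1)
    rw [hα0] at this
    simpa using this.symm
  have hsum : ∀ (c : Fin N → ℚ) (i : Fin N), e i (κ c) = ∑ j, (c j : ℂ) * e i (b j) := by
    intro c i
    have h2 : c = ∑ i, c i • (Pi.single i 1 : Fin N → ℚ) := by
      ext k; simp [Finset.sum_apply, Pi.single_apply]
    conv_lhs => rw [h2]
    rw [map_sum, map_sum]
    refine Finset.sum_congr rfl fun k _ => ?_
    rw [map_smul κ, map_smul (e i), Algebra.smul_def, hb]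
    simp
  refine ⟨Algebra.embeddingsMatrixReindex ℚ ℂ b e, fun i v => e i (r v), ?_, ?_, ?_, ?_, ?_, ?_, ?_⟩
  · intro h
    have h1 := Algebra.discr_eq_det_embeddingsMatrixReindex_pow_two ℚ ℂ b e
    rw [h] at h1
    have h2 := Algebra.discr_not_zero_of_basis ℚ b
    apply h2
    simpa using h1
  · intro v
    ext j i
    rw [Matrix.mul_diagonal, Matrix.mul_apply]
    have h1 := congrArg (e i) (hr v (Pi.single j 1))
    rw [map_mul, hsum, ← hb] at h1
    have h2 : ∀ j, Algebra.embeddingsMatrixReindex ℚ ℂ b e j i = e i (b j) := fun j => rfl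
    simp only [h2]
    rw [mul_comm (e i (b j)), ← h1]
    refine Finset.sum_congr rfl fun k _ => ?_
    simp
  · intro ξ hξ i h
    have h1 := hsum (fun j => (ξ j : ℚ)) i
    have h2 : ∀ j, Algebra.embeddingsMatrixReindex ℚ ℂ b e j i = e i (b j) := fun j => rfl
    simp only [h2] at h
    simp only [Rat.cast_intCast] at h1
    rw [h] at h1
    have h3 : κ (fun j => (ξ j : ℚ)) = 0 := (map_eq_zero_iff (e i) (e i).toRingHom.injective).1 h1
    have h4 : (fun j => (ξ j : ℚ)) = 0 := (map_eq_zero_iff κ κ.injective).1 h3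
    apply hξ
    ext j
    have := congrFun h4 j
    simpa using this
  · intro i v w; simp only [hradd, map_mul]
  · intro i; simp only [hr0, map_one]
  · intro i v hv h
    have h1 : r v = 1 := (e i).toRingHom.injective (by rw [map_one]; exact h)
    apply hfaithful v hv
    ext j k
    have h2 := hr v (Pi.single j 1)
    rw [h1, one_mul] at h2
    have h3 := congrFun (κ.injective h2) k
    simp [Pi.single_apply, Matrix.one_apply] at h3 ⊢
    by_cases hjk : j = k
    · subst hjk; simp at h3 ⊢; exact_mod_cast h3
    · simp [hjk, Ne.symm hjk] at h3 ⊢; exact_mod_cast h3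
  · intro i j hij n hn
    by_contra! hc
    let P : Submodule ℚ (Fin N → ℚ) :=
      (LinearMap.eqLocus (e i).toLinearMap (e j).toLinearMap).comap κ.toLinearMap
    have hPm : ∀ x, x ∈ P ↔ e i (κ x) = e j (κ x) := fun x => Iff.rfl
    have : NeZero n := ⟨hn.ne'⟩
    let f : (Fin d → ℤ) →+ (Fin d → ZMod n) :=
      { toFun := fun v k => (v k : ZMod n), map_zero' := by ext; simp, map_add' := by intros; ext; simp }
    have hfi : f.ker.FiniteIndex := inferInstance
    rcases irr_submodule α f.ker (hstrirr _ hfi) P (fun v hv x hx => by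
      rw [hPm] at hx ⊢
      have : ∃ w : Fin d → ℤ, v = n • w := by
        have h1 : ∀ k, ((v k : ℤ) : ZMod n) = 0 := fun k => congrFun hv k
        simp only [ZMod.intCast_zmod_eq_zero_iff_dvd] at h1
        choose w hw using h1
        exact ⟨w, by ext k; simp [hw k]⟩
      obtain ⟨w, rfl⟩ := this
      have hrn : ∀ m : ℕ, r (m • w) = r w ^ m := by
        intro m
        induction m with
        | zero => simp [hr0]
        | succ m ih => rw [succ_nsmul, hradd, ih, pow_succ]
      rw [hr, map_mul, map_mul, hx, hrn, map_pow, map_pow, hc w]) with h | h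
    · have h1 : κ.symm 1 ∈ P := by rw [hPm]; simp
      rw [h, Submodule.mem_bot] at h1
      simp at h1
    · apply hij
      apply e.injective
      ext k
      have : κ.symm k ∈ P := by rw [h]; trivial
      rw [hPm] at this
      simpa using this

open Matrix in
theorem exists_eigen {d N : ℕ} (hd : 1 < d) (α : (Fin d → ℤ) → Matrix (Fin N) (Fin N) ℤ)
    (hα0 : α 0 = 1) (hαadd : ∀ v w, α (v + w) = α v * α w)
    (hfaithful : ∀ v : Fin d → ℤ, v ≠ 0 → α v ≠ 1)
    (hstrirr : ∀ Λ : AddSubgroup (Fin d → ℤ), Λ.FiniteIndex → IsIrreducibleOn α Λ) :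
    ∃ (E : Matrix (Fin N) (Fin N) ℂ) (χ : Fin N → (Fin d → ℤ) → ℂ), E.det ≠ 0 ∧
      (∀ v, (α v).map (Int.cast : ℤ → ℂ) * E = E * Matrix.diagonal (fun i => χ i v)) ∧
      (∀ ξ : Fin N → ℤ, ξ ≠ 0 → ∀ i, ∑ j, (ξ j : ℂ) * E j i ≠ 0) ∧
      (∀ i v w, χ i (v + w) = χ i v * χ i w) ∧
      (∀ i, χ i 0 = 1) ∧
      (∀ i v, v ≠ 0 → χ i v ≠ 1) ∧
      (∀ i j, i ≠ j → ∀ n : ℕ, 0 < n → ∃ v, χ i v ^ n ≠ χ j v ^ n) := by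
  classical
  have hN : 0 < N := by
    rcases Nat.eq_zero_or_pos N with rfl | h
    · exact absurd (Subsingleton.elim _ _) (hfaithful (fun _ => 1) (fun h => by
        have := congrFun h ⟨0, by omega⟩; simp at this))
    · exact h
  let ρ : (Fin d → ℤ) → Module.End ℚ (Fin N → ℚ) := fun v => toLin' (((α v).map (Int.cast : ℤ → ℚ))ᵀ)
  have hρadd : ∀ v w, ρ (v + w) = ρ v * ρ w := by
    intro v w
    simp only [ρ]
    rw [add_comm, hαadd, Module.End.mul_eq_comp, ← toLin'_mul, ← transpose_mul]
    congr 2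
    ext i j; simp [Matrix.mul_apply]
  have hcomm : ∀ a ∈ Set.range ρ, ∀ b ∈ Set.range ρ, a * b = b * a := by
    rintro _ ⟨v, rfl⟩ _ ⟨w, rfl⟩
    rw [← hρadd, ← hρadd, add_comm]
  let K := Algebra.adjoin ℚ (Set.range ρ)
  let _ : CommRing K := { (inferInstance : Ring K) with
    mul_comm := fun a b => by
      have := Algebra.isMulCommutative_adjoin ℚ hcomm
      exact this.is_comm.comm a b }
  have hρK : ∀ v, ρ v ∈ K := fun v => Algebra.subset_adjoin ⟨v, rfl⟩
  have irr : ∀ P : Submodule ℚ (Fin N → ℚ), (∀ v, ∀ x ∈ P, ρ v x ∈ P) → P = ⊥ ∨ P = ⊤ := by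
    intro P hP
    exact irr_submodule α ⊤ (hstrirr ⊤ inferInstance) P (fun v _ x hx => by
      have := hP v x hx; rwa [toLin'_apply] at this)
  have hKcomm : ∀ k ∈ K, ∀ v, k * ρ v = ρ v * k := by
    intro k hk v
    have := mul_comm (⟨k, hk⟩ : K) ⟨ρ v, hρK v⟩
    exact congrArg Subtype.val this
  have hinj : ∀ k ∈ K, ∀ x, x ≠ 0 → k x = 0 → k = 0 := by
    intro k hk x hx hkx
    rcases irr (LinearMap.ker k) (fun v y hy => by
      rw [LinearMap.mem_ker] at hy ⊢
      have := LinearMap.congr_fun (hKcomm k hk v) y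
      simp only [Module.End.mul_apply] at this
      rw [this, hy, map_zero]) with h | h
    · have : x ∈ LinearMap.ker k := hkx
      rw [h] at this; exact absurd this hx
    · exact LinearMap.ker_eq_top.1 h
  let x0 : Fin N → ℚ := Pi.single ⟨0, hN⟩ 1
  have hx0 : x0 ≠ 0 := fun h => by
    have := congrFun h ⟨0, hN⟩; simp [x0] at this
  let ev : K →ₗ[ℚ] (Fin N → ℚ) := (LinearMap.applyₗ x0).comp K.val.toLinearMap
  have hev : ∀ k : K, ev k = (k : Module.End ℚ (Fin N → ℚ)) x0 := fun k => rfl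
  have hevinj : Function.Injective ev := by
    rw [injective_iff_map_eq_zero]
    intro k hk
    exact Subtype.ext (hinj k k.2 x0 hx0 hk)
  have hevsurj : Function.Surjective ev := by
    rw [← LinearMap.range_eq_top]
    rcases irr (LinearMap.range ev) (fun v y hy => by
      obtain ⟨k, rfl⟩ := hy
      exact ⟨⟨ρ v, hρK v⟩ * k, rfl⟩) with h | h
    · exfalso
      have : ev 1 ∈ LinearMap.range ev := ⟨1, rfl⟩
      rw [h] at this
      exact hx0 this
    · exact h
  let evE : K ≃ₗ[ℚ] (Fin N → ℚ) := LinearEquiv.ofBijective ev ⟨hevinj, hevsurj⟩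
  have : FiniteDimensional ℚ K := Module.Finite.equiv evE.symm
  have : Nontrivial K := ⟨1, 0, fun h => hx0 (by
    have := congrArg ev h; rw [map_zero] at this; exact this)⟩
  have : NoZeroDivisors K := ⟨by
    intro a b hab
    by_contra! hc
    have hb : ev b ≠ 0 := fun h => hc.2 (hevinj (by rw [h, map_zero]))
    exact hc.1 (Subtype.ext (hinj a a.2 _ hb (by
      have := congrArg ev hab; rw [map_zero] at this; exact this)))⟩
  have : IsDomain K := NoZeroDivisors.to_isDomain K
  let _ : Field K := { fieldOfFiniteDimensional ℚ K with }
  refine eigen_of_field α hα0 hfaithful hstrirr K evE.symm (fun v => ⟨ρ v, hρK v⟩) ?_ ?_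
  · intro v x
    apply evE.injective
    obtain ⟨k, rfl⟩ := evE.surjective x
    rw [LinearEquiv.apply_symm_apply, LinearEquiv.symm_apply_apply]
    rfl
  · intro v w
    exact Subtype.ext (hρadd v w)

end AlgLib
end Mod3

section Mod4
section GridLib

structure Eig {d N : ℕ} (α : (Fin d → ℤ) → Matrix (Fin N) (Fin N) ℤ)
    (E : Matrix (Fin N) (Fin N) ℂ) (χ : Fin N → (Fin d → ℤ) → ℂ) : Prop where
  det : E.det ≠ 0
  eig : ∀ v, (α v).map (Int.cast : ℤ → ℂ) * E = E * Matrix.diagonal (fun i => χ i v)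
  xi : ∀ ξ : Fin N → ℤ, ξ ≠ 0 → ∀ i, ∑ j, (ξ j : ℂ) * E j i ≠ 0
  add : ∀ i v w, χ i (v + w) = χ i v * χ i w
  zero : ∀ i, χ i 0 = 1
  ne1 : ∀ i v, v ≠ 0 → χ i v ≠ 1
  sep : ∀ i j, i ≠ j → ∀ n : ℕ, 0 < n → ∃ v, χ i v ^ n ≠ χ j v ^ n

noncomputable def tlift {N : ℕ} (x : Fin N → UnitAddCircle) : Fin N → ℝ :=
  fun j => (AddCircle.equivIco (1:ℝ) 0 (x j) : ℝ)

noncomputable def el {N : ℕ} (E : Matrix (Fin N) (Fin N) ℂ) (y : Fin N → ℝ) : Fin N → ℂ :=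
  E⁻¹.mulVec (fun j => (y j : ℂ))

def act {N : ℕ} (A : Matrix (Fin N) (Fin N) ℤ) (y : Fin N → ℝ) : Fin N → ℝ :=
  fun i => ∑ j, (A i j : ℝ) * y j

theorem tlift_mem {N : ℕ} (x : Fin N → UnitAddCircle) (j : Fin N) : 0 ≤ tlift x j ∧ tlift x j < 1 := by
  have := (AddCircle.equivIco (1:ℝ) 0 (x j)).2
  simpa [tlift] using this

theorem coe_tlift {N : ℕ} (x : Fin N → UnitAddCircle) (j : Fin N) : ((tlift x j : ℝ) : UnitAddCircle) = x j :=
  AddCircle.coe_equivIco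

theorem measurable_tlift {N : ℕ} : Measurable (tlift (N := N)) := by
  refine measurable_pi_lambda _ fun j => ?_
  have : Measurable (fun c : UnitAddCircle => (AddCircle.equivIco (1:ℝ) 0 c : ℝ)) := by
    have h1 := (AddCircle.measurableEquivIco (1:ℝ) 0).measurable
    exact measurable_subtype_coe.comp h1
  exact this.comp (measurable_pi_apply j)

theorem coe_act {N : ℕ} (A : Matrix (Fin N) (Fin N) ℤ) (x : Fin N → UnitAddCircle) (y : Fin N → ℝ)
    (h : ∀ j, ((y j : ℝ) : UnitAddCircle) = x j) (i : Fin N) :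
    ((act A y i : ℝ) : UnitAddCircle) = toralMap A x i := by
  simp only [toralMap, act, ← h]
  refine (map_sum (QuotientAddGroup.mk' (AddSubgroup.zmultiples (1:ℝ))) _ _).trans ?_
  refine Finset.sum_congr rfl fun j _ => ?_
  rw [← AddCircle.coe_zsmul, zsmul_eq_mul]; rfl

theorem tlift_toral {N : ℕ} (A : Matrix (Fin N) (Fin N) ℤ) (x : Fin N → UnitAddCircle) :
    ∃ z : Fin N → ℤ, tlift (toralMap A x) = act A (tlift x) + fun i => (z i : ℝ) := by
  have : ∀ i, ∃ z : ℤ, tlift (toralMap A x) i = act A (tlift x) i + z := by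
    intro i
    have h1 := coe_act A x (tlift x) (coe_tlift x) i
    rw [← coe_tlift (toralMap A x) i, ← sub_eq_zero, ← AddCircle.coe_sub, AddCircle.coe_eq_zero_iff] at h1
    obtain ⟨n, hn⟩ := h1
    refine ⟨-n, ?_⟩
    rw [zsmul_eq_mul, mul_one] at hn
    push_cast; linarith
  choose z hz using this
  exact ⟨z, funext hz⟩

theorem continuous_toral {N : ℕ} (A : Matrix (Fin N) (Fin N) ℤ) : Continuous (toralMap A) := by
  unfold toralMap; fun_prop

theorem act_sub {N : ℕ} (A : Matrix (Fin N) (Fin N) ℤ) (y z : Fin N → ℝ) :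
    act A (y - z) = act A y - act A z := by
  ext i; simp [act, mul_sub]

theorem el_add {N : ℕ} (E : Matrix (Fin N) (Fin N) ℂ) (y z : Fin N → ℝ) : el E (y + z) = el E y + el E z := by
  simp only [el, ← Matrix.mulVec_add]; congr 1; ext; simp

theorem el_sub {N : ℕ} (E : Matrix (Fin N) (Fin N) ℂ) (y z : Fin N → ℝ) : el E (y - z) = el E y - el E z := by
  simp only [el, ← Matrix.mulVec_sub]; congr 1; ext; simp

section
variable {d N : ℕ} {α : (Fin d → ℤ) → Matrix (Fin N) (Fin N) ℤ}
    {E : Matrix (Fin N) (Fin N) ℂ} {χ : Fin N → (Fin d → ℤ) → ℂ}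

theorem Eig.el_inv (h : Eig α E χ) (y : Fin N → ℝ) (j : Fin N) : (y j : ℂ) = ∑ i, E j i * el E y i := by
  have : E.mulVec (el E y) = fun j => (y j : ℂ) := by
    rw [el, Matrix.mulVec_mulVec, Matrix.mul_nonsing_inv _ (isUnit_iff_ne_zero.2 h.det), Matrix.one_mulVec]
  rw [← congrFun this j]; rfl

theorem Eig.el_act (h : Eig α E χ) (v : Fin d → ℤ) (y : Fin N → ℝ) (i : Fin N) :
    el E (act (α v) y) i = χ i v * el E y i := by
  have hu := isUnit_iff_ne_zero.2 h.det
  have h1 : (fun j => (act (α v) y j : ℂ)) = ((α v).map (Int.cast : ℤ → ℂ)).mulVec (fun j => (y j : ℂ)) := by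
    ext j; simp [act, Matrix.mulVec, dotProduct]
  have h2 : (fun j => (y j : ℂ)) = E.mulVec (el E y) := funext fun j => h.el_inv y j
  rw [el, h1, h2, Matrix.mulVec_mulVec, Matrix.mulVec_mulVec, Matrix.mul_assoc, h.eig, ← Matrix.mul_assoc,
    Matrix.nonsing_inv_mul _ hu, Matrix.one_mul, Matrix.mulVec_diagonal]

theorem Eig.pair (h : Eig α E χ) (ξ : Fin N → ℤ) (y : Fin N → ℝ) :
    ((∑ j, (ξ j : ℝ) * y j : ℝ) : ℂ) = ∑ i, (∑ j, (ξ j : ℂ) * E j i) * el E y i := by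
  push_cast
  simp only [Finset.sum_mul]
  rw [Finset.sum_comm]
  refine Finset.sum_congr rfl fun j _ => ?_
  rw [h.el_inv y j, Finset.mul_sum]
  refine Finset.sum_congr rfl fun i _ => by ring

theorem Eig.exists_const (h : Eig α E χ) : ∃ c : ℝ, 1 ≤ c ∧
    (∀ (y : Fin N → ℝ) (R : ℝ), (∀ j, |y j| ≤ R) → ∀ i, ‖el E y i‖ ≤ c * R) ∧
    (∀ (y : Fin N → ℝ) (R : ℝ), (∀ i, ‖el E y i‖ ≤ R) → ∀ j, |y j| ≤ c * R) := by
  have key : ∀ (M : Matrix (Fin N) (Fin N) ℂ) (z : Fin N → ℂ) (R : ℝ), (∀ j, ‖z j‖ ≤ R) → ∀ i,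
      ‖M.mulVec z i‖ ≤ (∑ i, ∑ j, ‖M i j‖) * R := by
    intro M z R hz i
    have hR : 0 ≤ R := (norm_nonneg _).trans (hz i)
    calc ‖M.mulVec z i‖ ≤ ∑ j, ‖M i j * z j‖ := by rw [Matrix.mulVec_eq_sum]; simp only [Finset.sum_apply]; refine (norm_sum_le _ _).trans (le_of_eq (Finset.sum_congr rfl fun j _ => ?_)); simp
      _ ≤ ∑ j, ‖M i j‖ * R := Finset.sum_le_sum fun j _ => by
          rw [norm_mul]; exact mul_le_mul_of_nonneg_left (hz j) (norm_nonneg _)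
      _ = (∑ j, ‖M i j‖) * R := by rw [Finset.sum_mul]
      _ ≤ _ := mul_le_mul_of_nonneg_right
          (Finset.single_le_sum (f := fun i => ∑ j, ‖M i j‖)
            (fun i _ => Finset.sum_nonneg fun j _ => norm_nonneg _) (Finset.mem_univ i)) hR
  have n1 : 0 ≤ ∑ i, ∑ j, ‖E i j‖ := Finset.sum_nonneg fun i _ => Finset.sum_nonneg fun j _ => norm_nonneg _
  have n2 : 0 ≤ ∑ i, ∑ j, ‖E⁻¹ i j‖ := Finset.sum_nonneg fun i _ => Finset.sum_nonneg fun j _ => norm_nonneg _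
  refine ⟨1 + (∑ i, ∑ j, ‖E i j‖) + ∑ i, ∑ j, ‖E⁻¹ i j‖, by linarith, ?_, ?_⟩
  · intro y R hy i
    have hR : 0 ≤ R := (abs_nonneg _).trans (hy i)
    refine (key E⁻¹ _ R (fun j => by simpa using hy j) i).trans ?_
    exact mul_le_mul_of_nonneg_right (by linarith) hR
  · intro y R hy j
    have hR : 0 ≤ R := (norm_nonneg _).trans (hy j)
    have h1 := key E (el E y) R hy j
    have h2 : E.mulVec (el E y) j = (y j : ℂ) := (h.el_inv y j).symm
    rw [h2, Complex.norm_real, Real.norm_eq_abs] at h1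
    exact h1.trans (mul_le_mul_of_nonneg_right (by linarith) hR)

theorem Eig.χ_ne (h : Eig α E χ) (i : Fin N) (v : Fin d → ℤ) : χ i v ≠ 0 := by
  intro h0
  have := h.add i v (-v)
  rw [add_neg_cancel, h.zero, h0, zero_mul] at this
  exact one_ne_zero this

theorem Eig.χ_nsmul (h : Eig α E χ) (i : Fin N) (v : Fin d → ℤ) (n : ℕ) : χ i (n • v) = χ i v ^ n := by
  induction n with
  | zero => simp [h.zero]
  | succ n ih => rw [succ_nsmul, h.add, ih, pow_succ]
end

noncomputable def lamMap {d N : ℕ} (χ : Fin N → (Fin d → ℤ) → ℂ) : (Fin d → ℝ) →ₗ[ℝ] (Fin N → ℝ) :=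
  LinearMap.pi fun i => ∑ k, (Real.logb 2 ‖χ i (Pi.single k 1)‖) • LinearMap.proj k

theorem Eig.norm_χ {d N : ℕ} {α : (Fin d → ℤ) → Matrix (Fin N) (Fin N) ℤ}
    {E : Matrix (Fin N) (Fin N) ℂ} {χ : Fin N → (Fin d → ℤ) → ℂ} (h : Eig α E χ) (i : Fin N)
    (v : Fin d → ℤ) : ‖χ i v‖ = (2:ℝ) ^ (lamMap χ (fun k => (v k : ℝ)) i) := by
  let f : (Fin d → ℤ) →+ ℝ :=
    { toFun := fun v => Real.logb 2 ‖χ i v‖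
      map_zero' := by simp [h.zero]
      map_add' := by
        intro a b
        rw [h.add, norm_mul, Real.logb_mul (norm_ne_zero_iff.2 (h.χ_ne i a)) (norm_ne_zero_iff.2 (h.χ_ne i b))] }
  have h1 : lamMap χ (fun k => (v k : ℝ)) i = f v := by
    have h2 : v = ∑ k, v k • (Pi.single k 1 : Fin d → ℤ) := by
      ext k; simp [Finset.sum_apply, Pi.single_apply]
    conv_rhs => rw [h2, map_sum]
    simp only [lamMap, LinearMap.pi_apply, LinearMap.sum_apply, LinearMap.smul_apply, LinearMap.proj_apply,
      smul_eq_mul]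
    refine Finset.sum_congr rfl fun k _ => ?_
    rw [map_zsmul, zsmul_eq_mul, mul_comm]; rfl
  rw [h1]
  exact (Real.rpow_logb (by norm_num) (by norm_num) (norm_pos_iff.2 (h.χ_ne i v))).symm

theorem lam_round {d N : ℕ} (χ : Fin N → (Fin d → ℤ) → ℂ) : ∃ c : ℝ, 0 ≤ c ∧ ∀ t : Fin d → ℝ, ∀ i,
    |lamMap χ t i - lamMap χ (fun k => ((⌊t k⌋ : ℤ) : ℝ)) i| ≤ c := by
  refine ⟨∑ i, ∑ k, |Real.logb 2 ‖χ i (Pi.single k 1)‖|,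
    Finset.sum_nonneg fun i _ => Finset.sum_nonneg fun j _ => abs_nonneg _, fun t i => ?_⟩
  rw [← Pi.sub_apply, ← map_sub]
  refine le_trans ?_ (Finset.single_le_sum (f := fun i => ∑ k, |Real.logb 2 ‖χ i (Pi.single k 1)‖|)
    (fun i _ => Finset.sum_nonneg fun j _ => abs_nonneg _) (Finset.mem_univ i))
  simp only [lamMap, LinearMap.pi_apply, LinearMap.sum_apply, LinearMap.smul_apply, LinearMap.proj_apply, smul_eq_mul]
  refine (Finset.abs_sum_le_sum_abs _ _).trans (Finset.sum_le_sum fun k _ => ?_)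
  rw [abs_mul]
  refine mul_le_of_le_one_right (abs_nonneg _) ?_
  rw [Pi.sub_apply, abs_le]
  have h1 := Int.floor_le (t k)
  have h2 := Int.lt_floor_add_one (t k)
  constructor <;> linarith

end GridLib
end Mod4

section Mod5
open MeasureTheory

section GridLib2

noncomputable def gr (k : ℕ) (z : ℂ) : ℤ × ℤ := (⌊2 ^ k * z.re⌋, ⌊2 ^ k * z.im⌋)

noncomputable def YY {N : ℕ} (E : Matrix (Fin N) (Fin N) ℂ) (k : Fin N → ℕ) (x : Fin N → UnitAddCircle) :
    Fin N → ℤ × ℤ := fun i => gr (k i) (el E (tlift x) i)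

theorem gr_coarse {k k' : ℕ} (h : k ≤ k') (z : ℂ) :
    gr k z = ((gr k' z).1 / ((2 ^ (k' - k) : ℕ) : ℤ), (gr k' z).2 / ((2 ^ (k' - k) : ℕ) : ℤ)) := by
  have key : ∀ r : ℝ, (2:ℝ) ^ k * r = 2 ^ k' * r / ((2 ^ (k' - k) : ℕ) : ℝ) := by
    intro r
    have : (2:ℝ) ^ k' = 2 ^ k * 2 ^ (k' - k) := by rw [← pow_add]; congr 1; omega
    rw [this]; push_cast; field_simp
  simp only [gr]
  rw [key, key, Int.floor_div_natCast, Int.floor_div_natCast]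

theorem gr_close {k : ℕ} {z z' : ℂ} (h : gr k z = gr k z') : ‖z - z'‖ ≤ 2 / 2 ^ k := by
  have key : ∀ r r' : ℝ, ⌊2 ^ k * r⌋ = ⌊2 ^ k * r'⌋ → |r - r'| ≤ 1 / 2 ^ k := by
    intro r r' hr
    have := (Int.abs_sub_lt_one_of_floor_eq_floor hr).le
    rw [← mul_sub, abs_mul, abs_of_pos (by positivity)] at this
    rw [le_div_iff₀ (by positivity)]; linarith
  simp only [gr, Prod.mk.injEq] at h
  refine (Complex.norm_le_abs_re_add_abs_im _).trans ?_
  have h1 := key _ _ h.1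
  have h2 := key _ _ h.2
  rw [Complex.sub_re, Complex.sub_im]
  calc _ ≤ 1 / (2:ℝ) ^ k + 1 / 2 ^ k := add_le_add h1 h2
    _ = _ := by ring

noncomputable def bx (N B : ℕ) : Finset (Fin N → ℤ × ℤ) :=
  Fintype.piFinset fun _ => Finset.Icc (-(B:ℤ)) B ×ˢ Finset.Icc (-(B:ℤ)) B

theorem card_bx (N B : ℕ) : (bx N B).card = (2 * B + 1) ^ (2 * N) := by
  have : (((B:ℤ) + 1 - -(B:ℤ))).toNat = 2 * B + 1 := by omega
  simp only [bx, Fintype.card_piFinset, Finset.card_product, Int.card_Icc, this, Finset.prod_const,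
    Finset.card_univ, Fintype.card_fin]
  rw [pow_mul, pow_two]

theorem ncard_le_cover {N B : ℕ} {ι : Type*} (S : Set (Fin N → ℤ × ℤ)) (Z : Finset ι)
    (F : ι → Fin N → ℤ × ℤ) (h : ∀ s ∈ S, ∃ z ∈ Z, s - F z ∈ bx N B) :
    S.ncard ≤ Z.card * (2 * B + 1) ^ (2 * N) := by
  classical
  have hsub : S ⊆ ((Z ×ˢ bx N B).image (fun p => F p.1 + p.2) : Finset _) := by
    intro s hs
    obtain ⟨z, hz, hp⟩ := h s hs
    simp only [Finset.coe_image, Set.mem_image, Finset.mem_coe, Finset.mem_product]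
    exact ⟨(z, s - F z), ⟨hz, hp⟩, by simp⟩
  calc S.ncard ≤ ((Z ×ˢ bx N B).image (fun p => F p.1 + p.2) : Finset _).card := by
        rw [← Set.ncard_coe_finset]; exact Set.ncard_le_ncard hsub (Finset.finite_toSet _)
    _ ≤ (Z ×ˢ bx N B).card := Finset.card_image_le
    _ = _ := by rw [Finset.card_product, card_bx]

theorem YY_near {N B : ℕ} (E : Matrix (Fin N) (Fin N) ℂ) (k : Fin N → ℕ) (x : Fin N → UnitAddCircle)
    (w : Fin N → ℂ) (h : ∀ i, ‖el E (tlift x) i - w i‖ * 2 ^ (k i) ≤ B) :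
    YY E k x - (fun i => gr (k i) (w i)) ∈ bx N (B + 1) := by
  have key : ∀ (m : ℕ) (r r' : ℝ), |r - r'| * 2 ^ m ≤ B →
      -((B + 1 : ℕ) : ℤ) ≤ ⌊2 ^ m * r⌋ - ⌊2 ^ m * r'⌋ ∧ ⌊2 ^ m * r⌋ - ⌊2 ^ m * r'⌋ ≤ ((B + 1 : ℕ) : ℤ) := by
    intro m r r' hr
    have h1 : |2 ^ m * r - 2 ^ m * r'| ≤ B := by
      rw [← mul_sub, abs_mul, abs_of_pos (by positivity)]; linarith
    rw [abs_le] at h1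
    have a1 := Int.floor_le (2 ^ m * r)
    have a2 := Int.lt_floor_add_one (2 ^ m * r)
    have a3 := Int.floor_le (2 ^ m * r')
    have a4 := Int.lt_floor_add_one (2 ^ m * r')
    constructor
    · have : (-((B + 1 : ℕ) : ℤ) : ℝ) < (⌊2 ^ m * r⌋ - ⌊2 ^ m * r'⌋ : ℤ) + 1 := by push_cast; linarith
      have : -((B + 1 : ℕ) : ℤ) < (⌊2 ^ m * r⌋ - ⌊2 ^ m * r'⌋ : ℤ) + 1 := by exact_mod_cast this
      omega
    · have : ((⌊2 ^ m * r⌋ - ⌊2 ^ m * r'⌋ : ℤ) : ℝ) < ((B + 1 : ℕ) : ℤ) + 1 := by push_cast; linarith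
      have : (⌊2 ^ m * r⌋ - ⌊2 ^ m * r'⌋ : ℤ) < ((B + 1 : ℕ) : ℤ) + 1 := by exact_mod_cast this
      omega
  simp only [bx, Fintype.mem_piFinset, Finset.mem_product, Finset.mem_Icc, Pi.sub_apply, YY, gr,
    Prod.fst_sub, Prod.snd_sub]
  intro i
  refine ⟨key _ _ _ (le_trans ?_ (h i)), key _ _ _ (le_trans ?_ (h i))⟩
  · rw [← Complex.sub_re]; gcongr; exact Complex.abs_re_le_norm _
  · rw [← Complex.sub_im]; gcongr; exact Complex.abs_im_le_norm _

variable {d N : ℕ} {α : (Fin d → ℤ) → Matrix (Fin N) (Fin N) ℤ}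
    {E : Matrix (Fin N) (Fin N) ℂ} {χ : Fin N → (Fin d → ℤ) → ℂ}

theorem Eig.good (h : Eig α E χ) (k : Fin N → ℕ) : Good (YY E k) := by
  obtain ⟨c, hc1, hc, -⟩ := h.exists_const
  have hm : ∀ i, Measurable fun x : Fin N → UnitAddCircle => el E (tlift x) i := by
    intro i
    have h1 : Continuous fun y : Fin N → ℝ => el E y i := by
      simp only [el, Matrix.mulVec, dotProduct]; fun_prop
    exact h1.measurable.comp measurable_tlift
  have hYm : Measurable (YY E k) := by
    refine measurable_pi_lambda _ fun i => ?_
    refine Measurable.prodMk ?_ ?_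
    · exact Int.measurable_floor.comp ((Complex.measurable_re.comp (hm i)).const_mul _)
    · exact Int.measurable_floor.comp ((Complex.measurable_im.comp (hm i)).const_mul _)
  refine Good.of_singleton ?_ (fun b => hYm (measurableSet_singleton b))
  set B : ℕ := ∑ i, ⌈c * 2 ^ (k i)⌉₊ with hB
  refine (Finset.finite_toSet ((bx N (B + 1)).image (fun p => (fun i => gr (k i) 0) + p))).subset ?_
  rintro _ ⟨x, rfl⟩
  simp only [Finset.coe_image, Set.mem_image, Finset.mem_coe]
  refine ⟨_, YY_near E k x (fun _ => 0) (fun i => ?_), add_sub_cancel _ _⟩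
  have h1 := hc (tlift x) 1 (fun j => by
    have := tlift_mem x j; rw [abs_le]; constructor <;> linarith) i
  rw [sub_zero]
  calc ‖el E (tlift x) i‖ * 2 ^ k i ≤ c * 2 ^ k i := by rw [mul_one] at h1; gcongr
    _ ≤ (⌈c * 2 ^ (k i)⌉₊ : ℝ) := Nat.le_ceil _
    _ ≤ B := by
      rw [Nat.cast_le]; exact Finset.single_le_sum (f := fun i => ⌈c * 2 ^ (k i)⌉₊) (fun i _ => Nat.zero_le _) (Finset.mem_univ i)

theorem YY_close {k : Fin N → ℕ} {x x' : Fin N → UnitAddCircle} (h : YY E k x = YY E k x') (i : Fin N) :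
    ‖el E (tlift x) i - el E (tlift x') i‖ ≤ 2 / 2 ^ (k i) := gr_close (congrFun h i)

def cz {N : ℕ} (m m' : Fin N → ℕ) (p : Fin N → ℤ × ℤ) : Fin N → ℤ × ℤ :=
  fun i => ((p i).1 / ((2 ^ (m' i - m i) : ℕ) : ℤ), (p i).2 / ((2 ^ (m' i - m i) : ℕ) : ℤ))

theorem YY_cz (E : Matrix (Fin N) (Fin N) ℂ) {m m' : Fin N → ℕ} (hm : m ≤ m') :
    YY E m = fun x => cz m m' (YY E m' x) := by
  ext x i : 2; exact gr_coarse (hm i) _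

theorem Eig.ent_mono (h : Eig α E χ) (μ : Measure (Fin N → UnitAddCircle)) [IsProbabilityMeasure μ]
    {k k' : Fin N → ℕ} (hk : k ≤ k') : ent μ (YY E k) ≤ ent μ (YY E k') := by
  rw [YY_cz E hk]
  exact (h.good k').ent_mono μ (cz k k')

theorem Eig.ent_submod (h : Eig α E χ) (μ : Measure (Fin N → UnitAddCircle)) [IsProbabilityMeasure μ]
    (k k' : Fin N → ℕ) : ent μ (YY E (k ⊔ k')) + ent μ (YY E (k ⊓ k')) ≤ ent μ (YY E k) + ent μ (YY E k') := by
  have := (h.good k).ent_submod μ (h.good k') (cz (k ⊓ k') k) (cz (k ⊓ k') k')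
    (fun p => fun i => if k i ≤ k' i then p.2 i else p.1 i)
    (fun x => by
      rw [← congrFun (YY_cz E (inf_le_left : k ⊓ k' ≤ k)) x, ← congrFun (YY_cz E (inf_le_right : k ⊓ k' ≤ k')) x])
  have e1 : YY E (k ⊔ k') = fun x => (fun i => if k i ≤ k' i then YY E k' x i else YY E k x i) := by
    ext x i : 2
    simp only [YY, Pi.sup_apply]
    split_ifs with hi
    · rw [sup_eq_right.2 hi]
    · rw [sup_eq_left.2 (not_le.1 hi).le]
  rw [e1, YY_cz E (inf_le_left : k ⊓ k' ≤ k)]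
  exact this

theorem Eig.count_fine (E : Matrix (Fin N) (Fin N) ℂ) {k k' : Fin N → ℕ} {c : ℕ} (hk : ∀ i, k' i ≤ k i + c) (y : Fin N → ℤ × ℤ) :
    (YY E k' '' (YY E k ⁻¹' {y})).ncard ≤ (2 * (2 ^ (c + 1) + 1) + 1) ^ (2 * N) := by
  rcases (YY E k ⁻¹' {y}).eq_empty_or_nonempty with he | ⟨x0, hx0⟩
  · rw [he]; simp
  · have := ncard_le_cover (B := 2 ^ (c + 1) + 1) (YY E k' '' (YY E k ⁻¹' {y})) ({0} : Finset ℕ)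
      (fun _ i => gr (k' i) (el E (tlift x0) i)) (by
        rintro _ ⟨x, hx, rfl⟩
        refine ⟨0, by simp, YY_near E k' x _ fun i => ?_⟩
        have h1 := YY_close (E := E) (hx.trans hx0.symm : YY E k x = YY E k x0) i
        calc _ ≤ 2 / 2 ^ k i * (2:ℝ) ^ (k i + c) := by
              gcongr
              · norm_num
              · exact hk i
          _ = _ := by push_cast; rw [pow_add, pow_succ]; field_simp)
    simpa using this

theorem log_count (N c : ℕ) : Real.log ((2 * (2 ^ (c + 1) + 1) + 1) ^ (2 * N) : ℕ) ≤ 2 * N * ((c + 3) * Real.log 2) := by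
  push_cast
  rw [Real.log_pow]
  push_cast
  gcongr
  rw [show ((c:ℝ) + 3) * Real.log 2 = Real.log (2 ^ (c + 3)) by rw [Real.log_pow]; push_cast; ring]
  apply Real.log_le_log (by positivity)
  have : (1:ℝ) ≤ 2 ^ c := one_le_pow₀ (by norm_num)
  rw [pow_add, pow_add]; nlinarith

end GridLib2
end Mod5

section Mod6
open MeasureTheory

section GridLib3
variable {d N : ℕ} {α : (Fin d → ℤ) → Matrix (Fin N) (Fin N) ℤ}
    {E : Matrix (Fin N) (Fin N) ℂ} {χ : Fin N → (Fin d → ℤ) → ℂ}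

theorem Eig.count_inv (h : Eig α E χ) (R : ℕ) : ∃ C : ℕ, 1 ≤ C ∧ ∀ (v : Fin d → ℤ) (k k' : Fin N → ℕ),
    (∀ i, ‖χ i v‖ * 2 ^ (k i) ≤ 2 ^ R * 2 ^ (k' i)) → ∀ y,
      ((fun x => YY E k (toralMap (α v) x)) '' (YY E k' ⁻¹' {y})).ncard ≤ C := by
  obtain ⟨c, hc1, -, hc⟩ := h.exists_const
  set B0 : ℕ := ⌈1 + c * 2 ^ (R + 1)⌉₊ with hB0
  let Z : Finset (Fin N → ℤ) := Fintype.piFinset (fun _ : Fin N => Finset.Icc (-(B0:ℤ)) B0)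
  have hZ : 1 ≤ Z.card := Finset.card_pos.2 ⟨0, by simp [Z]⟩
  refine ⟨Z.card * (2 * (2 ^ (R + 1) + 1) + 1) ^ (2 * N), Nat.one_le_iff_ne_zero.2
    (Nat.mul_ne_zero (by omega) (by positivity)), fun v k k' hk y => ?_⟩
  rcases (YY E k' ⁻¹' {y}).eq_empty_or_nonempty with he | ⟨x0, hx0⟩
  · rw [he]; simp
  obtain ⟨z0, hz0⟩ := tlift_toral (α v) x0
  refine ncard_le_cover (B := 2 ^ (R + 1) + 1) _ Z
    (fun z i => gr (k i) (el E (tlift (toralMap (α v) x0)) i + el E (fun j => (z j : ℝ)) i)) ?_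
  rintro _ ⟨x, hx, rfl⟩
  obtain ⟨z1, hz1⟩ := tlift_toral (α v) x
  have hclose := YY_close (E := E) (hx.trans hx0.symm : YY E k' x = YY E k' x0)
  set y' := act (α v) (tlift x - tlift x0) with hy'
  have hely : ∀ i, ‖el E y' i‖ * 2 ^ (k i) ≤ 2 ^ (R + 1) := by
    intro i
    rw [hy', h.el_act, norm_mul, el_sub, Pi.sub_apply]
    calc _ ≤ ‖χ i v‖ * (2 / 2 ^ k' i) * 2 ^ k i := by gcongr; exact hclose i
      _ = (‖χ i v‖ * 2 ^ k i) * (2 / 2 ^ k' i) := by ring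
      _ ≤ (2 ^ R * 2 ^ k' i) * (2 / 2 ^ k' i) := mul_le_mul_of_nonneg_right (hk i) (by positivity)
      _ = _ := by rw [pow_succ]; field_simp
  have hy'b := hc y' (2 ^ (R + 1)) (fun i => by
    refine le_trans ?_ (hely i)
    exact le_mul_of_one_le_right (norm_nonneg _) (one_le_pow₀ (by norm_num)))
  have hdiff : tlift (toralMap (α v) x) = tlift (toralMap (α v) x0) + (fun j => (((z1 - z0) j : ℤ) : ℝ)) + y' := by
    rw [hz1, hz0, hy', act_sub]; ext j; simp only [Pi.add_apply, Pi.sub_apply]; push_cast; ring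
  refine ⟨z1 - z0, ?_, YY_near E k _ _ fun i => ?_⟩
  · simp only [Z, Fintype.mem_piFinset, Finset.mem_Icc]
    intro j
    rw [← abs_le]
    have h1 : |(((z1 - z0) j : ℤ) : ℝ)| ≤ 1 + c * 2 ^ (R + 1) := by
      have h2 := congrFun hdiff j
      simp only [Pi.add_apply] at h2
      have h3 := tlift_mem (toralMap (α v) x) j
      have h4 := tlift_mem (toralMap (α v) x0) j
      have h5 := abs_le.1 (hy'b j)
      rw [abs_le]; constructor <;> linarith
    have h2 : ((|(z1 - z0) j| : ℤ) : ℝ) ≤ (B0 : ℤ) := by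
      push_cast; push_cast at h1; exact h1.trans (Nat.le_ceil _)
    exact_mod_cast h2
  · rw [hdiff, el_add, el_add]
    simp only [Pi.add_apply, add_sub_cancel_left]
    exact_mod_cast hely i

theorem Eig.coarse_of_kp (h : Eig α E χ) (μ : Measure (Fin N → UnitAddCircle)) [IsProbabilityMeasure μ]
    (hinv : ∀ v, Measure.map (toralMap (α v)) μ = μ)
    (hkp : ∀ w u : Fin d → ℝ, w ≠ 0 → ∀ ε : ℝ, 0 < ε → ∀ κ0 : ℝ, ∃ κ, κ0 ≤ κ ∧ ∃ k0 : Fin N → ℝ, 0 ≤ k0 ∧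
      ent μ (YY E (fun i => ⌈k0 i + if lamMap χ w i = 0 ∧ 0 < lamMap χ u i then κ else 0⌉₊)) -
        ent μ (YY E (fun i => ⌈k0 i⌉₊)) ≤ ε * κ) :
    ∃ C, Coarse (lamMap χ) (fun ρ => ent μ (YY E (fun i => ⌈ρ i⌉₊))) C := by
  obtain ⟨c1, hc1, hround⟩ := lam_round χ
  obtain ⟨C1, hC11, hC1⟩ := h.count_inv (⌈c1⌉₊ + 1)
  have hl2 : 0 < Real.log 2 := Real.log_pos (by norm_num)
  have hlC : 0 ≤ Real.log C1 := Real.log_nonneg (by exact_mod_cast hC11)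
  set C := Real.log 2 + Real.log C1 + 2 * N * (5 * Real.log 2) with hC
  have hN0 : (0:ℝ) ≤ N := by positivity
  refine ⟨C, ⟨fun r => ent_nonneg μ _, ?_, ?_, ?_, ?_, ?_, hkp⟩⟩
  · intro a b hab
    exact h.ent_mono μ fun i => Nat.ceil_mono (hab i)
  · intro r
    have : (fun i => ⌈(r ⊔ 0) i⌉₊) = fun i => ⌈r i⌉₊ := by
      ext i
      simp only [Pi.sup_apply, Pi.zero_apply]
      rcases le_total (r i) 0 with hr | hr
      · rw [sup_eq_right.2 hr, Nat.ceil_eq_zero.2 hr, Nat.ceil_zero]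
      · rw [sup_eq_left.2 hr]
    simp only [this]
  · intro a b
    have := h.ent_submod μ (fun i => ⌈a i⌉₊) (fun i => ⌈b i⌉₊)
    have e1 : (fun i => ⌈(a ⊔ b) i⌉₊) = (fun i => ⌈a i⌉₊) ⊔ (fun i => ⌈b i⌉₊) := by
      ext i; exact Nat.ceil_mono.map_sup _ _
    have e2 : (fun i => ⌈(a ⊓ b) i⌉₊) = (fun i => ⌈a i⌉₊) ⊓ (fun i => ⌈b i⌉₊) := by
      ext i; exact Nat.ceil_mono.map_inf _ _
    simp only [e1, e2]
    exact this
  · intro t a b ha hb hab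
    set v : Fin d → ℤ := fun k => ⌊t k⌋ with hv
    have hcnt := hC1 v (fun i => ⌈a i⌉₊) (fun i => ⌈b i⌉₊) (fun i => by
      rw [h.norm_χ i v, ← Real.rpow_natCast, ← Real.rpow_natCast, ← Real.rpow_natCast, ← Real.rpow_add (by norm_num),
        ← Real.rpow_add (by norm_num)]
      apply Real.rpow_le_rpow_of_exponent_le (by norm_num)
      have h1 := (abs_le.1 (hround t i)).1
      have h2 := hab i
      simp only [Pi.add_apply] at h2
      have h3 := (Nat.ceil_lt_add_one (ha i)).le
      have h4 := Nat.le_ceil (b i)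
      have h5 := Nat.le_ceil c1
      push_cast
      simp only [hv]
      linarith)
    have hT := (continuous_toral (α v)).measurable
    have hgood := (h.good (fun i => ⌈a i⌉₊)).comp hT
    have := hgood.ent_cond μ (h.good (fun i => ⌈b i⌉₊)) (E := Set.univ) MeasurableSet.univ (ε := 0)
      (by simp) hC11 hC11 (fun y => by rw [Set.univ_inter]; exact hcnt y) hcnt
    rw [(h.good (fun i => ⌈a i⌉₊)).ent_comp μ hT (hinv v)] at this
    have h5 : 0 ≤ 2 * N * (5 * Real.log 2) := by positivity
    simp only [hC]; linarith
  · intro a c hc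
    have hcnt := Eig.count_fine E (k := fun i => ⌈a i⌉₊) (k' := fun i => ⌈a i + c⌉₊) (c := ⌈c⌉₊) (fun i => Nat.ceil_add_le _ _)
    have h1 : 1 ≤ (2 * (2 ^ (⌈c⌉₊ + 1) + 1) + 1) ^ (2 * N) := Nat.one_le_pow _ _ (by omega)
    have := (h.good (fun i => ⌈a i + c⌉₊)).ent_cond μ (h.good (fun i => ⌈a i⌉₊)) (E := Set.univ) MeasurableSet.univ (ε := 0)
      (by simp) h1 h1 (fun y => by rw [Set.univ_inter]; exact hcnt y) hcnt
    have h2 := log_count N ⌈c⌉₊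
    have h3 := (Nat.ceil_lt_add_one hc).le
    have h4 : 2 * N * ((⌈c⌉₊ + 3) * Real.log 2) ≤ 2 * N * ((c + 4) * Real.log 2) := by gcongr 2 * N * (?_ * Real.log 2); linarith
    have h5 : 0 ≤ N * Real.log 2 * c := by positivity
    have h6 : 0 ≤ N * Real.log 2 := by positivity
    have h7 : 0 ≤ Real.log 2 * c := by positivity
    have h8 : 0 ≤ Real.log C1 * c := by positivity
    simp only [hC]
    nlinarith

end GridLib3
end Mod6

section Mod7
open MeasureTheory

section Generic
open scoped Pointwise

theorem gen_avoid {κ : Type*} [Fintype κ] [DecidableEq κ] (β : κ → ℂ) (h0 : ∀ i, β i ≠ 0)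
    (hne : ∀ i j, i ≠ j → ∀ n : ℕ, 0 < n → β i ^ n ≠ β j ^ n) (S : Finset (Submodule ℂ (κ → ℂ)))
    (hS : ∀ V ∈ S, V ≠ ⊤) : ∃ n : ℕ, ∀ V ∈ S, (fun i => β i ^ n) ∉ V := by
  by_contra! hcon
  choose C hC hC2 using hcon
  obtain ⟨a, ha, b, c, hc⟩ := Combinatorics.exists_mono_homothetic_copy (Finset.range (Fintype.card κ))
    (fun n => (⟨C n, hC n⟩ : S))
  apply hS c.1 c.2
  by_contra htop
  obtain ⟨φ, hφ0, hφ⟩ := Submodule.exists_le_ker_of_lt_top c.1 (lt_top_iff_ne_top.2 htop)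
  apply hφ0
  let e := Fintype.equivFin κ
  have hvan := Matrix.eq_zero_of_forall_pow_sum_mul_pow_eq_zero (R := ℂ) (n := Fintype.card κ)
    (f := fun s => β (e.symm s) ^ a)
    (v := fun s => φ (fun j => if e.symm s = j then 1 else 0) * β (e.symm s) ^ b) (fun s t hst => by
      by_contra hst'
      exact hne _ _ (fun h => hst' (e.symm.injective h)) a ha hst) (fun t => by
      have h1 := hc t.1 (Finset.mem_range.2 t.2)
      have h2 := hC2 (a • (t:ℕ) + b)
      have h3 : C (a • (t:ℕ) + b) = c.1 := congrArg Subtype.val h1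
      rw [h3] at h2
      have h4 := hφ h2
      rw [LinearMap.mem_ker, LinearMap.pi_apply_eq_sum_univ] at h4
      refine Eq.trans ?_ h4
      rw [← e.symm.sum_comp]
      refine Finset.sum_congr rfl fun s _ => ?_
      rw [smul_eq_mul, smul_eq_mul, pow_add, pow_mul]; ring)
  ext1 i
  have := congrFun hvan (e i)
  simp only [Equiv.symm_apply_apply, Pi.zero_apply, mul_eq_zero, pow_eq_zero_iff', h0 i, false_and, or_false] at this
  rw [LinearMap.zero_comp]
  ext1
  simp only [LinearMap.coe_comp, LinearMap.coe_single, Function.comp_apply, LinearMap.zero_apply]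
  rw [← this]
  congr 1
  ext j
  simp [Pi.single_apply, eq_comm]

theorem gen_seq {κ : Type*} [Fintype κ] [DecidableEq κ] (β : κ → ℂ) (h0 : ∀ i, β i ≠ 0)
    (hne : ∀ i j, i ≠ j → ∀ n : ℕ, 0 < n → β i ^ n ≠ β j ^ n) (M : ℕ) :
    ∃ n : ℕ → ℕ, ∀ J ⊆ Finset.range M, min J.card (Fintype.card κ) ≤
      Module.finrank ℂ (Submodule.span ℂ ((fun j => (fun i => β i ^ (n j) : κ → ℂ)) '' (J : Set ℕ))) := by
  classical
  induction M with
  | zero => exact ⟨fun _ => 0, fun J hJ => by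
      have : J = ∅ := by simpa using hJ
      simp [this]⟩
  | succ M ih =>
    obtain ⟨n, hn⟩ := ih
    obtain ⟨x, hx⟩ := gen_avoid β h0 hne (((Finset.range M).powerset.image
      (fun J : Finset ℕ => Submodule.span ℂ ((fun j => (fun i => β i ^ (n j) : κ → ℂ)) '' (J : Set ℕ)))).filter (· ≠ ⊤))
      (fun V hV => (Finset.mem_filter.1 hV).2)
    refine ⟨Function.update n M x, fun J hJ => ?_⟩
    have himg : ∀ J' ⊆ Finset.range M, (fun j => (fun i => β i ^ (Function.update n M x j) : κ → ℂ)) '' (J' : Set ℕ)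
        = (fun j => (fun i => β i ^ (n j) : κ → ℂ)) '' (J' : Set ℕ) := by
      intro J' hJ'
      refine Set.image_congr fun j hj => ?_
      have : j ≠ M := by have := Finset.mem_range.1 (hJ' hj); omega
      simp [Function.update_of_ne this]
    by_cases hM : M ∈ J
    · set J' := J.erase M with hJ'
      have hJ'M : J' ⊆ Finset.range M := by
        intro j hj
        have h1 := Finset.mem_range.1 (hJ (Finset.mem_of_mem_erase hj))
        have h2 := Finset.ne_of_mem_erase hj
        exact Finset.mem_range.2 (by omega)
      have hins : J = insert M J' := (Finset.insert_erase hM).symm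
      have hcard : J.card = J'.card + 1 := by rw [hins, Finset.card_insert_of_notMem (by simp [hJ'])]
      set V := Submodule.span ℂ ((fun j => (fun i => β i ^ (n j) : κ → ℂ)) '' (J' : Set ℕ)) with hV
      have h1 := hn J' hJ'M
      have hle : V ≤ Submodule.span ℂ ((fun j => (fun i => β i ^ (Function.update n M x j) : κ → ℂ)) '' (J : Set ℕ)) := by
        rw [hV, ← himg J' hJ'M]
        exact Submodule.span_mono (Set.image_mono (by rw [hins]; simp))
      by_cases hT : V = ⊤
      · rw [hT] at hle
        rw [top_le_iff.1 hle, finrank_top, Module.finrank_fintype_fun_eq_card]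
        exact min_le_right _ _
      · have hxV := hx V (Finset.mem_filter.2 ⟨Finset.mem_image.2 ⟨J', Finset.mem_powerset.2 hJ'M, rfl⟩, hT⟩)
        have hlt : V < Submodule.span ℂ ((fun j => (fun i => β i ^ (Function.update n M x j) : κ → ℂ)) '' (J : Set ℕ)) := by
          refine lt_of_le_of_ne hle fun heq => hxV ?_
          rw [heq]
          exact Submodule.subset_span ⟨M, hM, by simp⟩
        have := Submodule.finrank_lt_finrank_of_lt hlt
        rw [← hV] at h1
        omega
    · have hJM : J ⊆ Finset.range M := by
        intro j hj
        have h1 := Finset.mem_range.1 (hJ hj)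
        have : j ≠ M := fun h => hM (h ▸ hj)
        exact Finset.mem_range.2 (by omega)
      rw [himg J hJM]
      exact hn J hJM


theorem gen_bound {κ : Type*} [Fintype κ] [DecidableEq κ] (r : ℕ → κ → ℂ) (J : Finset ℕ)
    (hJ : Fintype.card κ ≤ Module.finrank ℂ (Submodule.span ℂ (r '' (J : Set ℕ)))) :
    ∃ B : ℝ, 0 ≤ B ∧ ∀ (y : κ → ℂ) (s : ℝ), 0 ≤ s → (∀ j ∈ J, ‖∑ i, r j i * y i‖ ≤ s) → ∀ i, ‖y i‖ ≤ B * s := by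
  let L : (κ → ℂ) →ₗ[ℂ] (J → ℂ) := Matrix.mulVecLin (fun (j : J) i => r j.1 i)
  have hL : ∀ y j, L y j = ∑ i, r j.1 i * y i := fun y j => rfl
  have hker : LinearMap.ker L = ⊥ := by
    rw [LinearMap.ker_eq_bot']
    intro y hy
    let φ : (κ → ℂ) →ₗ[ℂ] ℂ := Fintype.linearCombination ℂ y
    have hφ : ∀ x, φ x = ∑ i, x i * y i := fun x => rfl
    have hspan : Submodule.span ℂ (r '' (J : Set ℕ)) = ⊤ := by
      apply Submodule.eq_top_of_finrank_eq
      rw [Module.finrank_fintype_fun_eq_card]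
      refine le_antisymm ?_ hJ
      have := Submodule.finrank_le (Submodule.span ℂ (r '' (J : Set ℕ)))
      rwa [Module.finrank_fintype_fun_eq_card] at this
    have hle : Submodule.span ℂ (r '' (J : Set ℕ)) ≤ LinearMap.ker φ := by
      rw [Submodule.span_le]
      rintro _ ⟨j, hj, rfl⟩
      have := congrFun hy ⟨j, hj⟩
      rw [hL] at this
      exact this
    rw [hspan] at hle
    ext i
    have := hle (Submodule.mem_top (x := Pi.single i 1))
    rw [LinearMap.mem_ker, hφ] at this
    simpa [Pi.single_apply] using this
  obtain ⟨K, hK, hanti⟩ := L.exists_antilipschitzWith hker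
  refine ⟨K, K.2, fun y s hs hy i => ?_⟩
  have h1 := hanti.le_mul_dist y 0
  rw [map_zero, dist_zero_right, dist_zero_right] at h1
  have h2 : ‖L y‖ ≤ s := (pi_norm_le_iff_of_nonneg hs).2 fun j => by rw [hL]; exact hy j.1 j.2
  exact (norm_le_pi_norm y i).trans (h1.trans (mul_le_mul_of_nonneg_left h2 K.2))

variable {d N : ℕ} {α : (Fin d → ℤ) → Matrix (Fin N) (Fin N) ℤ}
    {E : Matrix (Fin N) (Fin N) ℂ} {χ : Fin N → (Fin d → ℤ) → ℂ}

theorem Eig.exists_a (h : Eig α E χ) : ∃ a : Fin d → ℤ, ∀ i j, i ≠ j → ∀ n : ℕ, 0 < n → χ i a ^ n ≠ χ j a ^ n := by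
  classical
  have hχneg : ∀ i v, χ i (-v) = (χ i v)⁻¹ := fun i v => by
    apply eq_inv_of_mul_eq_one_left; rw [← h.add, neg_add_cancel, h.zero]
  let H : Fin N × Fin N → AddSubgroup (Fin d → ℤ) := fun p =>
    { carrier := {v | ∃ n : ℕ, 0 < n ∧ χ p.1 v ^ n = χ p.2 v ^ n}
      zero_mem' := ⟨1, one_pos, by rw [h.zero, h.zero]⟩
      add_mem' := by
        rintro v w ⟨n, hn, hv⟩ ⟨m, hm, hw⟩
        refine ⟨n * m, Nat.mul_pos hn hm, ?_⟩
        rw [h.add, h.add, mul_pow, mul_pow, pow_mul, hv, mul_comm n m, pow_mul (χ p.1 w), hw, ← pow_mul, ← pow_mul, mul_comm n m]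
      neg_mem' := by
        rintro v ⟨n, hn, hv⟩
        refine ⟨n, hn, ?_⟩
        rw [hχneg, hχneg, inv_pow, inv_pow, hv] }
  have hH : ∀ p v, v ∈ H p ↔ ∃ n : ℕ, 0 < n ∧ χ p.1 v ^ n = χ p.2 v ^ n := fun p v => Iff.rfl
  by_contra! hcon
  have hcov : ⋃ p ∈ (Finset.univ : Finset (Fin N × Fin N)).filter (fun p => p.1 ≠ p.2),
      (0 : Fin d → ℤ) +ᵥ (H p : Set (Fin d → ℤ)) = Set.univ := by
    rw [Set.eq_univ_iff_forall]
    intro a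
    obtain ⟨i, j, hij, n, hn, he⟩ := hcon a
    simp only [Set.mem_iUnion]
    exact ⟨(i, j), by simpa using hij, by rw [zero_vadd]; exact ⟨n, hn, he⟩⟩
  obtain ⟨p, hp, hfin⟩ := AddSubgroup.exists_finiteIndex_of_leftCoset_cover hcov
  have hp' : p.1 ≠ p.2 := by simpa using hp
  have hall : ∀ v, v ∈ H p := by
    intro v
    have := (H p).nsmul_index_mem v
    obtain ⟨n, hn, he⟩ := (hH _ _).1 this
    rw [h.χ_nsmul, h.χ_nsmul, ← pow_mul, ← pow_mul] at he
    exact ⟨_, Nat.mul_pos (Nat.pos_of_ne_zero hfin.index_ne_zero) hn, he⟩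
  choose nn hnn hnn2 using fun v => (hH p v).1 (hall v)
  set n := ∏ k : Fin d, nn (Pi.single k 1) with hn
  have hn0 : 0 < n := Finset.prod_pos fun k _ => hnn _
  obtain ⟨v, hv⟩ := h.sep p.1 p.2 hp' n hn0
  apply hv
  let K : AddSubgroup (Fin d → ℤ) :=
    { carrier := {v | χ p.1 v ^ n = χ p.2 v ^ n}
      zero_mem' := by simp [h.zero]
      add_mem' := by
        intro v w hv hw
        simp only [Set.mem_ofPred_eq] at hv hw ⊢
        rw [h.add, h.add, mul_pow, mul_pow, hv, hw]
      neg_mem' := by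
        intro v hv
        simp only [Set.mem_ofPred_eq] at hv ⊢
        rw [hχneg, hχneg, inv_pow, inv_pow, hv] }
  have hdec : v = ∑ k, v k • (Pi.single k 1 : Fin d → ℤ) := by
    ext i; simp [Finset.sum_apply, Pi.single_apply]
  have hvK : v ∈ K := by
    rw [hdec]
    refine sum_mem fun k _ => zsmul_mem ?_ _
    show _ ^ n = _ ^ n
    obtain ⟨c, hc⟩ := Finset.dvd_prod_of_mem (fun k => nn (Pi.single k 1)) (Finset.mem_univ k)
    rw [← hn] at hc
    rw [hc, pow_mul, pow_mul, hnn2]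
  exact hvK

theorem Eig.generic (h : Eig α E χ) (W : Finset (Fin N)) (M : ℕ) :
    ∃ (g : ℕ → Fin d → ℤ) (B : ℝ), 0 ≤ B ∧ ∀ J ⊆ Finset.range M, W.card ≤ J.card → ∀ (y : Fin N → ℂ) (s : ℝ), 0 ≤ s →
      (∀ j ∈ J, ‖∑ i ∈ W, χ i (g j) * y i‖ ≤ s) → ∀ i ∈ W, ‖y i‖ ≤ B * s := by
  classical
  obtain ⟨a, ha⟩ := h.exists_a
  obtain ⟨n, hn⟩ := gen_seq (κ := W) (fun i => χ i.1 a) (fun i => h.χ_ne _ _)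
    (fun i j hij m hm => ha _ _ (fun he => hij (Subtype.ext he)) m hm) M
  have hex : ∀ J : Finset ℕ, ∃ B : ℝ, 0 ≤ B ∧ (J ⊆ Finset.range M → W.card ≤ J.card → ∀ (y : Fin N → ℂ) (s : ℝ), 0 ≤ s →
      (∀ j ∈ J, ‖∑ i ∈ W, χ i (n j • a) * y i‖ ≤ s) → ∀ i ∈ W, ‖y i‖ ≤ B * s) := by
    intro J
    by_cases hJ : J ⊆ Finset.range M ∧ W.card ≤ J.card
    · have h1 := hn J hJ.1
      rw [Fintype.card_coe, min_eq_right hJ.2, ← Fintype.card_coe W] at h1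
      obtain ⟨B, hB, hB2⟩ := gen_bound _ J h1
      refine ⟨B, hB, fun _ _ y s hs hy i hi => hB2 (fun i => y i.1) s hs (fun j hj => ?_) ⟨i, hi⟩⟩
      have := hy j hj
      simp only [h.χ_nsmul] at this
      rwa [← Finset.sum_coe_sort] at this
    · exact ⟨0, le_rfl, fun h1 h2 => absurd ⟨h1, h2⟩ hJ⟩
  choose B hB hB2 using hex
  refine ⟨fun j => n j • a, ∑ J ∈ (Finset.range M).powerset, B J, Finset.sum_nonneg fun J _ => hB J,
    fun J hJ hc y s hs hy i hi => (hB2 J hJ hc y s hs hy i hi).trans ?_⟩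
  exact mul_le_mul_of_nonneg_right (Finset.single_le_sum (fun J _ => hB J) (Finset.mem_powerset.2 hJ)) hs

end Generic
end Mod7

section Mod8
open MeasureTheory

section Choose
variable {d N : ℕ} {α : (Fin d → ℤ) → Matrix (Fin N) (Fin N) ℤ}
    {E : Matrix (Fin N) (Fin N) ℂ} {χ : Fin N → (Fin d → ℤ) → ℂ}

theorem Eig.exists_big (h : Eig α E χ) (W : Finset (Fin N)) (u : Fin d → ℝ)
    (hu : ∀ i ∈ W, 0 < lamMap χ u i) (S : ℝ) : ∃ g : Fin d → ℤ, ∀ i ∈ W, S ≤ ‖χ i g‖ := by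
  obtain ⟨c, hc, hround⟩ := lam_round χ
  have h1 : ∀ i ∈ W, ∀ᶠ s : ℝ in Filter.atTop, S ≤ (2:ℝ) ^ (s * lamMap χ u i - c) := by
    intro i hi
    have : Filter.Tendsto (fun s : ℝ => (2:ℝ) ^ (s * lamMap χ u i - c)) Filter.atTop Filter.atTop := by
      apply (tendsto_rpow_atTop_of_base_gt_one 2 (by norm_num)).comp
      exact Filter.tendsto_atTop_add_const_right _ _ (Filter.tendsto_id.atTop_mul_const (hu i hi))
    exact this.eventually_ge_atTop S
  obtain ⟨s, hs⟩ := ((Filter.eventually_all_finset W).2 h1).exists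
  refine ⟨fun k => ⌊(s • u) k⌋, fun i hi => (hs i hi).trans ?_⟩
  rw [h.norm_χ]
  apply Real.rpow_le_rpow_of_exponent_le (by norm_num)
  have := (abs_le.1 (hround (s • u) i)).2
  rw [map_smul, Pi.smul_apply, smul_eq_mul] at this
  linarith

theorem Eig.exists_gamma (h : Eig α E χ) (W : Finset (Fin N)) (w : Fin d → ℝ) (hw : w ≠ 0)
    (hW : ∀ i ∈ W, lamMap χ w i = 0) (τ : ℝ) (hτ : 0 < τ) :
    ∃ γ : Fin d → ℤ, γ ≠ 0 ∧ ∀ i ∈ W, ‖χ i γ - 1‖ ≤ τ := by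
  classical
  obtain ⟨c, hc, hround⟩ := lam_round χ
  obtain ⟨k, hk⟩ := Function.ne_iff.1 hw
  obtain ⟨L, hL⟩ := exists_nat_gt (1 / |w k|)
  have hk0 : 0 < |w k| := abs_pos.2 hk
  have hL1 : 1 < L * |w k| := by rwa [div_lt_iff₀ hk0] at hL
  let b : ℕ → Fin d → ℤ := fun n k => ⌊(((n * L : ℕ) : ℝ) • w) k⌋
  have hb : ∀ n, ∀ i ∈ W, (2:ℝ) ^ (-c) ≤ ‖χ i (b n)‖ ∧ ‖χ i (b n)‖ ≤ (2:ℝ) ^ c := by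
    intro n i hi
    have := abs_le.1 (hround (((n * L : ℕ) : ℝ) • w) i)
    rw [map_smul, Pi.smul_apply, hW i hi, smul_zero] at this
    rw [h.norm_χ]
    constructor <;> apply Real.rpow_le_rpow_of_exponent_le (by norm_num) <;> simp only [b] <;> linarith
  let a : ℕ → Fin N → ℂ := fun n i => if i ∈ W then χ i (b n) else 0
  have ha : ∀ n, a n ∈ Metric.closedBall (0 : Fin N → ℂ) ((2:ℝ) ^ c) := by
    intro n
    rw [mem_closedBall_zero_iff, pi_norm_le_iff_of_nonneg (by positivity)]
    intro i
    simp only [a]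
    split_ifs with hi
    · exact (hb n i hi).2
    · simp only [norm_zero]; positivity
  obtain ⟨x, -, φ, hφ, hlim⟩ := tendsto_subseq_of_bounded Metric.isBounded_closedBall ha
  have hcau := hlim.cauchySeq
  rw [Metric.cauchySeq_iff'] at hcau
  obtain ⟨n0, hn0⟩ := hcau (τ * 2 ^ (-c)) (by positivity)
  have hd := hn0 (n0 + 1) (by omega)
  have hlt := hφ (Nat.lt_succ_self n0)
  have hneg : ∀ i v, χ i (-v) = (χ i v)⁻¹ := fun i v => by
    apply eq_inv_of_mul_eq_one_left; rw [← h.add, neg_add_cancel, h.zero]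
  refine ⟨b (φ (n0+1)) - b (φ n0), ?_, fun i hi => ?_⟩
  · intro h0
    have h1 := congrFun (sub_eq_zero.1 h0) k
    have h2 := Int.abs_sub_lt_one_of_floor_eq_floor h1
    simp only [Pi.smul_apply, smul_eq_mul, ← sub_mul, abs_mul] at h2
    have h3 : (φ n0 : ℝ) + 1 ≤ φ (n0+1) := by exact_mod_cast hlt
    have h4 : (L:ℝ) ≤ |((φ (n0+1) * L : ℕ) : ℝ) - ((φ n0 * L : ℕ) : ℝ)| := by
      refine le_trans ?_ (le_abs_self _)
      push_cast
      nlinarith [(Nat.cast_nonneg L : (0:ℝ) ≤ L)]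
    nlinarith
  · have h1 := (dist_le_pi_dist _ _ i).trans hd.le
    simp only [Function.comp_apply, a, if_pos hi, dist_eq_norm] at h1
    have h2 := (hb (φ n0) i hi).1
    rw [sub_eq_add_neg (b (φ (n0+1))), h.add, hneg]
    have hne := h.χ_ne i (b (φ n0))
    have : χ i (b (φ (n0+1))) * (χ i (b (φ n0)))⁻¹ - 1 = (χ i (b (φ (n0+1))) - χ i (b (φ n0))) * (χ i (b (φ n0)))⁻¹ := by
      field_simp
    rw [this, norm_mul, norm_inv, ← div_eq_mul_inv, div_le_iff₀ (norm_pos_iff.2 hne)]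
    exact h1.trans (mul_le_mul_of_nonneg_left h2 hτ.le)

end Choose

section Sieve

/-- The exponential `e(t) = exp(2 π i t)`. -/
noncomputable def ee (t : ℝ) : ℂ := Complex.exp ((2 * Real.pi * t : ℝ) * Complex.I)

theorem norm_ee (t : ℝ) : ‖ee t‖ = 1 := Complex.norm_exp_ofReal_mul_I _

theorem ee_add (s t : ℝ) : ee (s + t) = ee s * ee t := by
  rw [ee, ee, ee, ← Complex.exp_add]; congr 1; push_cast; ring

theorem ee_nat (k : ℕ) (t : ℝ) : ee (k * t) = ee t ^ k := by
  rw [ee, ee, ← Complex.exp_nat_mul]; congr 1; push_cast; ring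

theorem ee_conj (t : ℝ) : (starRingEnd ℂ) (ee t) = ee (-t) := by
  rw [ee, ee, ← Complex.exp_conj]; congr 1; rw [map_mul, Complex.conj_ofReal, Complex.conj_I]; push_cast; ring

theorem ee_lip (s t : ℝ) : ‖ee s - ee t‖ ≤ 2 * Real.pi * |s - t| := by
  have h1 : ee s - ee t = ee t * (ee (s - t) - 1) := by rw [mul_sub, ← ee_add]; simp
  rw [h1, norm_mul, norm_ee, one_mul, ee, mul_comm _ Complex.I]
  refine (Real.norm_exp_I_mul_ofReal_sub_one_le (x := 2 * Real.pi * (s - t))).trans ?_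
  rw [Real.norm_eq_abs, abs_mul, abs_of_pos Real.two_pi_pos]

theorem ee_lower (t : ℝ) (ht : |t| ≤ 1 / 2) : 4 * |t| ≤ ‖ee t - 1‖ := by
  have h1 : ‖ee t - 1‖ = ‖2 * Real.sin (2 * Real.pi * t / 2)‖ := by
    rw [ee, mul_comm _ Complex.I, Complex.norm_exp_I_mul_ofReal_sub_one]
  rw [h1, Real.norm_eq_abs, abs_mul, abs_two]
  have h2 : 2 * Real.pi * t / 2 = Real.pi * t := by ring
  rw [h2]
  have hpi := Real.pi_pos
  have h3 := Real.mul_abs_le_abs_sin (x := Real.pi * t) (by rw [abs_mul, abs_of_pos hpi]; nlinarith)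
  rw [abs_mul, abs_of_pos hpi] at h3
  have h4 : 2 / Real.pi * (Real.pi * |t|) = 2 * |t| := by field_simp
  linarith

theorem geom_bound (K : ℕ) (t : ℝ) (ht : |t| ≤ 1 / 2) (ht0 : t ≠ 0) :
    ‖∑ k ∈ Finset.range K, ee (k * t)‖ ≤ 1 / (2 * |t|) := by
  have hl := ee_lower t ht
  have ha : 0 < |t| := abs_pos.2 ht0
  have hne : ee t ≠ 1 := by
    intro h; rw [h, sub_self, norm_zero] at hl; linarith
  simp only [ee_nat]
  rw [geom_sum_eq hne, norm_div, div_le_div_iff₀ (by linarith) (by positivity)]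
  have : ‖ee t ^ K - 1‖ ≤ 2 := by
    refine (norm_sub_le _ _).trans ?_
    rw [norm_pow, norm_ee]; norm_num
  nlinarith

theorem sieve_card (K : ℕ) (hK : 0 < K) (a : ℕ → ℂ) (ha : ∀ k, ‖a k‖ ≤ 1) (c : ℝ) (hc : 0 < c) (S : Finset ℝ)
    (h1 : ∀ θ ∈ S, |θ| ≤ 1 / 4) (h2 : ∀ θ ∈ S, c * K ≤ ‖∑ k ∈ Finset.range K, a k * ee (k * θ)‖)
    (h3 : ∀ θ ∈ S, ∀ θ' ∈ S, θ ≠ θ' → 1 / (K * c ^ 2) ≤ |θ - θ'|) : (S.card : ℝ) ≤ 2 / c ^ 2 := by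
  have hK0 : (0:ℝ) < K := by exact_mod_cast hK
  choose! u hu hu2 using fun z : ℂ => (show ∃ u : ℂ, ‖u‖ = 1 ∧ u * z = ‖z‖ from by
    by_cases hz : z = 0
    · exact ⟨1, by simp, by simp [hz]⟩
    · have : (‖z‖:ℂ) ≠ 0 := by exact_mod_cast norm_ne_zero_iff.2 hz
      refine ⟨(starRingEnd ℂ) z / ‖z‖, ?_, ?_⟩
      · rw [norm_div, RCLike.norm_conj]; simp [hz]
      · rw [div_mul_eq_mul_div, mul_comm, Complex.mul_conj']; field_simp)
  set P : ℝ → ℂ := fun θ => ∑ k ∈ Finset.range K, a k * ee (k * θ) with hP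
  set v : ℝ → ℂ := fun θ => u (P θ) with hv
  set n : ℝ := (S.card : ℝ) with hn
  set b : ℕ → ℂ := fun k => ∑ θ ∈ S, v θ * ee (k * θ) with hb
  have e1 : n * (c * K) ≤ ∑ k ∈ Finset.range K, ‖b k‖ := by
    calc n * (c * K) = ∑ θ ∈ S, c * K := by rw [Finset.sum_const, nsmul_eq_mul]
      _ ≤ ∑ θ ∈ S, ‖P θ‖ := Finset.sum_le_sum h2
      _ = ‖∑ θ ∈ S, v θ * P θ‖ := by
          simp only [hv, hu2]
          rw [← Complex.ofReal_sum, Complex.norm_real, Real.norm_of_nonneg (Finset.sum_nonneg fun _ _ => norm_nonneg _)]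
      _ = ‖∑ k ∈ Finset.range K, a k * b k‖ := by
          congr 1
          simp only [hP, hb, Finset.mul_sum]
          rw [Finset.sum_comm]
          refine Finset.sum_congr rfl fun _ _ => Finset.sum_congr rfl fun _ _ => by ring
      _ ≤ ∑ k ∈ Finset.range K, ‖b k‖ := by
          refine (norm_sum_le _ _).trans (Finset.sum_le_sum fun k _ => ?_)
          rw [norm_mul]; exact mul_le_of_le_one_left (norm_nonneg _) (ha k)
  have e2 : (∑ k ∈ Finset.range K, ‖b k‖) ^ 2 ≤ K * ∑ k ∈ Finset.range K, ‖b k‖ ^ 2 := by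
    have := sq_sum_le_card_mul_sum_sq (s := Finset.range K) (f := fun k => ‖b k‖)
    simpa using this
  have e3 : ∑ k ∈ Finset.range K, ‖b k‖ ^ 2 ≤ n * K + n ^ 2 * (K * c ^ 2 / 2) := by
    have hbb : ((∑ k ∈ Finset.range K, ‖b k‖ ^ 2 : ℝ) : ℂ) = ∑ θ ∈ S, ∑ θ' ∈ S, v θ * (starRingEnd ℂ) (v θ') * ∑ k ∈ Finset.range K, ee (k * (θ - θ')) := by
      push_cast
      simp only [← Complex.mul_conj', hb, map_sum, Finset.sum_mul_sum, map_mul, ee_conj]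
      rw [Finset.sum_comm]
      refine Finset.sum_congr rfl fun θ _ => ?_
      rw [Finset.sum_comm]
      refine Finset.sum_congr rfl fun θ' _ => ?_
      rw [Finset.mul_sum]
      refine Finset.sum_congr rfl fun k _ => ?_
      have : ee (k * (θ - θ')) = ee (k * θ) * ee (-(k * θ')) := by rw [← ee_add]; congr 1; ring
      rw [this]; ring
    have hnn : 0 ≤ ∑ k ∈ Finset.range K, ‖b k‖ ^ 2 := Finset.sum_nonneg fun _ _ => by positivity
    rw [← Real.norm_of_nonneg hnn, ← Complex.norm_real, hbb]
    calc _ ≤ ∑ θ ∈ S, ∑ θ' ∈ S, ((if θ = θ' then (K:ℝ) else 0) + K * c ^ 2 / 2) := by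
          refine (norm_sum_le _ _).trans (Finset.sum_le_sum fun θ hθ => (norm_sum_le _ _).trans (Finset.sum_le_sum fun θ' hθ' => ?_))
          rw [norm_mul, norm_mul, RCLike.norm_conj, hu, hu, one_mul, one_mul]
          split_ifs with he
          · subst he
            have : 0 ≤ K * c ^ 2 / 2 := by positivity
            have h4 : ‖∑ k ∈ Finset.range K, ee (k * (θ - θ))‖ ≤ K := by
              refine (norm_sum_le _ _).trans ?_
              simp [norm_ee]
            linarith
          · have h4 := abs_le.1 (h1 θ hθ)
            have h5 := abs_le.1 (h1 θ' hθ')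
            have h6 := geom_bound K (θ - θ') (by rw [abs_le]; constructor <;> linarith) (sub_ne_zero.2 he)
            have h7 := h3 θ hθ θ' hθ' he
            rw [zero_add]
            refine h6.trans ?_
            have h8 : 0 < |θ - θ'| := abs_pos.2 (sub_ne_zero.2 he)
            rw [div_le_iff₀ (by positivity)] at h7 ⊢
            nlinarith
      _ = _ := by
          simp only [Finset.sum_add_distrib, Finset.sum_ite_eq, Finset.sum_const, nsmul_eq_mul]
          rw [Finset.sum_congr rfl (g := fun _ => (K:ℝ)) (fun x hx => by simp [hx])]
          simp only [Finset.sum_const, nsmul_eq_mul]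
          ring
  have hn0 : 0 ≤ n := Nat.cast_nonneg _
  have e4 : (n * (c * K)) ^ 2 ≤ K * (n * K + n ^ 2 * (K * c ^ 2 / 2)) := by
    calc _ ≤ (∑ k ∈ Finset.range K, ‖b k‖) ^ 2 := by gcongr
      _ ≤ _ := e2.trans (by gcongr)
  rw [le_div_iff₀ (by positivity)]
  by_contra! hlt
  rcases hn0.eq_or_lt with h0 | h0
  · rw [← h0] at hlt; linarith
  have : 0 < n * K ^ 2 := by positivity
  nlinarith

theorem sieve (K : ℕ) (hK : 0 < K) (a : ℕ → ℂ) (ha : ∀ k, ‖a k‖ ≤ 1) (c : ℝ) (hc : 0 < c) :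
    ∃ z : Fin (⌈2 / c ^ 2⌉₊ + 1) → ℝ, ∀ θ : ℝ, |θ| ≤ 1 / 4 → c * K ≤ ‖∑ k ∈ Finset.range K, a k * ee (k * θ)‖ →
      ∃ s, |θ - z s| ≤ 1 / (K * c ^ 2) := by
  classical
  have hδ : 0 < 1 / (K * c ^ 2) := by have : (0:ℝ) < K := by exact_mod_cast hK
                                      positivity
  set δ := 1 / (K * c ^ 2)
  let good : Finset ℝ → Prop := fun S => (∀ θ ∈ S, |θ| ≤ 1 / 4 ∧ c * K ≤ ‖∑ k ∈ Finset.range K, a k * ee (k * θ)‖) ∧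
    ∀ θ ∈ S, ∀ θ' ∈ S, θ ≠ θ' → δ ≤ |θ - θ'|
  have hcard : ∀ S, good S → S.card ≤ ⌈2 / c ^ 2⌉₊ := fun S hS => by
    have := sieve_card K hK a ha c hc S (fun θ h => (hS.1 θ h).1) (fun θ h => (hS.1 θ h).2) hS.2
    exact_mod_cast this.trans (Nat.le_ceil _)
  have hex : ∃ n, ∃ S, good S ∧ ⌈2 / c ^ 2⌉₊ - S.card = n := ⟨_, ∅, ⟨by simp, by simp⟩, rfl⟩
  obtain ⟨S, hS, hSn⟩ := Nat.find_spec hex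
  have hmax : ∀ S', good S' → S'.card ≤ S.card := by
    intro S' hS'
    have h1 := Nat.find_min' hex ⟨S', hS', rfl⟩
    have h2 := hcard S' hS'
    have h3 := hcard S hS
    omega
  have hSc := hcard S hS
  let e := S.equivFin
  refine ⟨fun s => if hs : s.1 < S.card then (e.symm ⟨s.1, hs⟩).1 else 0, fun θ h1 h2 => ?_⟩
  have : ∃ θ' ∈ S, |θ - θ'| ≤ δ := by
    by_contra! hcon
    have hn : θ ∉ S := fun hθ => by have := hcon θ hθ; simp at this; linarith
    have := hmax (insert θ S) ⟨?_, ?_⟩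
    · rw [Finset.card_insert_of_notMem hn] at this; omega
    · intro x hx
      rcases Finset.mem_insert.1 hx with rfl | hx
      · exact ⟨h1, h2⟩
      · exact hS.1 x hx
    · intro x hx y hy hxy
      rcases Finset.mem_insert.1 hx with rfl | hx'
      · rcases Finset.mem_insert.1 hy with rfl | hy
        · exact absurd rfl hxy
        · exact (hcon y hy).le
      · rcases Finset.mem_insert.1 hy with rfl | hy
        · rw [abs_sub_comm]; exact (hcon x hx').le
        · exact hS.2 x hx' y hy hxy
  obtain ⟨θ', hθ', hd⟩ := this
  refine ⟨⟨(e ⟨θ', hθ'⟩).1, by have := (e ⟨θ', hθ'⟩).2; omega⟩, ?_⟩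
  simpa using hd

end Sieve
end Mod8

section Mod9
open MeasureTheory

section MeanErg
open Filter

theorem toral_mul {N : ℕ} (A B : Matrix (Fin N) (Fin N) ℤ) (x : Fin N → UnitAddCircle) :
    toralMap (A * B) x = toralMap A (toralMap B x) := by
  ext i
  simp only [toralMap, Matrix.mul_apply, Finset.sum_smul, Finset.smul_sum, mul_smul]
  rw [Finset.sum_comm]

theorem toral_one {N : ℕ} (x : Fin N → UnitAddCircle) :
    toralMap (1 : Matrix (Fin N) (Fin N) ℤ) x = x := by
  ext i; simp [toralMap, Matrix.one_apply]

variable {d N : ℕ}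

theorem const_of_inv (α : (Fin d → ℤ) → Matrix (Fin N) (Fin N) ℤ) (hα0 : α 0 = 1)
    (hαadd : ∀ v w, α (v + w) = α v * α w)
    (μ : Measure (Fin N → UnitAddCircle)) [IsProbabilityMeasure μ]
    (herg : ∀ A : Set (Fin N → UnitAddCircle), MeasurableSet A →
      (∀ v, toralMap (α v) ⁻¹' A = A) → μ A = 0 ∨ μ A = 1)
    (g : (Fin N → UnitAddCircle) → ℂ) (hg : Measurable g)
    (hgi : ∀ v, g ∘ toralMap (α v) =ᵐ[μ] g) : ∃ c, g =ᵐ[μ] fun _ => c := by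
  refine exists_eventuallyEq_const_of_forall_separating MeasurableSet fun U hU => ?_
  set A := g ⁻¹' U with hA
  set A' := ⋂ v, toralMap (α v) ⁻¹' A with hA'
  have hm : MeasurableSet A' := MeasurableSet.iInter fun v => (continuous_toral (α v)).measurable (hg hU)
  have hi : ∀ v, toralMap (α v) ⁻¹' A' = A' := by
    intro v
    ext x
    simp only [hA', Set.mem_preimage, Set.mem_iInter, ← toral_mul, ← hαadd]
    exact ⟨fun h w => by simpa using h (w - v), fun h w => h (w + v)⟩
  have hae : ∀ᵐ x ∂μ, x ∈ A' ↔ x ∈ A := by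
    filter_upwards [ae_all_iff.2 hgi] with x hx
    simp only [hA', Set.mem_iInter, hA, Set.mem_preimage]
    exact ⟨fun h => by simpa [hα0, toral_one] using h 0, fun h v => by
      have := hx v; simp only [Function.comp_apply] at this; rwa [this]⟩
  rcases herg A' hm hi with h | h
  · right
    have : ∀ᵐ x ∂μ, x ∉ A' := measure_eq_zero_iff_ae_notMem.1 h
    filter_upwards [hae, this] with x h1 h2 h3
    exact h2 (h1.2 h3)
  · left
    have : ∀ᵐ x ∂μ, x ∈ A' := (mem_ae_iff_prob_eq_one hm).2 h
    filter_upwards [hae, this] with x h1 h2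
    exact h1.1 h2

theorem mean_erg (α : (Fin d → ℤ) → Matrix (Fin N) (Fin N) ℤ) (hα0 : α 0 = 1)
    (hαadd : ∀ v w, α (v + w) = α v * α w)
    (μ : Measure (Fin N → UnitAddCircle)) [IsProbabilityMeasure μ]
    (hinv : ∀ v, Measure.map (toralMap (α v)) μ = μ)
    (herg : ∀ A : Set (Fin N → UnitAddCircle), MeasurableSet A →
      (∀ v, toralMap (α v) ⁻¹' A = A) → μ A = 0 ∨ μ A = 1)
    (f : (Fin N → UnitAddCircle) → ℂ) (hf : MemLp f 2 μ) (δ : ℝ) (hδ : 0 < δ) :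
    ∃ (ι : Type) (_ : Fintype ι) (q : ι → Fin d → ℤ) (p : ι → ℝ), (∀ i, 0 ≤ p i) ∧ ∑ i, p i = 1 ∧
      ∫ x, ‖∑ i, (p i : ℂ) * f (toralMap (α (q i)) x) - ∫ y, f y ∂μ‖ ∂μ ≤ δ := by
  have hmp : ∀ v, MeasurePreserving (toralMap (α v)) μ μ := fun v =>
    ⟨(continuous_toral (α v)).measurable, hinv v⟩
  let U : (Fin d → ℤ) → Lp ℂ 2 μ →ₗᵢ[ℝ] Lp ℂ 2 μ := fun v => Lp.compMeasurePreservingₗᵢ ℝ _ (hmp v)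
  have hU : ∀ v g, (U v g : _ → ℂ) =ᵐ[μ] g ∘ toralMap (α v) := fun v g => Lp.coeFn_compMeasurePreserving g (hmp v)
  let f' : Lp ℂ 2 μ := hf.toLp f
  have hUU : ∀ v w, U v (U w f') = U (w + v) f' := by
    intro v w
    apply Lp.ext
    refine (hU v _).trans (((hmp v).quasiMeasurePreserving.ae_eq_comp (hU w f')).trans ?_)
    refine EventuallyEq.trans ?_ (hU (w + v) f').symm
    refine Eventually.of_forall fun x => ?_
    simp only [Function.comp_apply, ← toral_mul, ← hαadd]
  set S : Set (Lp ℂ 2 μ) := closure (convexHull ℝ (Set.range fun v => U v f')) with hS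
  have hconv : Convex ℝ S := (convex_convexHull ℝ _).closure
  have hne : S.Nonempty := ⟨U 0 f', subset_closure (subset_convexHull ℝ _ ⟨0, rfl⟩)⟩
  have hUS : ∀ v, ∀ g ∈ S, U v g ∈ S := by
    intro v g hg
    have h1 := image_closure_subset_closure_image (U v).continuous ⟨g, hg, rfl⟩
    refine closure_mono ?_ h1
    have h2 := (U v).toLinearMap.image_convexHull (Set.range fun v => U v f')
    refine h2.subset.trans (convexHull_mono ?_)
    rintro _ ⟨_, ⟨w, rfl⟩, rfl⟩
    exact ⟨w + v, (hUU v w).symm⟩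
  obtain ⟨g, hgS, hgmin⟩ := exists_norm_eq_iInf_of_complete_convex hne isClosed_closure.isComplete hconv 0
  have hmin : ∀ g' ∈ S, ‖g‖ ≤ ‖g'‖ := by
    intro g' hg'
    have : ‖0 - g‖ ≤ ‖0 - g'‖ := by
      rw [hgmin]
      exact ciInf_le ⟨0, by rintro _ ⟨w, rfl⟩; exact norm_nonneg _⟩ (⟨g', hg'⟩ : S)
    simpa using this
  have hginv : ∀ v, U v g = g := by
    intro v
    by_contra hcon
    have h1 : ‖U v g‖ = ‖g‖ := (U v).norm_map g
    have h2 := (norm_midpoint_lt_iff h1).2 hcon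
    have h3 := hmin ((1 / 2 : ℝ) • (U v g + g)) (by
      rw [smul_add]; exact hconv (hUS v g hgS) hgS (by norm_num) (by norm_num) (by norm_num))
    linarith
  obtain ⟨c, hc⟩ := const_of_inv α hα0 hαadd μ herg g (Lp.stronglyMeasurable g).measurable
    (fun v => (hU v g).symm.trans (by rw [hginv v]))
  have hcint : ∀ g' ∈ S, ∫ x, g' x ∂μ = ∫ y, f y ∂μ := by
    have hcl : IsClosed {g' : Lp ℂ 2 μ | ∫ x, g' x ∂μ = ∫ y, f y ∂μ} := by
      have : ∀ g' : Lp ℂ 2 μ, ∫ x, g' x ∂μ = inner ℂ (indicatorConstLp 2 MeasurableSet.univ (measure_ne_top μ _) (1:ℂ)) g' := by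
        intro g'; rw [L2.inner_indicatorConstLp_one, setIntegral_univ]
      simp only [this]
      exact isClosed_eq (by fun_prop) continuous_const
    have hcv : Convex ℝ {g' : Lp ℂ 2 μ | ∫ x, g' x ∂μ = ∫ y, f y ∂μ} := by
      intro a ha b hb s t hs ht hst
      have hai := (Lp.memLp a).integrable (by norm_num)
      have hbi := (Lp.memLp b).integrable (by norm_num)
      show ∫ x, (s • a + t • b : Lp ℂ 2 μ) x ∂μ = _
      have : (s • a + t • b : Lp ℂ 2 μ) =ᵐ[μ] fun x => s • a x + t • b x := by
        filter_upwards [Lp.coeFn_add (s • a) (t • b), Lp.coeFn_smul s a, Lp.coeFn_smul t b] with x h1 h2 h3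
        rw [h1, Pi.add_apply, h2, h3]; rfl
      have h9 : ∫ x, (s • a x + t • b x) ∂μ = _ := integral_add (hai.smul s) (hbi.smul t)
      rw [integral_congr_ae this, h9]
      erw [integral_smul, integral_smul, ha, hb, ← add_smul, hst, one_smul]
    intro g' hg'
    refine closure_minimal (convexHull_min ?_ hcv) hcl hg'
    rintro _ ⟨v, rfl⟩
    show ∫ x, (U v f') x ∂μ = _
    rw [integral_congr_ae (hU v f')]
    have h1 : ∫ x, (f' ∘ toralMap (α v)) x ∂μ = ∫ y, f' y ∂(Measure.map (toralMap (α v)) μ) := by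
      rw [integral_map (hmp v).aemeasurable]
      · rfl
      · rw [hinv v]; exact (Lp.stronglyMeasurable f').aestronglyMeasurable
    rw [h1, hinv v]
    exact integral_congr_ae hf.coeFn_toLp
  have hc2 : c = ∫ y, f y ∂μ := by
    rw [← hcint g hgS, integral_congr_ae hc]; simp
  obtain ⟨g', hg', hd⟩ := Metric.mem_closure_iff.1 hgS δ hδ
  obtain ⟨ι, _, p, z, hp0, hp1, hz, hsum⟩ := mem_convexHull_iff_exists_fintype.1 hg'
  choose q hq using hz
  refine ⟨ι, inferInstance, q, p, hp0, hp1, ?_⟩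
  have hae : (fun x => ∑ i, (p i : ℂ) * f (toralMap (α (q i)) x) - ∫ y, f y ∂μ) =ᵐ[μ] (g' - g : Lp ℂ 2 μ) := by
    have h1 : ∀ i, (U (q i) f' : _ → ℂ) =ᵐ[μ] f ∘ toralMap (α (q i)) := fun i =>
      (hU _ _).trans ((hmp _).quasiMeasurePreserving.ae_eq_comp hf.coeFn_toLp)
    have h2 : ∀ i, (p i • U (q i) f' : Lp ℂ 2 μ) =ᵐ[μ] p i • (U (q i) f' : _ → ℂ) := fun i => Lp.coeFn_smul _ _
    have h3 : (g' : _ → ℂ) =ᵐ[μ] ∑ i, ((p i • U (q i) f' : Lp ℂ 2 μ) : _ → ℂ) := by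
      rw [← hsum]
      simp only [← hq]
      exact Lp.coeFn_finsetSum _ _
    filter_upwards [ae_all_iff.2 h1, ae_all_iff.2 h2, h3, Lp.coeFn_sub g' g, hc] with x h1 h2 h3 h4 h5
    rw [h4, Pi.sub_apply, h3, h5, hc2, Finset.sum_apply]
    congr 1
    refine Finset.sum_congr rfl fun i _ => ?_
    rw [h2, Pi.smul_apply, h1]; simp
  refine le_of_eq_of_le (integral_congr_ae (hae.fun_comp norm)) ?_
  have h1 := Lp.memLp (g' - g)
  have h2 : ∫ x, ‖(g' - g : Lp ℂ 2 μ) x‖ ∂μ = (eLpNorm (g' - g : Lp ℂ 2 μ) 1 μ).toReal := by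
    rw [integral_norm_eq_lintegral_enorm h1.1, eLpNorm_one_eq_lintegral_enorm]
  show ∫ x, ‖(g' - g : Lp ℂ 2 μ) x‖ ∂μ ≤ δ
  rw [h2]
  have h3 := ENNReal.toReal_mono h1.eLpNorm_ne_top (eLpNorm_le_eLpNorm_of_exponent_le (p := 1) (q := 2) (by norm_num) h1.1)
  rw [dist_comm, dist_eq_norm] at hd
  exact h3.trans hd.le

end MeanErg
end Mod9

section Mod10
open MeasureTheory

section Phase
variable {d N : ℕ} {α : (Fin d → ℤ) → Matrix (Fin N) (Fin N) ℤ}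
    {E : Matrix (Fin N) (Fin N) ℂ} {χ : Fin N → (Fin d → ℤ) → ℂ}

noncomputable def ph (ξ : Fin N → ℤ) (A : Matrix (Fin N) (Fin N) ℤ) (y : Fin N → ℝ) : ℝ :=
  ∑ j, (ξ j : ℝ) * act A y j

noncomputable def fch (ξ : Fin N → ℤ) (x : Fin N → UnitAddCircle) : ℂ := ee (∑ j, (ξ j : ℝ) * tlift x j)

theorem norm_fch (ξ : Fin N → ℤ) (x : Fin N → UnitAddCircle) : ‖fch ξ x‖ = 1 := norm_ee _

theorem ee_int (n : ℤ) : ee n = 1 := by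
  rw [ee, Complex.exp_eq_one_iff]; exact ⟨n, by push_cast; ring⟩

theorem continuous_ee : Continuous ee := by unfold ee; fun_prop

theorem measurable_fch (ξ : Fin N → ℤ) : Measurable (fch ξ) := by
  refine continuous_ee.measurable.comp ?_
  exact Finset.measurable_sum _ fun j _ => measurable_const.mul ((measurable_pi_apply j).comp measurable_tlift)

theorem fch_toral (ξ : Fin N → ℤ) (A : Matrix (Fin N) (Fin N) ℤ) (x : Fin N → UnitAddCircle) :
    fch ξ (toralMap A x) = ee (ph ξ A (tlift x)) := by
  obtain ⟨z, hz⟩ := tlift_toral A x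
  have : ∑ j, (ξ j : ℝ) * tlift (toralMap A x) j = ph ξ A (tlift x) + ((∑ j, ξ j * z j : ℤ) : ℝ) := by
    rw [hz, ph]; push_cast; rw [← Finset.sum_add_distrib]
    refine Finset.sum_congr rfl fun j _ => ?_
    simp only [Pi.add_apply]; ring
  rw [fch, this, ee_add, ee_int, mul_one]

theorem ph_sub (ξ : Fin N → ℤ) (A : Matrix (Fin N) (Fin N) ℤ) (y y' : Fin N → ℝ) :
    ph ξ A (y - y') = ph ξ A y - ph ξ A y' := by
  simp only [ph, act_sub, ← Finset.sum_sub_distrib, Pi.sub_apply, mul_sub]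

theorem fch_diff (ξ : Fin N → ℤ) (A : Matrix (Fin N) (Fin N) ℤ) (x x0 : Fin N → UnitAddCircle) :
    fch ξ (toralMap A x) = fch ξ (toralMap A x0) * ee (ph ξ A (tlift x - tlift x0)) := by
  rw [fch_toral, fch_toral, ← ee_add, ph_sub]; congr 1; ring

/-- the coefficients of the frequency in eigencoordinates -/
noncomputable def eta (E : Matrix (Fin N) (Fin N) ℂ) (ξ : Fin N → ℤ) (i : Fin N) : ℂ := ∑ j, (ξ j : ℂ) * E j i

theorem Eig.ph_eq (h : Eig α E χ) (ξ : Fin N → ℤ) (b : Fin d → ℤ) (y : Fin N → ℝ) :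
    (ph ξ (α b) y : ℂ) = ∑ i, eta E ξ i * χ i b * el E y i := by
  rw [ph, h.pair]
  refine Finset.sum_congr rfl fun i _ => ?_
  rw [h.el_act, eta]; ring

theorem Eig.ph_diff (h : Eig α E χ) (ξ : Fin N → ℤ) (b γ : Fin d → ℤ) (y : Fin N → ℝ) :
    ((ph ξ (α (b + γ)) y - ph ξ (α b) y : ℝ) : ℂ) = ∑ i, eta E ξ i * χ i b * (χ i γ - 1) * el E y i := by
  rw [Complex.ofReal_sub, h.ph_eq, h.ph_eq, ← Finset.sum_sub_distrib]
  refine Finset.sum_congr rfl fun i _ => ?_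
  rw [h.add]; ring

theorem Eig.ph_lin (h : Eig α E χ) (ξ : Fin N → ℤ) (b γ : Fin d → ℤ) (y : Fin N → ℝ) (k : ℕ) :
    |ph ξ (α (b + k • γ)) y - ph ξ (α b) y - k * (ph ξ (α (b + γ)) y - ph ξ (α b) y)| ≤
      ∑ i, ‖eta E ξ i * χ i b‖ * ‖el E y i‖ * ‖χ i γ ^ k - 1 - k * (χ i γ - 1)‖ := by
  rw [← Real.norm_eq_abs, ← Complex.norm_real, Complex.ofReal_sub, h.ph_diff, Complex.ofReal_mul, h.ph_diff,
    Finset.mul_sum, ← Finset.sum_sub_distrib]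
  refine (norm_sum_le _ _).trans (Finset.sum_le_sum fun i _ => ?_)
  rw [← norm_mul, ← norm_mul, h.χ_nsmul]
  refine le_of_eq (congrArg _ ?_)
  push_cast; ring

theorem Eig.sum_lin (h : Eig α E χ) (ξ : Fin N → ℤ) (b γ : Fin d → ℤ) (x x0 : Fin N → UnitAddCircle) (K : ℕ) (e : ℝ)
    (he : ∀ k < K, ∑ i, ‖eta E ξ i * χ i b‖ * ‖el E (tlift x - tlift x0) i‖ * ‖χ i γ ^ k - 1 - k * (χ i γ - 1)‖ ≤ e) :
    ‖∑ k ∈ Finset.range K, fch ξ (toralMap (α (b + k • γ)) x)‖ ≤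
      ‖∑ k ∈ Finset.range K, fch ξ (toralMap (α (b + k • γ)) x0) *
        ee (k * (ph ξ (α (b + γ)) (tlift x - tlift x0) - ph ξ (α b) (tlift x - tlift x0)))‖ + K * (2 * Real.pi * e) := by
  set y := tlift x - tlift x0 with hy
  set θ := ph ξ (α (b + γ)) y - ph ξ (α b) y with hθ
  have e1 : ∑ k ∈ Finset.range K, fch ξ (toralMap (α (b + k • γ)) x) =
      ee (ph ξ (α b) y) * (∑ k ∈ Finset.range K, fch ξ (toralMap (α (b + k • γ)) x0) * ee (k * θ) +
        ∑ k ∈ Finset.range K, fch ξ (toralMap (α (b + k • γ)) x0) *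
          (ee (ph ξ (α (b + k • γ)) y - ph ξ (α b) y) - ee (k * θ))) := by
    rw [← Finset.sum_add_distrib, Finset.mul_sum]
    refine Finset.sum_congr rfl fun k _ => ?_
    rw [fch_diff ξ _ x x0, ← hy]
    have : ee (ph ξ (α (b + k • γ)) y) = ee (ph ξ (α b) y) * ee (ph ξ (α (b + k • γ)) y - ph ξ (α b) y) := by
      rw [← ee_add]; congr 1; ring
    rw [this]; ring
  rw [e1, norm_mul, norm_ee, one_mul]
  refine (norm_add_le _ _).trans (add_le_add le_rfl ?_)
  refine (norm_sum_le _ _).trans ?_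
  calc _ ≤ ∑ k ∈ Finset.range K, (2 * Real.pi * e) := by
        refine Finset.sum_le_sum fun k hk => ?_
        rw [norm_mul, norm_fch, one_mul]
        refine (ee_lip _ _).trans ?_
        have := (h.ph_lin ξ b γ y k).trans (he k (Finset.mem_range.1 hk))
        have hpi := Real.pi_pos
        gcongr
    _ = _ := by rw [Finset.sum_const, Finset.card_range, nsmul_eq_mul]

theorem pow_taylor (z : ℂ) (hz : ‖z - 1‖ ≤ 1) (k : ℕ) : ‖z ^ k - 1 - k * (z - 1)‖ ≤ 4 ^ k * ‖z - 1‖ ^ 2 := by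
  induction k with
  | zero => simp
  | succ k ih =>
    have h1 : z ^ (k + 1) - 1 - ((k + 1 : ℕ) : ℂ) * (z - 1) = (z ^ k - 1 - k * (z - 1)) * z + k * (z - 1) ^ 2 := by
      push_cast; ring
    have hz2 : ‖z‖ ≤ 2 := by
      have := norm_add_le (z - 1) 1
      simp at this; linarith
    have hk : (k : ℝ) ≤ 4 ^ k := by
      exact_mod_cast (Nat.lt_pow_self (by norm_num : 1 < 4)).le
    rw [h1]
    refine (norm_add_le _ _).trans ?_
    rw [norm_mul, norm_mul, norm_pow, Complex.norm_natCast]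
    calc _ ≤ 4 ^ k * ‖z - 1‖ ^ 2 * 2 + 4 ^ k * ‖z - 1‖ ^ 2 := by gcongr
      _ ≤ _ := by
        have : 0 ≤ (4:ℝ) ^ k * ‖z - 1‖ ^ 2 := by positivity
        rw [pow_succ (4:ℝ)]; linarith

end Phase
end Mod10

section Mod11
open MeasureTheory

section Det
variable {d N : ℕ} {α : (Fin d → ℤ) → Matrix (Fin N) (Fin N) ℤ}
    {E : Matrix (Fin N) (Fin N) ℂ} {χ : Fin N → (Fin d → ℤ) → ℂ}

theorem Eig.params (h : Eig α E χ) (ξ : Fin N → ℤ) (W : Finset (Fin N)) (w u : Fin d → ℝ) (hw : w ≠ 0)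
    (hW : ∀ i ∈ W, lamMap χ w i = 0) (hu : ∀ i ∈ W, 0 < lamMap χ u i) {β : Type*} [Fintype β]
    (b : β → Fin d → ℤ) : ∃ A : ℝ, 0 < A ∧ ∀ (K : ℕ) (τ ρ : ℝ), 0 < τ → 0 < ρ →
      ∃ (k0 : Fin N → ℕ) (γ g : Fin d → ℤ), γ ≠ 0 ∧ (∀ i ∈ W, ‖χ i γ - 1‖ ≤ τ) ∧
        (∀ i ∈ W, (2:ℝ) ^ (k0 i) ≤ A * ‖χ i g * (χ i γ - 1)‖) ∧
        ∀ Δ : Fin N → ℂ, (∀ i, ‖Δ i‖ ≤ 2 / 2 ^ (k0 i)) → ∀ s : β,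
          (∑ i ∈ W, ‖eta E ξ i * χ i (b s + g)‖ * ‖χ i γ - 1‖ * ‖Δ i‖ ≤ 1 / 8) ∧
          (∑ i ∈ Wᶜ, ‖eta E ξ i * χ i (b s + g)‖ * ‖χ i γ - 1‖ * ‖Δ i‖ ≤ ρ) ∧
          ∀ k < K, ∑ i ∈ Wᶜ, ‖eta E ξ i * χ i (b s + g)‖ * ‖Δ i‖ * ‖χ i γ ^ k - 1 - k * (χ i γ - 1)‖ ≤ ρ := by
  set H : ℝ := ∑ s, ∑ i, ‖eta E ξ i * χ i (b s)‖ with hH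
  have hH0 : 0 ≤ H := Finset.sum_nonneg fun _ _ => Finset.sum_nonneg fun _ _ => norm_nonneg _
  obtain ⟨a0, ha0⟩ := pow_unbounded_of_one_lt (16 * H) (one_lt_two : (1:ℝ) < 2)
  refine ⟨2 * 2 ^ a0, by positivity, fun K τ ρ hτ hρ => ?_⟩
  obtain ⟨γ, hγ, hγτ⟩ := h.exists_gamma W w hw hW τ hτ
  have hz : ∀ i, χ i γ - 1 ≠ 0 := fun i => sub_ne_zero.2 (h.ne1 i γ hγ)
  obtain ⟨g, hg⟩ := h.exists_big W u hu (∑ i, ‖χ i γ - 1‖⁻¹)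
  have hD : ∀ i ∈ W, 1 ≤ ‖χ i g * (χ i γ - 1)‖ := by
    intro i hi
    have h1 : ‖χ i γ - 1‖⁻¹ ≤ ‖χ i g‖ :=
      (Finset.single_le_sum (f := fun i => ‖χ i γ - 1‖⁻¹) (fun j _ => by positivity) (Finset.mem_univ i)).trans (hg i hi)
    have h2 : 0 < ‖χ i γ - 1‖ := norm_pos_iff.2 (hz i)
    rw [norm_mul]
    calc (1:ℝ) = ‖χ i γ - 1‖⁻¹ * ‖χ i γ - 1‖ := by field_simp
      _ ≤ _ := by gcongr
  have hk : ∀ i ∈ W, ∃ n : ℕ, 2 ^ a0 * ‖χ i g * (χ i γ - 1)‖ ≤ (2:ℝ) ^ n ∧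
      (2:ℝ) ^ n ≤ 2 * 2 ^ a0 * ‖χ i g * (χ i γ - 1)‖ := by
    intro i hi
    have h1 : (1:ℝ) ≤ 2 ^ a0 * ‖χ i g * (χ i γ - 1)‖ :=
      one_le_mul_of_one_le_of_one_le (one_le_pow₀ one_le_two) (hD i hi)
    obtain ⟨n, hn1, hn2⟩ := exists_nat_pow_near h1 (one_lt_two : (1:ℝ) < 2)
    refine ⟨n + 1, hn2.le, ?_⟩
    rw [pow_succ]; linarith
  choose! kW hkW1 hkW2 using hk
  set R : ℝ := ∑ s, ∑ i, ‖eta E ξ i * χ i (b s + g)‖ *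
    (‖χ i γ - 1‖ + ∑ k ∈ Finset.range K, ‖χ i γ ^ k - 1 - k * (χ i γ - 1)‖) with hR
  obtain ⟨k1, hk1⟩ := pow_unbounded_of_one_lt (2 * R / ρ) (one_lt_two : (1:ℝ) < 2)
  have hR1 : R * (2 / 2 ^ k1) ≤ ρ := by
    rw [div_lt_iff₀ hρ] at hk1
    rw [← mul_div_assoc, div_le_iff₀ (by positivity)]
    linarith
  classical
  refine ⟨fun i => if i ∈ W then kW i else k1, γ, g, hγ, hγτ, ?_, ?_⟩
  · intro i hi
    simp only [if_pos hi]; exact hkW2 i hi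
  intro Δ hΔ s
  have hoff : ∀ φ : Fin N → ℝ, (∀ i, 0 ≤ φ i) → (∀ i, φ i ≤ ‖χ i γ - 1‖ + ∑ k ∈ Finset.range K, ‖χ i γ ^ k - 1 - k * (χ i γ - 1)‖) →
      ∑ i ∈ Wᶜ, ‖eta E ξ i * χ i (b s + g)‖ * ‖Δ i‖ * φ i ≤ ρ := by
    intro φ hφ0 hφ
    refine le_trans ?_ hR1
    calc _ ≤ ∑ i ∈ Wᶜ, ‖eta E ξ i * χ i (b s + g)‖ * (‖χ i γ - 1‖ + ∑ k ∈ Finset.range K, ‖χ i γ ^ k - 1 - k * (χ i γ - 1)‖) * (2 / 2 ^ k1) := by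
          refine Finset.sum_le_sum fun i hi => ?_
          have h1 := hΔ i
          beta_reduce at h1
          rw [if_neg (Finset.mem_compl.1 hi)] at h1
          rw [mul_right_comm]
          have h2 := hφ i
          have h3 := hφ0 i
          gcongr
      _ = (∑ i ∈ Wᶜ, ‖eta E ξ i * χ i (b s + g)‖ * (‖χ i γ - 1‖ + ∑ k ∈ Finset.range K, ‖χ i γ ^ k - 1 - k * (χ i γ - 1)‖)) * (2 / 2 ^ k1) := by
          rw [Finset.sum_mul]
      _ ≤ R * (2 / 2 ^ k1) := by
          gcongr
          refine le_trans (Finset.sum_le_sum_of_subset_of_nonneg (Finset.subset_univ _) fun i _ _ => by positivity) ?_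
          exact Finset.single_le_sum (f := fun s => ∑ i, ‖eta E ξ i * χ i (b s + g)‖ *
            (‖χ i γ - 1‖ + ∑ k ∈ Finset.range K, ‖χ i γ ^ k - 1 - k * (χ i γ - 1)‖))
            (fun t _ => by positivity) (Finset.mem_univ s)
  refine ⟨?_, ?_, ?_⟩
  · have h16 : H * (2 / 2 ^ a0) ≤ 1 / 8 := by
      rw [← mul_div_assoc, div_le_iff₀ (by positivity)]; linarith
    refine le_trans ?_ h16
    calc _ ≤ ∑ i ∈ W, ‖eta E ξ i * χ i (b s)‖ * (2 / 2 ^ a0) := by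
          refine Finset.sum_le_sum fun i hi => ?_
          have h1 := hΔ i
          beta_reduce at h1
          rw [if_pos hi] at h1
          have h2 := hkW1 i hi
          have h3 := hD i hi
          have h4 : ‖Δ i‖ ≤ 2 / (2 ^ a0 * ‖χ i g * (χ i γ - 1)‖) := h1.trans (by gcongr)
          rw [h.add, ← mul_assoc, norm_mul (_ * _) (χ i g), mul_assoc (‖_‖ * _), mul_assoc ‖_‖ ‖_‖ (_ * _)]
          refine mul_le_mul_of_nonneg_left ?_ (norm_nonneg _)
          rw [← mul_assoc, ← norm_mul]
          calc _ ≤ ‖χ i g * (χ i γ - 1)‖ * (2 / (2 ^ a0 * ‖χ i g * (χ i γ - 1)‖)) := by gcongr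
            _ = _ := by field_simp
      _ = (∑ i ∈ W, ‖eta E ξ i * χ i (b s)‖) * (2 / 2 ^ a0) := by rw [Finset.sum_mul]
      _ ≤ _ := by
          gcongr
          refine le_trans (Finset.sum_le_sum_of_subset_of_nonneg (Finset.subset_univ _) fun i _ _ => by positivity) ?_
          exact Finset.single_le_sum (f := fun s => ∑ i, ‖eta E ξ i * χ i (b s)‖)
            (fun t _ => by positivity) (Finset.mem_univ s)
  · have := hoff (fun i => ‖χ i γ - 1‖) (fun i => norm_nonneg _) (fun i => le_add_of_nonneg_right (by positivity))
    simpa only [mul_right_comm] using this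
  · intro k hk
    refine hoff (fun i => ‖χ i γ ^ k - 1 - k * (χ i γ - 1)‖) (fun i => norm_nonneg _) (fun i => ?_)
    have := Finset.single_le_sum (f := fun k : ℕ => ‖χ i γ ^ k - 1 - k * (χ i γ - 1)‖) (fun _ _ => norm_nonneg _) (Finset.mem_range.2 hk)
    exact this.trans (le_add_of_nonneg_left (norm_nonneg _))

/-- pigeonhole: large averages force many large terms; same index gives close angles -/
theorem comb_idx {X ι : Type*} (S : Set X) (M n K : ℕ) (hK : 0 < K) (c δ : ℝ) (hc : 0 < c) (T θ : ι → ℕ → X → ℝ)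
    (hT : ∀ i j x, T i j x ≤ K)
    (hz : ∀ i, ∀ j < M, ∃ z : Fin (n + 1) → ℝ, ∀ x ∈ S, c / 4 * K ≤ T i j x → ∃ s, |θ i j x - z s| ≤ δ)
    (hS : ∀ x ∈ S, ∃ i, c / 2 * M * K ≤ ∑ j ∈ Finset.range M, T i j x) :
    ∃ idx : S → ι × Finset (Fin M) × (Fin M → Fin (n + 1)), ∀ x x' : S, idx x = idx x' →
      ∃ i, ∃ J ⊆ Finset.range M, c / 4 * M ≤ J.card ∧ ∀ j ∈ J, |θ i j x - θ i j x'| ≤ 2 * δ := by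
  classical
  choose! z hz using hz
  have hS' : ∀ x : S, ∃ i, c / 2 * M * K ≤ ∑ j ∈ Finset.range M, T i j x := fun x => hS x x.2
  choose i hi using hS'
  have hs : ∀ x : S, ∀ j : Fin M, ∃ s, c / 4 * K ≤ T (i x) j x → |θ (i x) j x - z (i x) j s| ≤ δ := by
    intro x j
    by_cases hh : c / 4 * K ≤ T (i x) j x
    · obtain ⟨s, hs⟩ := hz (i x) j j.2 x x.2 hh
      exact ⟨s, fun _ => hs⟩
    · exact ⟨0, fun h => absurd h hh⟩
  choose s hs using hs
  refine ⟨fun x => (i x, Finset.univ.filter (fun j : Fin M => c / 4 * K ≤ T (i x) j x), s x), ?_⟩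
  intro x x' hxx
  simp only [Prod.mk.injEq] at hxx
  obtain ⟨e1, e2, e3⟩ := hxx
  refine ⟨i x, (Finset.univ.filter (fun j : Fin M => c / 4 * K ≤ T (i x) j x)).map Fin.valEmbedding, ?_, ?_, ?_⟩
  · intro j hj
    simp only [Finset.mem_map, Fin.valEmbedding_apply] at hj
    obtain ⟨a, _, rfl⟩ := hj
    exact Finset.mem_range.2 a.2
  · rw [Finset.card_map]
    have h1 := hi x
    rw [Finset.sum_range] at h1
    rw [← Finset.sum_filter_add_sum_filter_not Finset.univ (fun j : Fin M => c / 4 * K ≤ T (i x) j x)] at h1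
    have h2 : ∑ j ∈ Finset.univ.filter (fun j : Fin M => c / 4 * K ≤ T (i x) j x), T (i x) j x ≤
        (Finset.univ.filter (fun j : Fin M => c / 4 * K ≤ T (i x) j x)).card * (K:ℝ) := by
      rw [← nsmul_eq_mul]; exact Finset.sum_le_card_nsmul _ _ _ fun j _ => hT _ _ _
    have h3 : ∑ j ∈ Finset.univ.filter (fun j : Fin M => ¬ c / 4 * K ≤ T (i x) j x), T (i x) j x ≤
        M * (c / 4 * K) := by
      refine (Finset.sum_le_card_nsmul _ _ (c / 4 * K) fun j hj => ?_).trans ?_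
      · exact (not_le.1 (Finset.mem_filter.1 hj).2).le
      · rw [nsmul_eq_mul]
        have : ((Finset.univ.filter (fun j : Fin M => ¬ c / 4 * K ≤ T (i x) j x)).card : ℝ) ≤ M := by
          exact_mod_cast (Finset.card_le_univ _).trans (by simp)
        gcongr
    have hK0 : (0:ℝ) < K := by exact_mod_cast hK
    refine le_of_mul_le_mul_right ?_ hK0
    linarith
  · intro j hj
    simp only [Finset.mem_map, Fin.valEmbedding_apply] at hj
    obtain ⟨a, ha, rfl⟩ := hj
    have ha' := ha
    rw [e2] at ha'
    have h1 := hs x a (Finset.mem_filter.1 ha).2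
    have h2 := hs x' a (Finset.mem_filter.1 ha').2
    rw [← e1, ← e3] at h2
    rw [abs_le] at *
    constructor <;> linarith [h1.1, h1.2, h2.1, h2.2]

theorem ncard_idx (E : Matrix (Fin N) (Fin N) ℂ) (k : Fin N → ℕ) (S : Set (Fin N → UnitAddCircle)) {β : Type*} [Fintype β]
    (idx : S → β) (B : ℕ) (H : ∀ x x' : S, idx x = idx x' → ∀ i, ‖el E (tlift x) i - el E (tlift x') i‖ * 2 ^ (k i) ≤ B) :
    (YY E k '' S).ncard ≤ Fintype.card β * (2 * (B + 1) + 1) ^ (2 * N) := by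
  classical
  rcases S.eq_empty_or_nonempty with rfl | ⟨x0, hx0⟩
  · simp
  have : Nonempty S := ⟨⟨x0, hx0⟩⟩
  refine ncard_le_cover _ Finset.univ (fun b => fun i => gr (k i) (el E (tlift (Function.invFun idx b : S)) i)) ?_
  rintro _ ⟨x, hx, rfl⟩
  refine ⟨idx ⟨x, hx⟩, Finset.mem_univ _, YY_near E k x _ ?_⟩
  exact H ⟨x, hx⟩ _ (Function.invFun_eq (f := idx) (b := idx ⟨x, hx⟩) ⟨⟨x, hx⟩, rfl⟩).symm

end Det
end Mod11

section Mod12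
open MeasureTheory

section Det2
variable {d N : ℕ} {α : (Fin d → ℤ) → Matrix (Fin N) (Fin N) ℤ}
    {E : Matrix (Fin N) (Fin N) ℂ} {χ : Fin N → (Fin d → ℤ) → ℂ}

theorem Eig.sieve_pt (h : Eig α E χ) (ξ : Fin N → ℤ) (W : Finset (Fin N)) (b γ : Fin d → ℤ) (x0 : Fin N → UnitAddCircle)
    (K : ℕ) (hK : 0 < K) (c ρ : ℝ) (hc : 0 < c) (hρ1 : ρ ≤ 1 / 8) (hρ2 : ρ ≤ c / 200) (S : Set (Fin N → UnitAddCircle))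
    (hγ : ∀ i ∈ W, ‖χ i γ - 1‖ ≤ 1) (hγ2 : ∀ i ∈ W, 4 ^ K * ‖χ i γ - 1‖ ≤ c / 25)
    (hS : ∀ x ∈ S, 
          (∑ i ∈ W, ‖eta E ξ i * χ i b‖ * ‖χ i γ - 1‖ * ‖el E (tlift x - tlift x0) i‖ ≤ 1 / 8) ∧
          (∑ i ∈ Wᶜ, ‖eta E ξ i * χ i b‖ * ‖χ i γ - 1‖ * ‖el E (tlift x - tlift x0) i‖ ≤ ρ) ∧
          ∀ k < K, ∑ i ∈ Wᶜ, ‖eta E ξ i * χ i b‖ * ‖el E (tlift x - tlift x0) i‖ *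
            ‖χ i γ ^ k - 1 - k * (χ i γ - 1)‖ ≤ ρ) :
    ∃ z : Fin (⌈2 / (c / 8) ^ 2⌉₊ + 1) → ℝ, ∀ x ∈ S,
      c / 4 * K ≤ ‖∑ k ∈ Finset.range K, fch ξ (toralMap (α (b + k • γ)) x)‖ →
      ∃ s, |(ph ξ (α (b + γ)) (tlift x - tlift x0) - ph ξ (α b) (tlift x - tlift x0)) - z s| ≤ 1 / (K * (c / 8) ^ 2) := by
  obtain ⟨z, hz⟩ := sieve K hK (fun k => fch ξ (toralMap (α (b + k • γ)) x0)) (fun k => (norm_fch _ _).le) (c / 8) (by positivity)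
  refine ⟨z, fun x hx hT => hz _ ?_ ?_⟩
  · obtain ⟨h1, h2, -⟩ := hS x hx
    rw [← Real.norm_eq_abs, ← Complex.norm_real, h.ph_diff]
    refine (norm_sum_le _ _).trans ?_
    rw [← Finset.sum_add_sum_compl W]
    simp only [norm_mul] at *
    linarith
  · obtain ⟨h1, h2, h3⟩ := hS x hx
    have := h.sum_lin ξ b γ x x0 K (c / 100) ?_
    · have hpi := Real.pi_lt_four
      have hpi0 := Real.pi_pos
      have hK0 : (0:ℝ) < K := by exact_mod_cast hK
      have h4 : 2 * Real.pi * (c / 100) ≤ c / 8 := by nlinarith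
      have h5 : K * (2 * Real.pi * (c / 100)) ≤ K * (c / 8) := by gcongr
      linarith
    · intro k hk
      rw [← Finset.sum_add_sum_compl W]
      have h5 : ∑ i ∈ W, ‖eta E ξ i * χ i b‖ * ‖el E (tlift x - tlift x0) i‖ * ‖χ i γ ^ k - 1 - k * (χ i γ - 1)‖ ≤
          (∑ i ∈ W, ‖eta E ξ i * χ i b‖ * ‖χ i γ - 1‖ * ‖el E (tlift x - tlift x0) i‖) * (c / 25) := by
        rw [Finset.sum_mul]
        refine Finset.sum_le_sum fun i hi => ?_
        have e1 := pow_taylor (χ i γ) (hγ i hi) k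
        have e2 : (4:ℝ) ^ k * ‖χ i γ - 1‖ ≤ c / 25 := le_trans (by gcongr; norm_num) (hγ2 i hi)
        calc _ ≤ ‖eta E ξ i * χ i b‖ * ‖el E (tlift x - tlift x0) i‖ * (4 ^ k * ‖χ i γ - 1‖ ^ 2) := by gcongr
          _ = ‖eta E ξ i * χ i b‖ * ‖χ i γ - 1‖ * ‖el E (tlift x - tlift x0) i‖ * (4 ^ k * ‖χ i γ - 1‖) := by ring
          _ ≤ _ := by gcongr
      have h6 := h3 k hk
      have h7 : (∑ i ∈ W, ‖eta E ξ i * χ i b‖ * ‖χ i γ - 1‖ * ‖el E (tlift x - tlift x0) i‖) * (c / 25) ≤ 1 / 8 * (c / 25) := by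
        gcongr
      linarith

set_option maxHeartbeats 1000000 in
theorem Eig.det_core (h : Eig α E χ) (ξ : Fin N → ℤ) (hξ : ξ ≠ 0) (W : Finset (Fin N)) (w u : Fin d → ℝ) (hw : w ≠ 0)
    (hW : ∀ i ∈ W, lamMap χ w i = 0) (hu : ∀ i ∈ W, 0 < lamMap χ u i) (c : ℝ) (hc : 0 < c)
    {ι : Type} [Fintype ι] (q : ι → Fin d → ℤ) (M : ℕ) (hM : (W.card : ℝ) ≤ c / 4 * M) :
    ∃ (C : ℕ) (gj : ℕ → Fin d → ℤ), 1 ≤ C ∧ ∀ κ : ℕ, ∃ (k0 : Fin N → ℕ) (γ g : Fin d → ℤ), ∀ y,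
      (YY E (fun i => k0 i + if i ∈ W then κ else 0) '' ({x | ∃ p, c / 2 * M * (2 ^ κ : ℕ) ≤ ∑ j ∈ Finset.range M,
        ‖∑ k ∈ Finset.range (2 ^ κ), fch ξ (toralMap (α (q p + gj j + g + k • γ)) x)‖} ∩ YY E k0 ⁻¹' {y})).ncard ≤ C := by
  classical
  obtain ⟨gj, B, hB, hgen⟩ := h.generic W M
  obtain ⟨A, hA, hpar⟩ := h.params ξ W w u hw hW hu (fun s : ι × Fin M => q s.1 + gj s.2)
  set H' : ℝ := ∑ p, ∑ i, ‖eta E ξ i * χ i (q p)‖⁻¹ with hH'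
  have hη : ∀ i p, eta E ξ i * χ i (q p) ≠ 0 := fun i p => mul_ne_zero (h.xi ξ hξ i) (h.χ_ne i _)
  have hHle : ∀ i p, ‖eta E ξ i * χ i (q p)‖⁻¹ ≤ H' := by
    intro i p
    refine le_trans ?_ (Finset.single_le_sum (f := fun p => ∑ i, ‖eta E ξ i * χ i (q p)‖⁻¹)
      (fun t _ => by positivity) (Finset.mem_univ p))
    exact Finset.single_le_sum (f := fun i => ‖eta E ξ i * χ i (q p)‖⁻¹) (fun t _ => by positivity) (Finset.mem_univ i)
  have hH0 : 0 ≤ H' := Finset.sum_nonneg fun _ _ => Finset.sum_nonneg fun _ _ => by positivity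
  clear_value H'
  set B0 : ℕ := ⌈A * (H' * (B * (3 / (c / 8) ^ 2)))⌉₊ + 2 with hB0
  set n0 := ⌈2 / (c / 8) ^ 2⌉₊ with hn0
  refine ⟨Fintype.card (ι × Finset (Fin M) × (Fin M → Fin (n0 + 1))) * (2 * (B0 + 1) + 1) ^ (2 * N) + 1, gj, by omega, ?_⟩
  intro κ
  set K : ℕ := 2 ^ κ with hKdef
  have hK : 0 < K := by positivity
  have hK0 : (0:ℝ) < K := by exact_mod_cast hK
  have hKr : (K:ℝ) = 2 ^ κ := by rw [hKdef]; push_cast; rfl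
  clear_value K B0
  set δ : ℝ := 1 / (K * (c / 8) ^ 2) with hδ
  have hδ0 : 0 < δ := by positivity
  have hδK : δ * K = 1 / (c / 8) ^ 2 := by rw [hδ]; field_simp
  clear_value δ
  obtain ⟨k0, γ, g, hγ, hγτ, hk0, hest⟩ := hpar K (min 1 (c / 25 / 4 ^ K)) (min (1 / 8) (min (c / 200) δ))
    (by positivity) (by positivity)
  refine ⟨k0, γ, g, fun y => ?_⟩
  set S : Set (Fin N → UnitAddCircle) := {x | ∃ p, c / 2 * M * K ≤ ∑ j ∈ Finset.range M,
        ‖∑ k ∈ Finset.range K, fch ξ (toralMap (α (q p + gj j + g + k • γ)) x)‖} ∩ YY E k0 ⁻¹' {y} with hS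
  rcases S.eq_empty_or_nonempty with hSe | ⟨x0, hx0⟩
  · rw [hSe]; simp
  have hclose : ∀ x ∈ S, ∀ x' ∈ S, ∀ i, ‖el E (tlift x - tlift x') i‖ ≤ 2 / 2 ^ (k0 i) := by
    intro x hx x' hx' i
    rw [el_sub]
    exact YY_close (hx.2.trans hx'.2.symm) i
  refine le_trans ?_ (Nat.le_succ _)
  obtain ⟨idx, hidx⟩ := comb_idx S M n0 K hK c δ hc
    (fun p j x => ‖∑ k ∈ Finset.range K, fch ξ (toralMap (α (q p + gj j + g + k • γ)) x)‖)
    (fun p j x => ph ξ (α (q p + gj j + g + γ)) (tlift x - tlift x0) - ph ξ (α (q p + gj j + g)) (tlift x - tlift x0))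
    (by
      intro p j x
      refine (norm_sum_le _ _).trans ?_
      simp [norm_fch])
    (by
      intro p j hj
      rw [hδ]
      refine h.sieve_pt ξ W (q p + gj j + g) γ x0 K hK c (min (1 / 8) (min (c / 200) δ)) hc (min_le_left _ _)
        ((min_le_right _ _).trans (min_le_left _ _)) S (fun i hi => (hγτ i hi).trans (min_le_left _ _))
        (fun i hi => ?_) (fun x hx => hest _ (hclose x hx x0 hx0) (p, ⟨j, hj⟩))
      have := (hγτ i hi).trans (min_le_right _ _)
      rw [le_div_iff₀ (by positivity)] at this
      linarith)
    (fun x hx => hx.1)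
  refine ncard_idx E _ S idx B0 ?_
  intro x x' hxx i
  obtain ⟨p, J, hJ, hJc, hJθ⟩ := hidx x x' hxx
  set Δ : Fin N → ℂ := el E (tlift (x : Fin N → UnitAddCircle) - tlift (x' : Fin N → UnitAddCircle)) with hΔ
  have hcl := hclose x x.2 x' x'.2
  have hΔi : ∀ i, el E (tlift (x : Fin N → UnitAddCircle)) i - el E (tlift (x' : Fin N → UnitAddCircle)) i = Δ i := by
    intro i; rw [hΔ, el_sub]; rfl
  rw [hΔi]
  by_cases hi : i ∈ W
  swap
  · simp only [if_neg hi, add_zero]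
    have := hcl i
    rw [le_div_iff₀ (by positivity)] at this
    refine this.trans ?_
    rw [hB0]; push_cast
    have : (0:ℝ) ≤ (⌈A * (H' * (B * (3 / (c / 8) ^ 2)))⌉₊ : ℝ) := by positivity
    linarith
  have key : ∀ j ∈ J, ‖∑ i ∈ W, χ i (gj j) * (eta E ξ i * χ i (q p) * χ i g * (χ i γ - 1) * Δ i)‖ ≤ 3 * δ := by
    intro j hj
    have hjM : j < M := Finset.mem_range.1 (hJ hj)
    have h1 := hJθ j hj
    have h2 := (hest Δ hcl (p, ⟨j, hjM⟩)).2.1.trans ((min_le_right _ _).trans (min_le_right _ _))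
    have h3 : ‖((ph ξ (α (q p + gj j + g + γ)) (tlift (x : Fin N → UnitAddCircle) - tlift (x' : Fin N → UnitAddCircle))
        - ph ξ (α (q p + gj j + g)) (tlift (x : Fin N → UnitAddCircle) - tlift (x' : Fin N → UnitAddCircle)) : ℝ) : ℂ)‖ ≤ 2 * δ := by
      rw [Complex.norm_real, Real.norm_eq_abs]
      refine le_of_eq_of_le (congrArg _ ?_) h1
      simp only [ph_sub]; ring
    rw [h.ph_diff, ← hΔ, ← Finset.sum_add_sum_compl W] at h3
    have h4 : ‖∑ i ∈ Wᶜ, eta E ξ i * χ i (q p + gj j + g) * (χ i γ - 1) * Δ i‖ ≤ δ := by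
      refine (norm_sum_le _ _).trans (le_trans (le_of_eq ?_) h2)
      refine Finset.sum_congr rfl fun i _ => ?_
      rw [norm_mul (_ * _) (Δ i), norm_mul (_ * _) (_ - _)]
    have h5 : ∑ i ∈ W, χ i (gj j) * (eta E ξ i * χ i (q p) * χ i g * (χ i γ - 1) * Δ i) =
        (∑ i ∈ W, eta E ξ i * χ i (q p + gj j + g) * (χ i γ - 1) * Δ i + 
          ∑ i ∈ Wᶜ, eta E ξ i * χ i (q p + gj j + g) * (χ i γ - 1) * Δ i) -
          ∑ i ∈ Wᶜ, eta E ξ i * χ i (q p + gj j + g) * (χ i γ - 1) * Δ i := by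
      rw [add_sub_cancel_right]
      refine Finset.sum_congr rfl fun i _ => ?_
      rw [h.add, h.add]; ring
    rw [h5]
    refine (norm_sub_le _ _).trans ?_
    linarith
  have hcard : W.card ≤ J.card := by exact_mod_cast hM.trans hJc
  have hy := hgen J hJ hcard _ (3 * δ) (by positivity) key i hi
  simp only [if_pos hi]
  have e1 : ‖eta E ξ i * χ i (q p) * χ i g * (χ i γ - 1) * Δ i‖ =
      ‖eta E ξ i * χ i (q p)‖ * (‖χ i g * (χ i γ - 1)‖ * ‖Δ i‖) := by
    rw [← norm_mul, ← norm_mul]; congr 1; ring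
  have hpos : 0 < ‖eta E ξ i * χ i (q p)‖ := norm_pos_iff.2 (hη i p)
  have e2 : ‖χ i g * (χ i γ - 1)‖ * ‖Δ i‖ ≤ H' * (B * (3 * δ)) := by
    rw [e1] at hy
    have hH := hHle i p
    calc _ = ‖eta E ξ i * χ i (q p)‖⁻¹ * (‖eta E ξ i * χ i (q p)‖ * (‖χ i g * (χ i γ - 1)‖ * ‖Δ i‖)) := by
          rw [inv_mul_cancel_left₀ hpos.ne']
      _ ≤ _ := by gcongr
  have e3 := hk0 i hi
  calc ‖Δ i‖ * 2 ^ (k0 i + κ) = 2 ^ (k0 i) * ‖Δ i‖ * K := by rw [pow_add, hKr]; ring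
    _ ≤ A * ‖χ i g * (χ i γ - 1)‖ * ‖Δ i‖ * K := by gcongr
    _ = A * (‖χ i g * (χ i γ - 1)‖ * ‖Δ i‖) * K := by ring
    _ ≤ A * (H' * (B * (3 * δ))) * K := by gcongr
    _ = A * (H' * (B * (3 * (δ * K)))) := by ring
    _ = A * (H' * (B * (3 / (c / 8) ^ 2))) := by rw [hδK]; ring
    _ ≤ B0 := by
      rw [hB0]; push_cast
      have := Nat.le_ceil (A * (H' * (B * (3 / (c / 8) ^ 2))))
      linarith

end Det2
end Mod12

section Mod13
open MeasureTheory

section KP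
variable {d N : ℕ} {α : (Fin d → ℤ) → Matrix (Fin N) (Fin N) ℤ}
    {E : Matrix (Fin N) (Fin N) ℂ} {χ : Fin N → (Fin d → ℤ) → ℂ}

theorem exists_of_convex {ι : Type*} [Fintype ι] (p S : ι → ℝ) (hp : ∀ i, 0 ≤ p i) (hp1 : ∑ i, p i = 1) (L : ℝ)
    (hL : L ≤ ∑ i, p i * S i) : ∃ i, L ≤ S i := by
  by_contra! hcon
  have h1 : ∀ i ∈ Finset.univ, p i * (S i - L) ≤ 0 := fun i _ =>
    mul_nonpos_of_nonneg_of_nonpos (hp i) (by linarith [hcon i])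
  have h2 : ∑ i, p i * (S i - L) = ∑ i, p i * S i - L := by
    simp only [mul_sub, Finset.sum_sub_distrib, ← Finset.sum_mul, hp1, one_mul]
  have h3 : ∑ i, p i * (S i - L) = 0 := le_antisymm (Finset.sum_nonpos h1) (by linarith)
  have h4 := (Finset.sum_eq_zero_iff_of_nonpos h1).1 h3
  have h5 : ∀ i, p i = 0 := fun i => by
    rcases mul_eq_zero.1 (h4 i (Finset.mem_univ i)) with h | h
    · exact h
    · linarith [hcon i]
  simp [h5] at hp1

theorem big_set (α : (Fin d → ℤ) → Matrix (Fin N) (Fin N) ℤ)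
    (hαadd : ∀ v w, α (v + w) = α v * α w)
    (μ : Measure (Fin N → UnitAddCircle)) [IsProbabilityMeasure μ]
    (hinv : ∀ v, Measure.map (toralMap (α v)) μ = μ) (ξ : Fin N → ℤ) {ι : Type} [Fintype ι] (q : ι → Fin d → ℤ)
    (p : ι → ℝ) (hp : ∀ i, 0 ≤ p i) (hp1 : ∑ i, p i = 1) (c0 : ℂ) (ε : ℝ) (hc0 : c0 ≠ 0)
    (hmean : ∫ x, ‖∑ i, (p i : ℂ) * fch ξ (toralMap (α (q i)) x) - c0‖ ∂μ ≤ ε * (‖c0‖ / 2))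
    (M K : ℕ) (hM : 0 < M) (hK : 0 < K) (gj : ℕ → Fin d → ℤ) (g γ : Fin d → ℤ) :
    ∃ Q : Set (Fin N → UnitAddCircle), MeasurableSet Q ∧ μ.real Qᶜ ≤ ε ∧
      Q ⊆ {x | ∃ i, ‖c0‖ / 2 * M * K ≤ ∑ j ∈ Finset.range M,
        ‖∑ k ∈ Finset.range K, fch ξ (toralMap (α (q i + gj j + g + k • γ)) x)‖} := by
  set Φ : (Fin N → UnitAddCircle) → ℂ := fun x => ∑ i, (p i : ℂ) * fch ξ (toralMap (α (q i)) x) with hΦ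
  set v : ℕ → ℕ → Fin d → ℤ := fun j k => gj j + g + k • γ with hv
  have hmt : ∀ v, Measurable (toralMap (α v)) := fun v => (continuous_toral (α v)).measurable
  have hΦm : Measurable Φ := Finset.measurable_sum _ fun i _ =>
    measurable_const.mul ((measurable_fch ξ).comp (hmt _))
  have hΨm : Measurable fun x => ‖Φ x - c0‖ := (hΦm.sub_const c0).norm
  have hΨb : ∀ x, ‖Φ x - c0‖ ≤ 1 + ‖c0‖ := by
    intro x
    refine (norm_sub_le _ _).trans (add_le_add ?_ le_rfl)
    refine (norm_sum_le _ _).trans (le_of_eq ?_)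
    rw [← hp1]
    refine Finset.sum_congr rfl fun i _ => ?_
    rw [norm_mul, norm_fch, mul_one, Complex.norm_real, Real.norm_eq_abs, abs_of_nonneg (hp i)]
  have hint : ∀ v, Integrable (fun x => ‖Φ (toralMap (α v) x) - c0‖) μ := by
    intro v
    refine Integrable.of_bound (hΨm.comp (hmt v)).aestronglyMeasurable (1 + ‖c0‖) (Filter.Eventually.of_forall fun x => ?_)
    rw [norm_norm]; exact hΨb _
  have hle : ∀ v, ∫ x, ‖Φ (toralMap (α v) x) - c0‖ ∂μ ≤ ε * (‖c0‖ / 2) := by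
    intro v
    have := integral_map (μ := μ) (hmt v).aemeasurable (f := fun x => ‖Φ x - c0‖) hΨm.aestronglyMeasurable
    rw [hinv v] at this
    rw [← this]; exact hmean
  set D : (Fin N → UnitAddCircle) → ℝ := fun x => ∑ j ∈ Finset.range M, ∑ k ∈ Finset.range K,
    ‖Φ (toralMap (α (v j k)) x) - c0‖ with hD
  have hDm : Measurable D := Finset.measurable_sum _ fun j _ => Finset.measurable_sum _ fun k _ => hΨm.comp (hmt _)
  have hDi : Integrable D μ := integrable_finsetSum _ fun j _ => integrable_finsetSum _ fun k _ => hint _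
  have hDle : ∫ x, D x ∂μ ≤ M * K * (ε * (‖c0‖ / 2)) := by
    rw [hD, integral_finsetSum _ fun j _ => integrable_finsetSum _ fun k _ => hint _]
    calc _ ≤ ∑ j ∈ Finset.range M, ∑ k ∈ Finset.range K, (ε * (‖c0‖ / 2)) := by
          refine Finset.sum_le_sum fun j _ => ?_
          rw [integral_finsetSum _ fun k _ => hint _]
          exact Finset.sum_le_sum fun k _ => hle _
      _ = _ := by simp; ring
  have hM0 : (0:ℝ) < M := by exact_mod_cast hM
  have hK0 : (0:ℝ) < K := by exact_mod_cast hK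
  have hcn : 0 < ‖c0‖ := norm_pos_iff.2 hc0
  refine ⟨{x | D x ≤ ‖c0‖ / 2 * M * K}, measurableSet_le hDm measurable_const, ?_, ?_⟩
  · have h1 := mul_meas_ge_le_integral_of_nonneg (μ := μ) (f := D)
      (Filter.Eventually.of_forall fun x => Finset.sum_nonneg fun j _ => Finset.sum_nonneg fun k _ => norm_nonneg _) hDi (‖c0‖ / 2 * M * K)
    have h2 : μ.real {x | D x ≤ ‖c0‖ / 2 * M * K}ᶜ ≤ μ.real {x | ‖c0‖ / 2 * M * K ≤ D x} :=
      measureReal_mono fun x hx => by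
        simp only [Set.mem_compl_iff, Set.mem_ofPred_eq, not_le] at hx ⊢
        exact hx.le
    have h3 : ‖c0‖ / 2 * M * K * μ.real {x | ‖c0‖ / 2 * M * K ≤ D x} ≤ ‖c0‖ / 2 * M * K * ε := by
      refine h1.trans (hDle.trans (le_of_eq (by ring)))
    exact h2.trans (le_of_mul_le_mul_left h3 (by positivity))
  · intro x hx
    have hx : D x ≤ ‖c0‖ / 2 * M * K := hx
    refine exists_of_convex p _ hp hp1 _ ?_
    have e1 : ∑ j ∈ Finset.range M, ∑ k ∈ Finset.range K, Φ (toralMap (α (v j k)) x) =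
        ∑ i, (p i : ℂ) * ∑ j ∈ Finset.range M, ∑ k ∈ Finset.range K, fch ξ (toralMap (α (q i + gj j + g + k • γ)) x) := by
      simp only [Finset.mul_sum]
      rw [Finset.sum_comm]
      refine Eq.trans ?_ Finset.sum_comm.symm
      rw [Finset.sum_comm]
      refine Finset.sum_congr rfl fun j _ => ?_
      rw [Finset.sum_comm]
      refine Finset.sum_congr rfl fun k _ => ?_
      refine Finset.sum_congr rfl fun i _ => ?_
      rw [← toral_mul, ← hαadd, hv]
      simp only [add_assoc]
    have e2 : ∑ j ∈ Finset.range M, ∑ k ∈ Finset.range K, (Φ (toralMap (α (v j k)) x) - c0) =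
        ∑ j ∈ Finset.range M, ∑ k ∈ Finset.range K, Φ (toralMap (α (v j k)) x) - M * K * c0 := by
      simp only [Finset.sum_sub_distrib, Finset.sum_const, Finset.card_range, nsmul_eq_mul]; ring
    have e3 : ‖∑ j ∈ Finset.range M, ∑ k ∈ Finset.range K, (Φ (toralMap (α (v j k)) x) - c0)‖ ≤ D x :=
      (norm_sum_le _ _).trans (Finset.sum_le_sum fun j _ => norm_sum_le _ _)
    have e4 : ‖(M * K * c0 : ℂ)‖ = M * K * ‖c0‖ := by simp
    have e5 := norm_sub_norm_le (M * K * c0 : ℂ) (∑ j ∈ Finset.range M, ∑ k ∈ Finset.range K, Φ (toralMap (α (v j k)) x))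
    rw [← norm_neg (_ - _), neg_sub, ← e2, e4] at e5
    have e6 : ‖∑ j ∈ Finset.range M, ∑ k ∈ Finset.range K, Φ (toralMap (α (v j k)) x)‖ ≤
        ∑ i, p i * ∑ j ∈ Finset.range M, ‖∑ k ∈ Finset.range K, fch ξ (toralMap (α (q i + gj j + g + k • γ)) x)‖ := by
      rw [e1]
      refine (norm_sum_le _ _).trans (Finset.sum_le_sum fun i _ => ?_)
      rw [norm_mul, Complex.norm_real, Real.norm_eq_abs, abs_of_nonneg (hp i)]
      exact mul_le_mul_of_nonneg_left (norm_sum_le _ _) (hp i)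
    refine le_trans ?_ e6
    linarith

theorem Eig.kp (h : Eig α E χ) (hα0 : α 0 = 1) (hαadd : ∀ v w, α (v + w) = α v * α w)
    (μ : Measure (Fin N → UnitAddCircle)) [IsProbabilityMeasure μ]
    (hinv : ∀ v, Measure.map (toralMap (α v)) μ = μ)
    (herg : ∀ A : Set (Fin N → UnitAddCircle), MeasurableSet A →
      (∀ v, toralMap (α v) ⁻¹' A = A) → μ A = 0 ∨ μ A = 1)
    (ξ : Fin N → ℤ) (hξ : ξ ≠ 0) (hc : ∫ x, fch ξ x ∂μ ≠ 0) :
    ∀ w u : Fin d → ℝ, w ≠ 0 → ∀ ε : ℝ, 0 < ε → ∀ κ0 : ℝ, ∃ κ, κ0 ≤ κ ∧ ∃ k0 : Fin N → ℝ, 0 ≤ k0 ∧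
      ent μ (YY E (fun i => ⌈k0 i + if lamMap χ w i = 0 ∧ 0 < lamMap χ u i then κ else 0⌉₊)) -
        ent μ (YY E (fun i => ⌈k0 i⌉₊)) ≤ ε * κ := by
  intro w u hw ε hε κ0
  classical
  set c0 := ∫ x, fch ξ x ∂μ with hc0
  have hcn : 0 < ‖c0‖ := norm_pos_iff.2 hc
  set W : Finset (Fin N) := Finset.univ.filter fun i => lamMap χ w i = 0 ∧ 0 < lamMap χ u i with hW
  have hl2 : 0 < Real.log 2 := Real.log_pos (by norm_num)
  set ε1 : ℝ := ε / (2 * (4 * N * Real.log 2 + 1)) with hε1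
  have hε10 : 0 < ε1 := by positivity
  have hε1b : ε1 * (4 * N * Real.log 2) ≤ ε / 2 := by
    rw [hε1, div_mul_eq_mul_div, div_le_iff₀ (by positivity)]
    nlinarith
  have hmem : MemLp (fch ξ) 2 μ := by
    refine MemLp.of_bound (measurable_fch ξ).aestronglyMeasurable 1 (Filter.Eventually.of_forall fun x => (norm_fch ξ x).le)
  obtain ⟨ι, _, q, p, hp, hp1, hmean⟩ := mean_erg α hα0 hαadd μ hinv herg (fch ξ) hmem (ε1 * (‖c0‖ / 2)) (by positivity)
  set M : ℕ := ⌈4 * W.card / ‖c0‖⌉₊ + 1 with hM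
  have hMc : (W.card : ℝ) ≤ ‖c0‖ / 4 * M := by
    have h1 := Nat.le_ceil (4 * W.card / ‖c0‖)
    have h2 : 4 * W.card / ‖c0‖ ≤ M := by rw [hM]; push_cast; linarith
    rw [div_le_iff₀ hcn] at h2
    linarith
  obtain ⟨C, gj, hC1, hdet⟩ := h.det_core ξ hξ W w u hw (fun i hi => (Finset.mem_filter.1 hi).2.1)
    (fun i hi => (Finset.mem_filter.1 hi).2.2) ‖c0‖ hcn q M hMc
  set κ : ℕ := 3 + ⌈κ0⌉₊ + ⌈(Real.log 2 + Real.log C) * 2 / ε⌉₊ with hκ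
  have hκ1 : κ0 ≤ κ := by
    have := Nat.le_ceil κ0
    rw [hκ]; push_cast; linarith [Nat.cast_nonneg (α := ℝ) ⌈(Real.log 2 + Real.log C) * 2 / ε⌉₊]
  have hκ2 : Real.log 2 + Real.log C ≤ ε / 2 * κ := by
    have h1 := Nat.le_ceil ((Real.log 2 + Real.log C) * 2 / ε)
    have h2 : (Real.log 2 + Real.log C) * 2 / ε ≤ κ := by
      rw [hκ]; push_cast; linarith [Nat.cast_nonneg (α := ℝ) ⌈κ0⌉₊]
    rw [div_le_iff₀ hε] at h2
    linarith
  have hκ3 : (3:ℝ) ≤ κ := by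
    have : 3 ≤ κ := by omega
    exact_mod_cast this
  clear_value κ
  obtain ⟨k0, γ, g, hcount⟩ := hdet κ
  obtain ⟨Q, hQm, hQ, hQs⟩ := big_set α hαadd μ hinv ξ q p hp hp1 c0 ε1 hc hmean M (2 ^ κ) (by omega) (by positivity) gj g γ
  refine ⟨κ, hκ1, fun i => k0 i, fun i => Nat.cast_nonneg _, ?_⟩
  have e1 : (fun i => ⌈(k0 i : ℝ) + if lamMap χ w i = 0 ∧ 0 < lamMap χ u i then (κ:ℝ) else 0⌉₊) =
      fun i => k0 i + if i ∈ W then κ else 0 := by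
    funext i
    by_cases hi : lamMap χ w i = 0 ∧ 0 < lamMap χ u i
    · rw [if_pos hi, if_pos (by simp [hW, hi]), ← Nat.cast_add, Nat.ceil_natCast]
    · rw [if_neg hi, if_neg (by simpa [hW] using hi)]; simp
  rw [e1]
  simp only [Nat.ceil_natCast]
  have key := (h.good (fun i => k0 i + if i ∈ W then κ else 0)).ent_cond μ (h.good k0) hQm hQ hC1
    (L := (2 * (2 ^ (κ + 1) + 1) + 1) ^ (2 * N)) (Nat.one_le_pow _ _ (by omega))
    (fun y => (Set.ncard_le_ncard (Set.image_mono (Set.inter_subset_inter_left _ hQs))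
      ((h.good _).fin.subset (Set.image_subset_range _ _))).trans (hcount y))
    (fun y => Eig.count_fine E (fun i => by split_ifs <;> omega) y)
  have hlog := log_count N κ
  have h4 : ε1 * Real.log ((2 * (2 ^ (κ + 1) + 1) + 1) ^ (2 * N) : ℕ) ≤ ε / 2 * κ := by
    calc _ ≤ ε1 * (2 * N * ((κ + 3) * Real.log 2)) := by gcongr
      _ ≤ ε1 * (2 * N * ((κ + κ) * Real.log 2)) := by gcongr
      _ = ε1 * (4 * N * Real.log 2) * κ := by ring
      _ ≤ _ := by gcongr
  linarith

end KP
end Mod13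

section Mod14
open MeasureTheory Filter Topology

section Approx
variable {d N : ℕ} {α : (Fin d → ℤ) → Matrix (Fin N) (Fin N) ℤ}
    {E : Matrix (Fin N) (Fin N) ℂ} {χ : Fin N → (Fin d → ℤ) → ℂ}

theorem Eig.dist_YY (h : Eig α E χ) : ∃ c : ℝ, 0 < c ∧ ∀ (n : ℕ) (x x' : Fin N → UnitAddCircle),
    YY E (fun _ => n) x = YY E (fun _ => n) x' → dist x x' ≤ c * (1 / 2) ^ n := by
  obtain ⟨c, hc1, -, hc⟩ := h.exists_const
  refine ⟨c * 2, by linarith, fun n x x' hxx => ?_⟩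
  rw [dist_pi_le_iff (by positivity)]
  intro j
  have h1 := hc (tlift x - tlift x') (2 / 2 ^ n) (fun i => by
    rw [el_sub]; exact YY_close hxx i) j
  rw [dist_eq_norm, ← coe_tlift x j, ← coe_tlift x' j, ← AddCircle.coe_sub]
  refine QuotientAddGroup.norm_mk_le_norm.trans ?_
  rw [Real.norm_eq_abs]
  refine h1.trans (le_of_eq ?_)
  rw [div_pow, one_pow]; ring

theorem Eig.sep_compact (h : Eig α E χ) (A B : Set (Fin N → UnitAddCircle)) (hA : IsCompact A) (hB : IsCompact B)
    (hAB : Disjoint A B) : ∀ᶠ n : ℕ in atTop, ∀ x ∈ A, ∀ x' ∈ B, YY E (fun _ => n) x ≠ YY E (fun _ => n) x' := by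
  obtain ⟨c, hc0, hc⟩ := h.dist_YY
  obtain ⟨r, hr, hAB⟩ := Metric.exists_pos_forall_lt_edist hA hB.isClosed hAB
  have ht : Tendsto (fun n : ℕ => c * (1 / 2 : ℝ) ^ n) atTop (𝓝 (c * 0)) :=
    (_root_.tendsto_pow_atTop_nhds_zero_of_lt_one (by norm_num) (by norm_num)).const_mul c
  rw [mul_zero] at ht
  filter_upwards [ht.eventually (gt_mem_nhds (show (0:ℝ) < r from hr))] with n hn x hx x' hx' hxx
  have h1 := hAB x hx x' hx'
  have h2 := hc n x x' hxx
  rw [edist_dist, ← ENNReal.ofReal_coe_nnreal, ENNReal.ofReal_lt_ofReal_iff_of_nonneg (by positivity)] at h1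
  linarith

theorem Eig.approx (h : Eig α E χ) (μ : Measure (Fin N → UnitAddCircle)) [IsProbabilityMeasure μ] {β : Type*}
    {Z : (Fin N → UnitAddCircle) → β} (hZ : Good Z) (η : ℝ) (hη : 0 < η) :
    ∃ (n : ℕ) (Q : Set (Fin N → UnitAddCircle)), MeasurableSet Q ∧ μ.real Qᶜ ≤ η ∧
      ∀ y, (Z '' (Q ∩ YY E (fun _ => n) ⁻¹' {y})).Subsingleton := by
  classical
  set F := hZ.fin.toFinset with hF
  have hε : 0 < η / (F.card + 1) := by positivity
  have hcpt : ∀ b, ∃ K ⊆ Z ⁻¹' {b}, IsCompact K ∧ μ (Z ⁻¹' {b} \ K) < ENNReal.ofReal (η / (F.card + 1)) := fun b =>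
    (hZ.meas {b}).exists_isCompact_sdiff_lt (measure_ne_top _ _) (by simpa using hε)
  choose K hKs hKc hKm using hcpt
  have hev : ∀ᶠ n : ℕ in atTop, ∀ b ∈ F, ∀ b' ∈ F, b ≠ b' → ∀ x ∈ K b, ∀ x' ∈ K b',
      YY E (fun _ => n) x ≠ YY E (fun _ => n) x' := by
    refine (Filter.eventually_all_finset _).2 fun b _ => (Filter.eventually_all_finset _).2 fun b' _ => ?_
    by_cases hbb : b = b'
    · exact Eventually.of_forall fun n hn => absurd hbb hn
    · filter_upwards [h.sep_compact (K b) (K b') (hKc b) (hKc b') (by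
        rw [Set.disjoint_left]
        intro x hx hx'
        exact hbb ((hKs b hx).symm.trans (hKs b' hx')))] with n hn _ using hn
  obtain ⟨n, hn⟩ := hev.exists
  refine ⟨n, ⋃ b ∈ F, K b, F.measurableSet_biUnion fun b _ => (hKc b).measurableSet, ?_, ?_⟩
  · have hsub : (⋃ b ∈ F, K b)ᶜ ⊆ ⋃ b ∈ F, (Z ⁻¹' {b} \ K b) := by
      intro x hx
      have hxF : Z x ∈ F := by simp [hF]
      simp only [Set.mem_compl_iff, Set.mem_iUnion, not_exists] at hx
      simp only [Set.mem_iUnion]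
      exact ⟨Z x, hxF, rfl, hx _ hxF⟩
    calc μ.real (⋃ b ∈ F, K b)ᶜ ≤ μ.real (⋃ b ∈ F, (Z ⁻¹' {b} \ K b)) := measureReal_mono hsub (measure_ne_top _ _)
      _ ≤ ∑ b ∈ F, μ.real (Z ⁻¹' {b} \ K b) := measureReal_biUnion_finset_le _ _
      _ ≤ ∑ b ∈ F, η / (F.card + 1) := by
          refine Finset.sum_le_sum fun b _ => ?_
          exact ENNReal.toReal_le_of_le_ofReal hε.le (hKm b).le
      _ = F.card * (η / (F.card + 1)) := by rw [Finset.sum_const, nsmul_eq_mul]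
      _ ≤ η := by
          rw [← mul_div_assoc, div_le_iff₀ (by positivity)]
          nlinarith
  · rintro y _ ⟨x, ⟨hx, hxy⟩, rfl⟩ _ ⟨x', ⟨hx', hxy'⟩, rfl⟩
    simp only [Set.mem_iUnion] at hx hx'
    obtain ⟨b, hb, hx⟩ := hx
    obtain ⟨b', hb', hx'⟩ := hx'
    by_contra hne
    have e1 : Z x = b := hKs b hx
    have e2 : Z x' = b' := hKs b' hx'
    exact hn b hb b' hb' (by rwa [← e1, ← e2]) x hx x' hx' (hxy.trans hxy'.symm)

end Approx

section Chain
variable {Ω : Type*} {β γ : Type} [MeasurableSpace Ω] (μ : Measure Ω) [IsProbabilityMeasure μ]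

theorem chain_aux {U : ℕ → Ω → β} {V : ℕ → Ω → γ} (hU : ∀ j, Good (U j)) (hV : ∀ j, Good (V j)) (a : ℝ)
    (ha : ∀ j, ent μ (fun x => (U j x, V j x)) ≤ ent μ (V j) + a) (n : ℕ) :
    ∀ {σ : Type} {S : Ω → σ}, Good S →
      ent μ (fun x => ((fun i : Fin n => (U i x, V i x)), S x)) ≤ ent μ (fun x => ((fun i : Fin n => V i x), S x)) + n * a := by
  induction n with
  | zero =>
    intro σ S hS
    have h1 := hS.ent_mono μ (fun s => ((fun i : Fin 0 => (Fin.elim0 i : β × γ)), s))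
    have h2 := (Good.pair (Good.pi (X := fun (i : Fin 0) x => V i x) fun i => hV i) hS).ent_mono μ Prod.snd
    have e : (fun x => ((fun i : Fin 0 => (U i x, V i x)), S x)) =
        fun x => ((fun i : Fin 0 => (Fin.elim0 i : β × γ)), S x) := by
      funext x; congr 1; funext i; exact i.elim0
    rw [e]
    simp only [Nat.cast_zero, zero_mul, add_zero]
    exact h1.trans h2
  | succ n ih =>
    intro σ S hS
    have hUV : Good (fun x => (U n x, V n x)) := (hU n).pair (hV n)
    have h1 := ih (S := fun x => ((U n x, V n x), S x)) (hUV.pair hS)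
    have h0 := (Good.pair (Good.pi (X := fun (i : Fin n) x => (U i x, V i x)) fun i => (hU i).pair (hV i))
      (hUV.pair hS)).ent_mono μ (fun t => ((Fin.snoc (α := fun _ => β × γ) t.1 t.2.1 : Fin (n + 1) → β × γ), t.2.2))
    have e0 : (fun x => ((fun i : Fin (n + 1) => (U i x, V i x)), S x)) = fun x =>
        ((Fin.snoc (α := fun _ => β × γ) (fun i : Fin n => (U i x, V i x)) (U n x, V n x) : Fin (n + 1) → β × γ), S x) := by
      funext x; congr 1; funext i
      refine Fin.lastCases ?_ (fun i => ?_) i <;> simp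
    have hX : Good (fun x => ((fun i : Fin (n + 1) => V i x), S x)) :=
      Good.pair (Good.pi (X := fun (i : Fin (n + 1)) x => V i x) fun i => hV i) hS
    have h2 := hX.ent_submod μ hUV (fun t => t.1 (Fin.last n)) Prod.snd
      (fun t => ((fun i : Fin n => t.1.1 i.castSucc), (t.2, t.1.2))) (fun x => by simp)
    simp only [Fin.val_castSucc, Fin.val_last] at h2
    have h3 := ha n
    rw [e0]
    push_cast
    have e4 : ent μ (fun x => V n x) = ent μ (V n) := rfl
    linarith

end Chain
end Mod14

section Mod15
open MeasureTheory Filter Topology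

section Zero
variable {d N : ℕ} {α : (Fin d → ℤ) → Matrix (Fin N) (Fin N) ℤ}
    {E : Matrix (Fin N) (Fin N) ℂ} {χ : Fin N → (Fin d → ℤ) → ℂ}

theorem toral_iter (hα0 : α 0 = 1) (hαadd : ∀ v w, α (v + w) = α v * α w) (v : Fin d → ℤ) (k : ℕ) :
    (toralMap (α v))^[k] = toralMap (α (k • v)) := by
  induction k with
  | zero => funext x; simp [hα0, toral_one]
  | succ k ih =>
    funext x
    rw [Function.iterate_succ', Function.comp, ih, ← toral_mul, ← hαadd, succ_nsmul']

theorem ent_tuple {Ω β γ : Type*} [MeasurableSpace Ω] (μ : Measure Ω) [IsProbabilityMeasure μ]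
    {n : ℕ} {V : Fin n → Ω → β} {Y : Ω → γ} (hV : ∀ j, Good (V j)) (hY : Good Y) {C : ℕ} (hC1 : 1 ≤ C)
    (hC : ∀ j y, (V j '' (Y ⁻¹' {y})).ncard ≤ C) :
    ent μ (fun x j => V j x) ≤ ent μ Y + Real.log 2 + n * Real.log C := by
  classical
  have hb : ∀ y, ((fun x j => V j x) '' (Y ⁻¹' {y})).ncard ≤ C ^ n := by
    intro y
    have hfin : ∀ j, (V j '' (Y ⁻¹' {y})).Finite := fun j => (hV j).fin.subset (Set.image_subset_range _ _)
    have hsub : ((fun x j => V j x) '' (Y ⁻¹' {y})) ⊆ (Fintype.piFinset fun j => (hfin j).toFinset : Finset (Fin n → β)) := by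
      rintro _ ⟨x, hx, rfl⟩
      simp only [Finset.mem_coe, Fintype.mem_piFinset, Set.Finite.mem_toFinset]
      exact fun j => ⟨x, hx, rfl⟩
    refine (Set.ncard_le_ncard hsub (Finset.finite_toSet _)).trans ?_
    rw [Set.ncard_coe_finset, Fintype.card_piFinset]
    refine (Finset.prod_le_pow_card _ _ C fun j _ => ?_).trans (by simp)
    rw [← Set.ncard_eq_toFinset_card _ (hfin j)]
    exact hC j y
  have h1 := (Good.pi (X := V) hV).ent_cond μ hY (E := Set.univ) MeasurableSet.univ (C := C ^ n) (L := C ^ n) (ε := 0)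
    (by simp) (Nat.one_le_pow _ _ hC1) (Nat.one_le_pow _ _ hC1) (fun y => by simpa using hb y) hb
  rw [Nat.cast_pow, Real.log_pow] at h1
  linarith

theorem rate_zero (hd : 1 < d) {μ : Measure (Fin N → UnitAddCircle)} [IsProbabilityMeasure μ] {C : ℝ}
    (hG : Coarse (lamMap χ) (fun ρ => ent μ (YY E (fun i => ⌈ρ i⌉₊))) C) (u : Fin d → ℝ) :
    Tendsto (fun n : ℕ => ent μ (YY E (fun i => ⌈lamMap χ ((n:ℝ) • u) i⌉₊)) / n) atTop (𝓝 0) := by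
  have h0 : ∃ t : Fin d → ℝ, ∀ s : ℝ, t + s • u ≠ 0 := by
    by_contra hcon
    push Not at hcon
    have hle : Module.finrank ℝ (Fin d → ℝ) ≤ 1 := finrank_le_one u fun w => by
      obtain ⟨s, hs⟩ := hcon w
      exact ⟨-s, by rw [neg_smul]; exact (eq_neg_of_add_eq_zero_left hs).symm⟩
    simp at hle
    omega
  obtain ⟨t, ht⟩ := h0
  have := hG.tendsto_p u
  rwa [hG.p_eq_zero u t ht] at this

end Zero
end Mod15

section Mod16
open MeasureTheory Filter Topology

section Small
variable {d N : ℕ} {α : (Fin d → ℤ) → Matrix (Fin N) (Fin N) ℤ}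
    {E : Matrix (Fin N) (Fin N) ℂ} {χ : Fin N → (Fin d → ℤ) → ℂ}

theorem ent_pair_approx {Ω β γ : Type*} [MeasurableSpace Ω] (μ : Measure Ω) [IsProbabilityMeasure μ]
    {Z : Ω → β} {Y : Ω → γ} (hZ : Good Z) (hY : Good Y) {Q : Set Ω} (hQ : MeasurableSet Q)
    (hm : μ.real Qᶜ ≤ 1 / (Real.log ((Set.range Z).ncard + 1 : ℕ) + 1))
    (hs : ∀ y, (Z '' (Q ∩ Y ⁻¹' {y})).Subsingleton) :
    ent μ (fun x => (Z x, Y x)) ≤ ent μ Y + (Real.log 2 + 1) := by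
  have hl : 0 ≤ Real.log ((Set.range Z).ncard + 1 : ℕ) := Real.log_natCast_nonneg _
  have h1 := (hZ.pair hY).ent_cond μ hY hQ (C := 1) (L := (Set.range Z).ncard + 1) hm le_rfl (by omega)
    (fun y => by
      have : ((fun x => (Z x, Y x)) '' (Q ∩ Y ⁻¹' {y})).Subsingleton := by
        rintro _ ⟨x, hx, rfl⟩ _ ⟨x', hx', rfl⟩
        have e := hs y ⟨x, hx, rfl⟩ ⟨x', hx', rfl⟩
        have e2 : Y x = Y x' := hx.2.trans hx'.2.symm
        simp [e, e2]
      exact (Set.ncard_le_one this.finite).2 fun a ha b hb => this ha hb)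
    (fun y => by
      have hsub : ((fun x => (Z x, Y x)) '' (Y ⁻¹' {y})) ⊆ (fun z => (z, y)) '' Set.range Z := by
        rintro _ ⟨x, hx, rfl⟩
        exact ⟨Z x, ⟨x, rfl⟩, by simp [show Y x = y from hx]⟩
      have := (Set.ncard_le_ncard hsub (hZ.fin.image _)).trans (Set.ncard_image_le hZ.fin)
      omega)
  have h2 : 1 / (Real.log ((Set.range Z).ncard + 1 : ℕ) + 1) * Real.log ((Set.range Z).ncard + 1 : ℕ) ≤ 1 := by
    rw [one_div_mul_eq_div, div_le_one (by linarith)]; linarith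
  simp only [Nat.cast_one, Real.log_one] at h1
  linarith

theorem Eig.size_bound (h : Eig α E χ) (v : Fin d → ℤ) (m n L j : ℕ) (hj : j < n) (i : Fin N) :
    ‖χ i ((L * j) • v)‖ * 2 ^ m ≤
      2 ^ 0 * 2 ^ (⌈max (lamMap χ (((n * L : ℕ) : ℝ) • fun k => (v k : ℝ)) i) 0 + m⌉₊) := by
  rw [h.χ_nsmul, norm_pow, h.norm_χ, pow_zero, one_mul, ← Real.rpow_natCast, ← Real.rpow_natCast 2 m,
    ← Real.rpow_natCast 2 (Nat.ceil _), ← Real.rpow_mul (by norm_num), ← Real.rpow_add (by norm_num)]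
  refine Real.rpow_le_rpow_of_exponent_le (by norm_num) (le_trans ?_ (Nat.le_ceil _))
  gcongr
  rw [map_smul, Pi.smul_apply, smul_eq_mul]
  set l := lamMap χ (fun k => (v k : ℝ)) i
  push_cast
  have hjn : (j:ℝ) ≤ n := by exact_mod_cast hj.le
  rcases le_total 0 l with hl | hl
  · refine le_trans ?_ (le_max_left _ _)
    have : (L:ℝ) * j ≤ n * L := by rw [mul_comm]; gcongr
    nlinarith
  · refine le_trans ?_ (le_max_right _ _)
    exact mul_nonpos_of_nonpos_of_nonneg hl (by positivity)

theorem Eig.small (h : Eig α E χ) (hd : 1 < d) (hα0 : α 0 = 1) (hαadd : ∀ v w, α (v + w) = α v * α w)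
    {μ : Measure (Fin N → UnitAddCircle)} [IsProbabilityMeasure μ]
    (hinv : ∀ v, Measure.map (toralMap (α v)) μ = μ) {C' : ℝ}
    (hG : Coarse (lamMap χ) (fun ρ => ent μ (YY E (fun i => ⌈ρ i⌉₊))) C') (v : Fin d → ℤ)
    {β : Type} {X : (Fin N → UnitAddCircle) → β} (hX : Good X) (ε : ℝ) (hε : 0 < ε) :
    ∃ n : ℕ, 1 ≤ n ∧ ent μ (fun x (i : Fin n) => X ((toralMap (α v))^[(i:ℕ)] x)) ≤ ε * n := by
  obtain ⟨C, hC1, hC⟩ := h.count_inv 0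
  have hTm : ∀ k : ℕ, Measurable (toralMap (α v))^[k] := fun k => by
    rw [toral_iter hα0 hαadd]; exact (continuous_toral _).measurable
  have hTμ : ∀ k : ℕ, Measure.map ((toralMap (α v))^[k]) μ = μ := fun k => by
    rw [toral_iter hα0 hαadd]; exact hinv _
  have hl2 : 0 < Real.log 2 := Real.log_pos (by norm_num)
  have hlC : 0 ≤ Real.log C := Real.log_natCast_nonneg _
  set a := Real.log 2 + 1 with ha
  obtain ⟨L, hL⟩ := exists_nat_ge (2 * (Real.log C + a) / ε + 1)
  have hL1 : (1:ℝ) ≤ L := le_trans (by have : 0 ≤ 2 * (Real.log C + a) / ε := by positivity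
                                       linarith) hL
  have hLb : 2 * (Real.log C + a) ≤ ε * L := by
    have : 2 * (Real.log C + a) / ε ≤ L := by linarith
    rw [div_le_iff₀ hε] at this; linarith
  have hLn : 1 ≤ L := by exact_mod_cast hL1
  set T := toralMap (α v) with hT
  have hZ : Good (fun x (i : Fin L) => X (T^[(i:ℕ)] x)) := Good.pi (X := fun (i : Fin L) x => X (T^[(i:ℕ)] x)) fun i => hX.comp (hTm i)
  set Z := fun x (i : Fin L) => X (T^[(i:ℕ)] x) with hZd
  have hlz : 0 ≤ Real.log ((Set.range Z).ncard + 1 : ℕ) := Real.log_natCast_nonneg _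
  obtain ⟨m, Q, hQm, hQ, hQs⟩ := h.approx μ hZ (1 / (Real.log ((Set.range Z).ncard + 1 : ℕ) + 1)) (by positivity)
  have hY := h.good (fun _ => m)
  have hkey := ent_pair_approx μ hZ hY hQm hQ hQs
  have hbound : ∀ n : ℕ, ent μ (fun x (i : Fin (n * L)) => X (T^[(i:ℕ)] x)) ≤
      ent μ (YY E (fun i => ⌈lamMap χ (((n * L : ℕ) : ℝ) • fun k => (v k : ℝ)) i⌉₊)) + (C' * (m + 1) + Real.log 2)
        + n * (Real.log C + a) := by
    intro n
    have hU : ∀ j : ℕ, Good (fun x => Z (T^[L * j] x)) := fun j => hZ.comp (hTm _)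
    have hV : ∀ j : ℕ, Good (fun x => YY E (fun _ => m) (T^[L * j] x)) := fun j => hY.comp (hTm _)
    have hch := chain_aux μ hU hV a (fun j => by
      have e1 := (hZ.pair hY).ent_comp μ (hTm (L * j)) (hTμ _)
      have e2 := hY.ent_comp μ (hTm (L * j)) (hTμ _)
      rw [e1, e2]; exact hkey) n (S := fun _ => ()) ⟨Set.toFinite _, fun s => by
        by_cases hs : () ∈ s
        · convert MeasurableSet.univ; ext; simpa using hs
        · convert MeasurableSet.empty; ext; simpa using hs⟩
    have hVt : Good (fun x (i : Fin n) => YY E (fun _ => m) (T^[L * i] x)) :=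
      Good.pi (X := fun (i : Fin n) x => YY E (fun _ => m) (T^[L * i] x)) fun i => hV i
    have hUt : Good (fun x (i : Fin n) => (Z (T^[L * i] x), YY E (fun _ => m) (T^[L * i] x))) :=
      Good.pi (X := fun (i : Fin n) x => (Z (T^[L * i] x), YY E (fun _ => m) (T^[L * i] x))) fun i => (hU i).pair (hV i)
    have h1 := hVt.ent_mono μ (fun t => (t, ()))
    have hS : Good (fun _ : Fin N → UnitAddCircle => ()) := hX.map (fun _ => ())
    have h2 := (hUt.pair hS).ent_mono μ (fun t (i : Fin (n * L)) => (t.1 i.divNat).1 i.modNat)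
    have e2 : (fun x (i : Fin (n * L)) => Z (T^[L * (i.divNat : ℕ)] x) i.modNat) =
        fun x (i : Fin (n * L)) => X (T^[(i:ℕ)] x) := by
      funext x i
      simp only [hZd]
      rw [← Function.iterate_add_apply, Fin.coe_modNat, Fin.coe_divNat, Nat.mod_add_div]
    simp only [e2] at h2
    have h3 := ent_tuple μ (V := fun (j : Fin n) x => YY E (fun _ => m) (T^[L * j] x)) (fun j => hV j)
      (h.good (fun i => ⌈max (lamMap χ (((n * L : ℕ) : ℝ) • fun k => (v k : ℝ)) i) 0 + m⌉₊)) hC1 (fun j y => by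
        rw [toral_iter hα0 hαadd]
        exact hC _ _ _ (fun i => h.size_bound v m n L j j.2 i) y)
    have h4 := hG.lip (lamMap χ (((n * L : ℕ) : ℝ) • fun k => (v k : ℝ)) ⊔ 0) m (by positivity)
    rw [hG.pos] at h4
    simp only [Pi.sup_apply, Pi.zero_apply] at h4
    linarith
  have hlim := (rate_zero hd hG (fun k => (v k : ℝ))).comp (tendsto_id.atTop_mul_const' (show 0 < L by omega))
  have hev := hlim.eventually (gt_mem_nhds (show (0:ℝ) < ε / 4 by linarith))
  have hev2 : ∀ᶠ n : ℕ in atTop, (C' * (m + 1) + Real.log 2) ≤ (ε / 4) * n := by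
    have : Tendsto (fun n : ℕ => (ε / 4) * (n:ℝ)) atTop atTop := tendsto_natCast_atTop_atTop.const_mul_atTop (by linarith)
    exact this.eventually_ge_atTop _
  obtain ⟨n, hn1, hn2, hn3⟩ := (hev.and (hev2.and (eventually_ge_atTop 1))).exists
  refine ⟨n * L, Nat.mul_pos hn3 hLn, (hbound n).trans ?_⟩
  have hn0 : (1:ℝ) ≤ n := by exact_mod_cast hn3
  simp only [Function.comp, id] at hn1
  rw [div_lt_iff₀ (by push_cast; positivity)] at hn1
  push_cast at hn1 ⊢
  have g1 : ε / 4 * n ≤ ε / 4 * (n * L) := by gcongr; nlinarith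
  have g2 : n * (2 * (Real.log C + a)) ≤ n * (ε * L) := by gcongr
  linarith

end Small
end Mod16

section Mod17
open MeasureTheory Filter Topology

section Fin
variable {d N : ℕ}

theorem fch_eq (ξ : Fin N → ℤ) (x : Fin N → UnitAddCircle) : fch ξ x = UnitAddTorus.mFourier ξ x := by
  simp only [UnitAddTorus.mFourier, ContinuousMap.coe_mk]
  have : ∀ i, fourier (ξ i) (x i) = Complex.exp ((2 * Real.pi * ((ξ i : ℝ) * tlift x i) : ℝ) * Complex.I) := by
    intro i
    conv_lhs => rw [← coe_tlift x i]
    rw [fourier_coe_apply]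
    congr 1
    push_cast
    ring
  rw [Finset.prod_congr rfl fun i _ => this i, ← Complex.exp_sum, fch, ee]
  congr 1
  push_cast
  rw [Finset.mul_sum, Finset.sum_mul]

theorem vol_haar : (volume : Measure (Fin N → UnitAddCircle)) = Measure.pi fun _ => AddCircle.haarAddCircle := by
  rw [volume_pi]
  congr 1
  funext i
  rw [AddCircle.volume_eq_smul_haarAddCircle]
  simp

theorem vol_prob : IsProbabilityMeasure (volume : Measure (Fin N → UnitAddCircle)) := by
  rw [vol_haar]; infer_instance

theorem vol_fourier (ξ : Fin N → ℤ) (hξ : ξ ≠ 0) :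
    ∫ x : Fin N → UnitAddCircle, UnitAddTorus.mFourier ξ x = 0 := by
  have h1 := (UnitAddTorus.orthonormal_mFourier (d := Fin N)).2 (i := 0) (j := ξ) (Ne.symm hξ)
  simp only [ContinuousMap.inner_toLp] at h1
  simp only [UnitAddTorus.mFourier_zero, ContinuousMap.one_apply, map_one, mul_one] at h1
  rw [vol_haar]
  exact h1

theorem eq_volume (μ : Measure (Fin N → UnitAddCircle)) [IsProbabilityMeasure μ]
    (h : ∀ ξ : Fin N → ℤ, ξ ≠ 0 → ∫ x, fch ξ x ∂μ = 0) : μ = volume := by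
  have := vol_prob (N := N)
  let A : StarSubalgebra ℂ (BoundedContinuousFunction (Fin N → UnitAddCircle) ℂ) :=
    (UnitAddTorus.mFourierSubalgebra (Fin N)).comap (BoundedContinuousFunction.toContinuousMapStarₐ ℂ)
  refine ext_of_forall_mem_subalgebra_integral_eq_of_polish (𝕜 := ℂ) (A := A) ?_ ?_
  · intro x y hxy
    obtain ⟨f, ⟨g, hg, rfl⟩, hf⟩ := UnitAddTorus.mFourierSubalgebra_separatesPoints hxy
    refine ⟨g, ⟨g, ⟨BoundedContinuousFunction.mkOfCompact g, ?_, ?_⟩, rfl⟩, hf⟩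
    · exact hg
    · rfl
  · intro g hg
    have hg' : (BoundedContinuousFunction.toContinuousMapStarₐ ℂ g) ∈ UnitAddTorus.mFourierSubalgebra (Fin N) := hg
    have hs : (BoundedContinuousFunction.toContinuousMapStarₐ ℂ g) ∈
        Submodule.span ℂ (Set.range (UnitAddTorus.mFourier (d := Fin N))) := by
      rw [← UnitAddTorus.mFourierSubalgebra_coe]; exact hg'
    have key : ∀ f ∈ Submodule.span ℂ (Set.range (UnitAddTorus.mFourier (d := Fin N))),
        ∫ x, f x ∂μ = ∫ x : Fin N → UnitAddCircle, f x := by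
      intro f hf
      have hint : ∀ (ν : Measure (Fin N → UnitAddCircle)) [IsProbabilityMeasure ν] (f : C(UnitAddTorus (Fin N), ℂ)),
          Integrable (fun x => f x) ν := fun ν _ f => f.continuous.integrable_of_hasCompactSupport
            (HasCompactSupport.of_compactSpace _)
      induction hf using Submodule.span_induction with
      | mem f hf =>
        obtain ⟨ξ, rfl⟩ := hf
        by_cases hξ : ξ = 0
        · subst hξ; simp [UnitAddTorus.mFourier_zero]
        · rw [vol_fourier ξ hξ, ← h ξ hξ]
          exact integral_congr_ae (Eventually.of_forall fun x => (fch_eq ξ x).symm)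
      | zero => simp
      | add f g _ _ hf hg =>
        simp only [ContinuousMap.add_apply]
        rw [integral_add (hint _ f) (hint _ g), integral_add (hint _ f) (hint _ g), hf, hg]
      | smul a f _ hf =>
        simp only [ContinuousMap.smul_apply]
        rw [integral_smul, integral_smul, hf]
    exact key _ hs

open Classical in
theorem ks_zero {Ω : Type*} [MeasurableSpace Ω] (μ : Measure Ω) [IsProbabilityMeasure μ] (T : Ω → Ω) (hT : Measurable T)
    (hs : ∀ (β : Type) (X : Ω → β), Good X → ∀ ε : ℝ, 0 < ε →
      ∃ n : ℕ, 1 ≤ n ∧ ent μ (fun x (i : Fin n) => X (T^[(i:ℕ)] x)) ≤ ε * n) : ksEntropy T μ = 0 := by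
  unfold ksEntropy
  simp only [ENNReal.iSup_eq_zero]
  rintro m P ⟨hPm, hPd, -⟩
  let X : Ω → Option (Fin m) := fun x => if hx : ∃ i, x ∈ P i then some hx.choose else none
  have hXs : ∀ x i, X x = some i ↔ x ∈ P i := by
    intro x i
    by_cases hx : ∃ i, x ∈ P i
    · simp only [X, dif_pos hx, Option.some.injEq]
      constructor
      · rintro rfl; exact hx.choose_spec
      · intro hi
        by_contra hne
        exact Set.disjoint_left.1 (hPd hne) hx.choose_spec hi
    · simp only [X, dif_neg hx]
      simp only [reduceCtorEq, false_iff]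
      exact fun hi => hx ⟨i, hi⟩
  clear_value X
  have hpre : ∀ i, X ⁻¹' {some i} = P i := fun i => by ext x; exact hXs x i
  have hX : Good X := by
    refine Good.of_singleton (Set.toFinite _) fun b => ?_
    cases b with
    | some i => rw [hpre]; exact hPm i
    | none =>
      have : X ⁻¹' {none} = (⋃ i, P i)ᶜ := by
        ext x
        simp only [Set.mem_preimage, Set.mem_singleton_iff, Set.mem_compl_iff, Set.mem_iUnion, not_exists, ← hXs]
        exact Option.eq_none_iff_forall_ne_some
      rw [this]; exact (MeasurableSet.iUnion hPm).compl
  refine le_antisymm (ENNReal.le_of_forall_pos_le_add fun ε hε _ => ?_) bot_le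
  rw [zero_add]
  obtain ⟨n, hn1, hn⟩ := hs _ X hX ε hε
  obtain ⟨n, rfl⟩ : ∃ k, n = k + 1 := ⟨n - 1, by omega⟩
  refine (iInf_le _ n).trans ?_
  refine ENNReal.div_le_of_le_mul ?_
  have hXn : Good (fun x (i : Fin (n + 1)) => X (T^[(i:ℕ)] x)) :=
    Good.pi (X := fun (i : Fin (n + 1)) x => X (T^[(i:ℕ)] x)) fun i => hX.comp (hT.iterate _)
  have hle : ∑ f : Fin (n + 1) → Fin m, Real.negMulLog ((μ (refinedPartition T P (n + 1) f)).toReal) ≤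
      ent μ (fun x (i : Fin (n + 1)) => X (T^[(i:ℕ)] x)) := by
    have e1 := hXn.integral_eq μ (fun b => - Real.log (pr μ (fun x (i : Fin (n + 1)) => X (T^[(i:ℕ)] x)) b))
    unfold ent
    rw [e1]
    set Xn := (fun x (i : Fin (n + 1)) => X (T^[(i:ℕ)] x)) with hXnd
    have e2 : ∀ f : Fin (n + 1) → Fin m, (μ (refinedPartition T P (n + 1) f)).toReal =
        pr μ Xn (fun i => some (f i)) := by
      intro f
      unfold pr Measure.real
      congr 2
      ext x
      simp [refinedPartition, hXnd, funext_iff, hXs]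
    have hnn : ∀ b, 0 ≤ pr μ Xn b * -Real.log (pr μ Xn b) := fun b =>
      mul_nonneg (pr_nonneg μ _ _) (neg_nonneg.2 (Real.log_nonpos (pr_nonneg μ _ _) (pr_le_one μ _ _)))
    have hinj : Function.Injective (fun (f : Fin (n + 1) → Fin m) (i : Fin (n + 1)) => some (f i)) := by
      intro f g hfg; funext i; simpa using congrFun hfg i
    calc _ = ∑ f : Fin (n + 1) → Fin m, pr μ Xn (fun i => some (f i)) * -Real.log (pr μ Xn (fun i => some (f i))) := by
          refine Finset.sum_congr rfl fun f _ => ?_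
          rw [e2, Real.negMulLog]; ring
      _ = ∑ b ∈ Finset.univ.image (fun (f : Fin (n + 1) → Fin m) (i : Fin (n + 1)) => some (f i)),
            pr μ Xn b * -Real.log (pr μ Xn b) := by
          rw [Finset.sum_image (fun f _ g _ hfg => hinj hfg)]
      _ ≤ ∑ b : Fin (n + 1) → Option (Fin m), pr μ Xn b * -Real.log (pr μ Xn b) :=
          Finset.sum_le_sum_of_subset_of_nonneg (Finset.subset_univ _) fun b _ _ => hnn b
      _ = _ := by
          symm
          refine Finset.sum_subset (Finset.subset_univ _) fun b _ hb => ?_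
          have : Xn ⁻¹' {b} = ∅ := by
            ext x
            simp only [Set.mem_preimage, Set.mem_singleton_iff, Set.mem_empty_iff_false, iff_false]
            rintro rfl
            exact hb (by rw [Set.Finite.mem_toFinset]; exact ⟨x, rfl⟩)
          have h0 : pr μ Xn b = 0 := by rw [pr, this]; simp
          rw [h0, zero_mul]
  unfold finPartitionEntropy
  refine (ENNReal.ofReal_le_ofReal (hle.trans hn)).trans (le_of_eq ?_)
  rw [ENNReal.ofReal_mul ε.coe_nonneg, ENNReal.ofReal_coe_nnreal, ENNReal.ofReal_natCast]
  push_cast; rfl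

end Fin
end Mod17

theorem einsiedler_lindenstrauss_strongly_irreducible_positive_entropy
    (d N : ℕ) (hd : 1 < d)
    (α : (Fin d → ℤ) → Matrix (Fin N) (Fin N) ℤ)
    (hα0 : α 0 = 1)
    (hαadd : ∀ v w, α (v + w) = α v * α w)
    (hfaithful : ∀ v : Fin d → ℤ, v ≠ 0 → α v ≠ 1)
    (hstrirr : ∀ Λ : AddSubgroup (Fin d → ℤ), Λ.FiniteIndex → IsIrreducibleOn α Λ)
    (μ : Measure (Fin N → UnitAddCircle)) [IsProbabilityMeasure μ]
    (hinv : ∀ v, Measure.map (toralMap (α v)) μ = μ)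
    (herg : ∀ A : Set (Fin N → UnitAddCircle), MeasurableSet A →
      (∀ v, toralMap (α v) ⁻¹' A = A) → μ A = 0 ∨ μ A = 1)
    (hent : ∃ v, 0 < ksEntropy (toralMap (α v)) μ) :
    μ = volume := by
  refine eq_volume μ fun ξ hξ => ?_
  by_contra hc
  obtain ⟨E, χ, h1, h2, h3, h4, h5, h6, h7⟩ := exists_eigen hd α hα0 hαadd hfaithful hstrirr
  have h : Eig α E χ := ⟨h1, h2, h3, h4, h5, h6, h7⟩
  obtain ⟨C, hG⟩ := h.coarse_of_kp μ hinv (h.kp hα0 hαadd μ hinv herg ξ hξ hc)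
  obtain ⟨v, hv⟩ := hent
  refine hv.ne' (ks_zero μ _ (continuous_toral _).measurable fun β X hX ε hε => ?_)
  exact h.small hd hα0 hαadd hinv hG v hX ε hε
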